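/- Every Borel subset of ℝ can be partitioned into countably many pairwise disjoint subspaces, each of which is a Gδ set in X and h-homogeneous in the subspace topology; in particular this uses that ℝ is the disjoint union of the rationals and the irrationals, and that the space of irrational numbers is homeomorphic to a Gδ subset of the Cantor space. -/

import Mathlib

/-- A topological space is *h-homogeneous* if every nonempty clopen subset,
with the subspace topology, is homeomorphic to the whole space. -/
def HHomogeneous (Y : Type*) [TopologicalSpace Y] : Prop :=
  ∀ U : Set Y, IsClopen U → U.Nonempty → Nonempty (U ≃ₜ Y)

/-!
The irrationals embed into the Cantor space with `Gδ` range, and points are h-homogeneous, so it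
suffices to partition the Borel subsets `X` of the Cantor space. Suppose that the trace of `X` on a
`Gδ` set `P` has no partition. A descending sequence of such bad pairs `(P, X)` with respect to the
relation of reducing continuously, both directly and after complementation, would, by the argument
of Martin and Monk, give a Borel set of binary sequences that changes under every flip of a
coordinate, contradicting the Baire property. So there is a minimal bad pair.

Inside a minimal bad pair choose a nonempty set `Y` no nonempty relatively open part of which has a
partition. By the Baire property `Y` may be taken to contain or to avoid the complement in its
closure of an increasing union of closed, relatively nowhere dense layers. Within every open part
of `Y` some layer meets `Y` in a set without a partition. Borel determinacy, proved by Martin's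
unraveling of closed games, gives Wadge's lemma, and minimality then makes every set reducible to
the pair the preimage of `Y` under a continuous map into that layer; reducing a set of padded
codes instead of the set itself makes the map injective. Hence all layers of `Y` and of its
relatively open parts embed into each other's open parts as closed nowhere dense sets. A
back-and-forth construction turns these embeddings into homeomorphisms of `Y` with its relatively
open parts, so `Y` is h-homogeneous and is its own partition, a contradiction.
-/

universe u v

namespace BorelGame

/-! ### Plays and strategies -/

/-- Infinite plays in which the `n`-th move is an arbitrary element of `A n`. There is no tree of
legal positions: all rules are encoded in the choice of the move sets and of the payoff. -/
abbrev Play (A : ℕ → Type u) : Type u := ∀ n, A n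

/-- Sets of positions. The position of length `n` reached by `x` belongs to `P` if `P n x` holds;
this makes sense only for the sets that satisfy `PosSet.IsLocal`. -/
abbrev PosSet (A : ℕ → Type u) : Type u := ℕ → Play A → Prop

section Basic

variable {A : ℕ → Type u}

/-- The plays `x` and `y` have the same first `n` moves. -/
def Agree (n : ℕ) (x y : Play A) : Prop := ∀ m < n, x m = y m

namespace Agree

variable {n m : ℕ} {x y z : Play A}

theorem refl (n : ℕ) (x : Play A) : Agree n x x := fun _ _ => rfl

theorem symm (h : Agree n x y) : Agree n y x := fun m hm => (h m hm).symm

theorem trans (h : Agree n x y) (h' : Agree n y z) : Agree n x z :=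
  fun m hm => (h m hm).trans (h' m hm)

theorem mono (h : Agree n x y) (hm : m ≤ n) : Agree m x y := fun i hi => h i (hi.trans_le hm)

theorem succ (h : Agree n x y) (h' : x n = y n) : Agree (n + 1) x y := by
  intro m hm
  obtain hlt | rfl := Nat.lt_succ_iff_lt_or_eq.1 hm
  exacts [h m hlt, h']

theorem eq_of_forall (h : ∀ n, Agree n x y) : x = y := funext fun n => h (n + 1) n n.lt_succ_self

theorem update_right (n : ℕ) (x : Play A) (a : A n) : Agree n x (Function.update x n a) :=
  fun _ hm => (Function.update_of_ne hm.ne _ _).symm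

theorem update_left (h : Agree n x y) {a : A n} (ha : y n = a) :
    Agree (n + 1) (Function.update x n a) y :=
  ((update_right n x a).symm.trans h).succ (by rw [Function.update_self, ha])

end Agree

/-- Whether a position of length `n` belongs to `P` depends on its `n` moves only. -/
def PosSet.IsLocal (P : PosSet A) : Prop := ∀ n x y, Agree n x y → P n x → P n y

/-- The first `n` moves of `x`, completed by the default play `d`. -/
def truncate (d : Play A) (n : ℕ) (x : Play A) : Play A := fun m => if m < n then x m else d m

theorem truncate_agree (d : Play A) (n : ℕ) (x : Play A) : Agree n (truncate d n x) x :=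
  fun _ hm => if_pos hm

theorem truncate_congr {d : Play A} {n : ℕ} {x y : Play A} (h : Agree n x y) :
    truncate d n x = truncate d n y :=
  funext fun m => ite_congr rfl (h m) fun _ => rfl

/-- The first length at which the position reached by `x` belongs to `P` (and `0` if there is
none). -/
noncomputable def firstTime (P : PosSet A) (x : Play A) : ℕ := sInf {j | P j x}

theorem firstTime_spec {P : PosSet A} {j : ℕ} {x : Play A} (h : P j x) : P (firstTime P x) x :=
  Nat.sInf_mem (s := {j | P j x}) ⟨j, h⟩

theorem firstTime_le {P : PosSet A} {j : ℕ} {x : Play A} (h : P j x) : firstTime P x ≤ j :=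
  Nat.sInf_le h

theorem firstTime_congr {P : PosSet A} (hP : P.IsLocal) {j n : ℕ} {x y : Play A} (hj : j ≤ n)
    (h : Agree n x y) (hx : P j x) : firstTime P x = firstTime P y := by
  have hy : P j y := hP _ _ _ (h.mono hj) hx
  apply le_antisymm
  · exact firstTime_le (hP _ _ _ (h.symm.mono ((firstTime_le hy).trans hj)) (firstTime_spec hy))
  · exact firstTime_le (hP _ _ _ (h.mono ((firstTime_le hx).trans hj)) (firstTime_spec hx))

/-- Rules prescribing the move `move n x` after the first `n` moves of `x`. The same notion serves
both players; `Follows` selects the stages at which the rule is applied. -/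
structure Strategy (A : ℕ → Type u) where
  move : ∀ n, Play A → A n
  move_congr : ∀ n x y, Agree n x y → move n x = move n y

/-- In the play `x`, the player moving at the stages `n` with `n % 2 = p` follows `σ`. -/
def Follows (p : ℕ) (σ : Strategy A) (x : Play A) : Prop := ∀ n, n % 2 = p → x n = σ.move n x

/-- The set of plays `W` is open for the product of the discrete topologies. -/
def IsOpenPayoff (W : Set (Play A)) : Prop := ∀ x ∈ W, ∃ n, ∀ y, Agree n x y → y ∈ W

/-- The `n`-th approximation of the play all of whose moves are prescribed by `F`. -/
def approxFixedPlay (F : ∀ n, Play A → A n) (z : Play A) : ℕ → Play A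
  | 0 => z
  | n + 1 => Function.update (approxFixedPlay F z n) n (F n (approxFixedPlay F z n))

/-- The play all of whose moves are prescribed by `F`. The play `z` only fills the stages that a
nonanticipating `F` does not look at. -/
def fixedPlay (F : ∀ n, Play A → A n) (z : Play A) : Play A :=
  fun n => approxFixedPlay F z (n + 1) n

theorem fixedPlay_agree_approx (F : ∀ n, Play A → A n) (z : Play A) (n : ℕ) :
    Agree n (fixedPlay F z) (approxFixedPlay F z n) := by
  induction n with
  | zero => exact fun m hm => absurd hm m.not_lt_zero
  | succ n ih => exact (ih.trans (Agree.update_right n _ _)).succ rfl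

theorem fixedPlay_eq {F : ∀ n, Play A → A n} (hF : ∀ n x y, Agree n x y → F n x = F n y)
    (z : Play A) (n : ℕ) : fixedPlay F z n = F n (fixedPlay F z) :=
  calc fixedPlay F z n = F n (approxFixedPlay F z n) := Function.update_self _ _ _
    _ = F n (fixedPlay F z) := hF _ _ _ (fixedPlay_agree_approx F z n).symm

theorem agree_of_prescribed {F G : ∀ n, Play A → A n} (hF : ∀ n x y, Agree n x y → F n x = F n y)
    {x y : Play A} {N : ℕ} (hx : ∀ n < N, x n = F n x) (hy : ∀ n < N, y n = G n y)
    (hFG : ∀ n < N, ∀ z, F n z = G n z) : Agree N x y := by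
  induction N with
  | zero => exact fun m hm => absurd hm m.not_lt_zero
  | succ n ih =>
    have h : Agree n x y := ih (fun m hm => hx m (hm.trans n.lt_succ_self))
      (fun m hm => hy m (hm.trans n.lt_succ_self)) fun m hm => hFG m (hm.trans n.lt_succ_self)
    refine h.succ ?_
    rw [hx n n.lt_succ_self, hy n n.lt_succ_self, ← hFG n n.lt_succ_self]
    exact hF _ _ _ h

/-- The moves of the player `p` following `σ` against an opponent copying the play `z`. -/
def movesAgainst (p : ℕ) (σ : Strategy A) (z : Play A) (n : ℕ) (x : Play A) : A n :=
  if n % 2 = p then σ.move n x else z n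

theorem movesAgainst_congr (p : ℕ) (σ : Strategy A) (z : Play A) (n : ℕ) (x y : Play A)
    (h : Agree n x y) : movesAgainst p σ z n x = movesAgainst p σ z n y :=
  ite_congr rfl (fun _ => σ.move_congr n x y h) fun _ => rfl

/-- The play in which the player `p` follows `σ` and the opponent copies the play `z`. -/
def runAgainst (p : ℕ) (σ : Strategy A) (z : Play A) : Play A :=
  fixedPlay (movesAgainst p σ z) z

theorem runAgainst_eq (p : ℕ) (σ : Strategy A) (z : Play A) (n : ℕ) :
    runAgainst p σ z n = movesAgainst p σ z n (runAgainst p σ z) :=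
  fixedPlay_eq (movesAgainst_congr p σ z) z n

theorem runAgainst_follows (p : ℕ) (σ : Strategy A) (z : Play A) :
    Follows p σ (runAgainst p σ z) :=
  fun n hn => (runAgainst_eq p σ z n).trans (if_pos hn)

theorem runAgainst_opponent {p : ℕ} (σ : Strategy A) (z : Play A) {n : ℕ} (hn : n % 2 ≠ p) :
    runAgainst p σ z n = z n :=
  (runAgainst_eq p σ z n).trans (if_neg hn)

theorem runAgainst_agree_runAgainst {p : ℕ} {σ τ : Strategy A} {z w : Play A} {N : ℕ}
    (hσ : ∀ n < N, ∀ x, σ.move n x = τ.move n x) (hz : ∀ n < N, n % 2 ≠ p → z n = w n) :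
    Agree N (runAgainst p σ z) (runAgainst p τ w) :=
  agree_of_prescribed (movesAgainst_congr p σ z) (fun n _ => runAgainst_eq p σ z n)
    (fun n _ => runAgainst_eq p τ w n)
    fun n hn x => ite_congr rfl (fun _ => hσ n hn x) (hz n hn)

theorem runAgainst_agree_self {p : ℕ} {σ : Strategy A} {x : Play A} {N : ℕ}
    (hx : ∀ n < N, n % 2 = p → x n = σ.move n x) : Agree N (runAgainst p σ x) x := by
  refine agree_of_prescribed (movesAgainst_congr p σ x) (fun n _ => runAgainst_eq p σ x n)
    (fun n hn => ?_) (fun _ _ _ => rfl)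
  unfold movesAgainst
  split_ifs with hp
  exacts [hx n hn hp, rfl]

/-! ### Steering a play into a set of positions -/

open Classical in
/-- An element satisfying `Q`, equal to `a` if `Q a` holds (and `a` if no element satisfies `Q`). -/
noncomputable def correct {M : Type*} (Q : M → Prop) (a : M) : M :=
  if Q a then a else if h : ∃ a, Q a then h.choose else a

theorem correct_of_pos {M : Type*} {Q : M → Prop} {a : M} (h : Q a) : correct Q a = a := if_pos h

theorem correct_spec {M : Type*} {Q : M → Prop} (a : M) (h : ∃ a, Q a) : Q (correct Q a) := by
  unfold correct
  split_ifs with ha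
  exacts [ha, h.choose_spec]

/-- The `n`-th move of `z`, corrected so that the position stays in `L` whenever possible. -/
noncomputable def steeredMove (L : PosSet A) (z : Play A) (n : ℕ) (y : Play A) : A n :=
  correct (fun a => L (n + 1) (Function.update y n a)) (z n)

theorem steeredMove_congr {L : PosSet A} (hL : L.IsLocal) (z : Play A) (n : ℕ) (x y : Play A)
    (h : Agree n x y) : steeredMove L z n x = steeredMove L z n y := by
  have hupd (a : A n) : Agree (n + 1) (Function.update x n a) (Function.update y n a) :=
    (h.trans (Agree.update_right n y a)).update_left (Function.update_self _ _ _)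
  unfold steeredMove
  congr 1
  exact funext fun a => propext ⟨hL _ _ _ (hupd a), hL _ _ _ (hupd a).symm⟩

/-- The play that copies `z` as long as this keeps the position in `L`. -/
noncomputable def steer (L : PosSet A) (z : Play A) : Play A := fixedPlay (steeredMove L z) z

theorem steer_eq {L : PosSet A} (hL : L.IsLocal) (z : Play A) (n : ℕ) :
    steer L z n = steeredMove L z n (steer L z) :=
  fixedPlay_eq (steeredMove_congr hL z) z n

theorem steer_agree_steer {L L' : PosSet A} (hL : L.IsLocal) (hL' : L'.IsLocal) {z w : Play A}
    {N : ℕ} (hz : Agree N z w) (h : ∀ n ≤ N, ∀ x, L n x ↔ L' n x) :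
    Agree N (steer L z) (steer L' w) := by
  refine agree_of_prescribed (steeredMove_congr hL z) (fun n _ => steer_eq hL z n)
    (fun n _ => steer_eq hL' w n) fun n hn x => ?_
  unfold steeredMove
  rw [hz n hn]
  congr 1
  exact funext fun a => propext (h _ hn _)

theorem steer_eq_of_mem {L : PosSet A} (hL : L.IsLocal) {z x : Play A} {n : ℕ}
    (hx : Agree n (steer L z) x) (hz : z n = x n) (hLx : L (n + 1) x) : steer L z n = x n := by
  rw [steer_eq hL, steeredMove, correct_of_pos, hz]
  exact hL _ _ _ (hx.update_left hz.symm).symm hLx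

theorem steer_mem {L : PosSet A} (hL : L.IsLocal) (z : Play A) (n : ℕ)
    (h : ∃ a, L (n + 1) (Function.update (steer L z) n a)) : L (n + 1) (steer L z) := by
  have hmem : L (n + 1) (Function.update (steer L z) n (steeredMove L z n (steer L z))) :=
    correct_spec (z n) h
  rwa [← steer_eq hL z n, Function.update_eq_self] at hmem

theorem steer_agree_of {L : PosSet A} (hL : L.IsLocal) {z x : Play A} {N : ℕ}
    (hz : ∀ n < N, Agree n (steer L z) x → L (n + 1) x ∧ z n = x n ∨ steer L z n = x n) :
    Agree N (steer L z) x := by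
  induction N with
  | zero => exact fun m hm => absurd hm m.not_lt_zero
  | succ n ih =>
    have h : Agree n (steer L z) x := ih fun m hm => hz m (hm.trans n.lt_succ_self)
    obtain ⟨hLx, hzx⟩ | heq := hz n n.lt_succ_self h
    exacts [h.succ (steer_eq_of_mem hL h hzx hLx), h.succ heq]

/-! ### Reachability games -/

/-- From the position of length `n` reached by `x`, the player `p` has a strategy forcing the play
to meet `R`. -/
def CanForce (p : ℕ) (R : PosSet A) (n : ℕ) (x : Play A) : Prop :=
  ∃ σ : Strategy A, ∀ y, Agree n x y → (∀ m ≥ n, m % 2 = p → y m = σ.move m y) → ∃ m ≥ n, R m y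

theorem canForce_isLocal (p : ℕ) (R : PosSet A) : PosSet.IsLocal (CanForce p R) := by
  rintro n x y h ⟨σ, hσ⟩
  exact ⟨σ, fun z hz => hσ z (h.trans hz)⟩

theorem canForce_of_mem {p : ℕ} {R : PosSet A} (hR : R.IsLocal) {n : ℕ} {x : Play A} (h : R n x) :
    CanForce p R n x :=
  ⟨⟨fun n _ => x n, fun _ _ _ _ => rfl⟩, fun _ hy _ => ⟨n, le_rfl, hR _ _ _ hy h⟩⟩

theorem canForce_of_own_move {p : ℕ} {R : PosSet A} {n : ℕ} {x : Play A} (hn : n % 2 = p)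
    {a : A n} (h : CanForce p R (n + 1) (Function.update x n a)) : CanForce p R n x := by
  obtain ⟨σ, hσ⟩ := h
  refine ⟨⟨fun m y => Function.update (fun m => σ.move m y) n a m, fun m y z hyz => ?_⟩,
    fun y hy hf => ?_⟩
  · obtain rfl | hm := eq_or_ne m n
    · simp only [Function.update_self]
    · simp only [Function.update_of_ne hm, σ.move_congr _ _ _ hyz]
  · have hyn : y n = a := by simpa only [Function.update_self] using hf n le_rfl hn
    obtain ⟨m, hm, hRm⟩ := hσ y (hy.update_left hyn) fun m hm hmp => by
      simpa only [Function.update_of_ne (show m ≠ n by omega)] using hf m (by omega) hmp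
    exact ⟨m, by omega, hRm⟩

theorem canForce_of_forall_move {p : ℕ} {R : PosSet A} {n : ℕ} {x : Play A}
    (h : ∀ a, CanForce p R (n + 1) (Function.update x n a)) : CanForce p R n x := by
  choose σ hσ using h
  refine ⟨⟨fun m y => if n < m then (σ (y n)).move m y else (σ (x n)).move m y,
    fun m y z hyz => ?_⟩, fun y hy hf => ?_⟩
  · split_ifs with hm
    · rw [hyz n hm]
      exact (σ _).move_congr _ _ _ hyz
    · exact (σ _).move_congr _ _ _ hyz
  · obtain ⟨m, hm, hRm⟩ := hσ (y n) y (hy.update_left rfl) fun m hm hmp => by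
      simpa only [if_pos (show n < m by omega)] using hf m (by omega) hmp
    exact ⟨m, by omega, hRm⟩

open Classical in
/-- A strategy witnessing `CanForce p R n x`, chosen as a function of the position of length `n`. -/
noncomputable def forcingStrategy (d : Play A) (p : ℕ) (R : PosSet A) (n : ℕ) (x : Play A) :
    Strategy A :=
  if h : CanForce p R n (truncate d n x) then h.choose else ⟨fun n _ => d n, fun _ _ _ _ => rfl⟩

theorem forcingStrategy_congr {d : Play A} {p : ℕ} {R : PosSet A} {n : ℕ} {x y : Play A}
    (h : Agree n x y) : forcingStrategy d p R n x = forcingStrategy d p R n y := by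
  rw [forcingStrategy, forcingStrategy, truncate_congr h]

theorem forcingStrategy_spec {d : Play A} {p : ℕ} {R : PosSet A} {n : ℕ} {x : Play A}
    (h : CanForce p R n x)
    (hf : ∀ m ≥ n, m % 2 = p → x m = (forcingStrategy d p R n x).move m x) : ∃ m ≥ n, R m x := by
  have h' : CanForce p R n (truncate d n x) :=
    canForce_isLocal _ _ _ _ _ (truncate_agree d n x).symm h
  rw [forcingStrategy, dif_pos h'] at hf
  exact h'.choose_spec x (truncate_agree d n x) hf

end Basic

/-! ### Covers -/

/-- A cover of the game with moves `A` by the game with moves `B`, in the sense of Martin: plays and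
strategies of `B` project to plays and strategies of `A`, every play following the projection
`push p σ` of a strategy lifts to a play following `σ`, and nothing changes during the first `k`
moves. -/
structure Cover (k : ℕ) (B A : ℕ → Type u) where
  moveEquiv : ∀ n, n < k → (B n ≃ A n)
  proj : Play B → Play A
  proj_agree : ∀ n x y, Agree n x y → Agree n (proj x) (proj y)
  proj_apply : ∀ n (h : n < k) x, proj x n = moveEquiv n h (x n)
  push : ℕ → Strategy B → Strategy A
  push_congr : ∀ p n σ τ, (∀ m ≤ n, ∀ x, σ.move m x = τ.move m x) →
    ∀ x, (push p σ).move n x = (push p τ).move n x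
  push_apply : ∀ p n (h : n < k) σ x y,
    (∀ m (hm : m < n), x m = moveEquiv m (hm.trans h) (y m)) →
    (push p σ).move n x = moveEquiv n h (σ.move n y)
  exists_lift : ∀ p, p < 2 → ∀ σ x, Follows p (push p σ) x → ∃ y, Follows p σ y ∧ proj y = x
  nonempty : Nonempty (Play B)

namespace Cover

/-- Composition of covers. -/
def comp {k : ℕ} {D B A : ℕ → Type u} (c : Cover k D B) (c' : Cover k B A) : Cover k D A where
  moveEquiv n h := (c.moveEquiv n h).trans (c'.moveEquiv n h)
  proj x := c'.proj (c.proj x)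
  proj_agree n x y h := c'.proj_agree n _ _ (c.proj_agree n _ _ h)
  proj_apply n h x := by rw [c'.proj_apply n h, c.proj_apply n h, Equiv.trans_apply]
  push p σ := c'.push p (c.push p σ)
  push_congr p n σ τ h x := c'.push_congr p n _ _
    (fun m hm y => c.push_congr p m _ _ (fun i hi => h i (hi.trans hm)) y) x
  push_apply p n h σ x y hxy := by
    rw [c'.push_apply p n h (c.push p σ) x
      (fun m => if hm : m < k then c.moveEquiv m hm (y m) else c.proj y m),
      c.push_apply p n h σ _ y, Equiv.trans_apply]
    · exact fun m hm => dif_pos (hm.trans h)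
    · exact fun m hm => by rw [hxy m hm, dif_pos (hm.trans h), Equiv.trans_apply]
  exists_lift p hp σ x hx := by
    obtain ⟨y, hy, rfl⟩ := c'.exists_lift p hp _ _ hx
    obtain ⟨z, hz, rfl⟩ := c.exists_lift p hp _ _ hy
    exact ⟨z, hz, rfl⟩
  nonempty := c.nonempty

/-- A cover that fixes the first `k'` moves fixes the first `k ≤ k'` moves. -/
def restrict {k k' : ℕ} {B A : ℕ → Type u} (c : Cover k' B A) (h : k ≤ k') : Cover k B A where
  moveEquiv n hn := c.moveEquiv n (hn.trans_le h)
  proj := c.proj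
  proj_agree := c.proj_agree
  proj_apply n hn x := c.proj_apply n (hn.trans_le h) x
  push := c.push
  push_congr := c.push_congr
  push_apply p n hn σ x y hxy := c.push_apply p n (hn.trans_le h) σ x y hxy
  exists_lift := c.exists_lift
  nonempty := c.nonempty

theorem isOpenPayoff_preimage {k : ℕ} {B A : ℕ → Type u} (c : Cover k B A) {W : Set (Play A)}
    (h : IsOpenPayoff W) : IsOpenPayoff (c.proj ⁻¹' W) := by
  intro x hx
  obtain ⟨n, hn⟩ := h _ hx
  exact ⟨n, fun y hy => hn _ (c.proj_agree n x y hy)⟩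

end Cover

/-! ### Inverse limits of covers -/

section Thread

variable {T : ℕ → ℕ → Type u} (F : ∀ i, Play (T (i + 1)) → Play (T i)) (b : ∀ i, Play (T i))

/-- The image of `b (i + m)` under `m` consecutive maps of the tower `F`. -/
def descend : ℕ → ∀ i, Play (T i)
  | 0, i => b i
  | m + 1, i => F i (descend m (i + 1))

/-- The coherent sequence of plays approximated by `b`: a fixed stage of `descend F b m i` is
eventually constant in `m`. -/
def thread (i : ℕ) : Play (T i) := fun n => descend F b (n + 1) i n

variable {F b} {k : ℕ} (hF : ∀ i n x y, Agree n x y → Agree n (F i x) (F i y))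
  (hb : ∀ i, Agree (k + i) (F i (b (i + 1))) (b i))

include hF

theorem agree_descend_of_coherent {y : ∀ i, Play (T i)} (hy : ∀ i, F i (y (i + 1)) = y i)
    (hyb : ∀ i, Agree (k + i) (y i) (b i)) (m i : ℕ) :
    Agree (k + i + m) (y i) (descend F b m i) := by
  induction m generalizing i with
  | zero => exact hyb i
  | succ m ih =>
    rw [← hy i]
    exact (hF i _ _ _ (ih (i + 1))).mono (by omega)

theorem eq_thread_of_coherent {y : ∀ i, Play (T i)} (hy : ∀ i, F i (y (i + 1)) = y i)
    (hyb : ∀ i, Agree (k + i) (y i) (b i)) (i : ℕ) : y i = thread F b i :=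
  funext fun n => agree_descend_of_coherent hF hy hyb (n + 1) i n (by omega)

theorem descend_agree_descend {b' : ∀ i, Play (T i)} {n : ℕ} (h : ∀ i, Agree n (b i) (b' i))
    (m i : ℕ) : Agree n (descend F b m i) (descend F b' m i) := by
  induction m generalizing i with
  | zero => exact h i
  | succ m ih => exact hF i _ _ _ (ih (i + 1))

theorem thread_agree_thread {b' : ∀ i, Play (T i)} {n : ℕ} (h : ∀ i, Agree n (b i) (b' i))
    (i : ℕ) : Agree n (thread F b i) (thread F b' i) :=
  fun m hm => descend_agree_descend hF h (m + 1) i m hm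

include hb

theorem descend_succ_agree (m i : ℕ) :
    Agree (k + i + m) (descend F b (m + 1) i) (descend F b m i) := by
  induction m generalizing i with
  | zero => exact hb i
  | succ m ih => exact (hF i _ _ _ (ih (i + 1))).mono (by omega)

theorem descend_agree_of_le {m m' : ℕ} (hm : m ≤ m') (i : ℕ) :
    Agree (k + i + m) (descend F b m' i) (descend F b m i) := by
  induction m', hm using Nat.le_induction with
  | base => exact Agree.refl _ _
  | succ m' hm ih => exact ((descend_succ_agree hF hb m' i).mono (by omega)).trans ih

theorem thread_agree_descend (m i : ℕ) : Agree (k + i + m) (thread F b i) (descend F b m i) := by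
  intro n hn
  obtain h | h := le_total m (n + 1)
  · exact descend_agree_of_le hF hb h i n hn
  · exact (descend_agree_of_le hF hb h i n (by omega)).symm

theorem thread_coherent (i : ℕ) : F i (thread F b (i + 1)) = thread F b i :=
  funext fun n => hF i (n + 1) _ _
    ((thread_agree_descend hF hb n (i + 1)).mono (by omega)) n n.lt_succ_self

end Thread

/-- The `n`-th move of a strategy, as a function of the first `n` moves of the play. -/
abbrev LocalMove (A : ℕ → Type u) (n : ℕ) : Type u :=
  {f : Play A → A n // ∀ x y, Agree n x y → f x = f y}

/-- A strategy is a play of the game with moves `LocalMove A`. -/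
def Strategy.equivPlay {A : ℕ → Type u} : Strategy A ≃ Play (LocalMove A) where
  toFun σ n := ⟨σ.move n, σ.move_congr n⟩
  invFun t := ⟨fun n => (t n).1, fun n => (t n).2⟩

theorem Strategy.equivPlay_agree_iff {A : ℕ → Type u} {n : ℕ} {σ τ : Strategy A} :
    Agree n (equivPlay σ) (equivPlay τ) ↔ ∀ m < n, ∀ x, σ.move m x = τ.move m x :=
  forall₂_congr fun _ _ => Subtype.ext_iff.trans funext_iff

namespace Cover

/-- `Cover.push` as a map between plays of local moves. -/
def pushPlay {k : ℕ} {B A : ℕ → Type u} (c : Cover k B A) (p : ℕ) (t : Play (LocalMove B)) :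
    Play (LocalMove A) :=
  Strategy.equivPlay (c.push p (Strategy.equivPlay.symm t))

theorem pushPlay_agree {k : ℕ} {B A : ℕ → Type u} (c : Cover k B A) (p n : ℕ)
    (s t : Play (LocalMove B)) (h : Agree n s t) : Agree n (c.pushPlay p s) (c.pushPlay p t) :=
  Strategy.equivPlay_agree_iff.2 fun m hm => c.push_congr p m _ _ fun i hi x =>
    congrFun (congrArg Subtype.val (h i (hi.trans_lt hm))) x

/-- The `n`-th move of the limit of a tower of games whose `i`-th cover fixes the first `k + i`
moves: the sets `A i n` with `n < k + i` are identified, and the first of them is taken. -/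
abbrev LimitMove (k : ℕ) (A : ℕ → ℕ → Type u) (n : ℕ) : Type u := A (n + 1 - k) n

variable {k : ℕ} {A : ℕ → ℕ → Type u} (C : ∀ i, Cover (k + i) (A (i + 1)) (A i))

/-- The identification of the moves of the limit with those of the `i`-th game. -/
def limitEquiv (i n : ℕ) (h : n < k + i) : LimitMove k A n ≃ A i n :=
  Nat.leRec (motive := fun i _ => LimitMove k A n ≃ A i n) (Equiv.refl _)
    (fun i hi e => e.trans ((C i).moveEquiv n (by omega)).symm) (show n + 1 - k ≤ i by omega)

theorem moveEquiv_limitEquiv (i n : ℕ) (h : n < k + i) (a : LimitMove k A n) :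
    (C i).moveEquiv n h (limitEquiv C (i + 1) n (by omega) a) = limitEquiv C i n h a := by
  rw [limitEquiv, Nat.leRec_succ _ _ (show n + 1 - k ≤ i by omega)]
  exact Equiv.apply_symm_apply _ _

/-- An arbitrary play of the `i`-th game. -/
noncomputable def somePlay (i : ℕ) : Play (A i) := (C i).proj (Classical.choice (C i).nonempty)

/-- The play of the `i`-th game with the same first `k + i` moves as `x`. -/
noncomputable def fromLimit (x : Play (LimitMove k A)) (i : ℕ) : Play (A i) :=
  fun n => if h : n < k + i then limitEquiv C i n h (x n) else somePlay C i n

theorem fromLimit_apply (x : Play (LimitMove k A)) {i n : ℕ} (h : n < k + i) :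
    fromLimit C x i n = limitEquiv C i n h (x n) := dif_pos h

/-- The play of the limit with the same first `k + i` moves as `x`. -/
noncomputable def toLimit {i : ℕ} (x : Play (A i)) : Play (LimitMove k A) :=
  fun n => if h : n < k + i then (limitEquiv C i n h).symm (x n) else somePlay C _ n

theorem limitEquiv_toLimit {i n : ℕ} (x : Play (A i)) (h : n < k + i) :
    limitEquiv C i n h (toLimit C x n) = x n := by
  rw [toLimit, dif_pos h, Equiv.apply_symm_apply]

theorem proj_fromLimit_agree (x : Play (LimitMove k A)) (i : ℕ) :
    Agree (k + i) ((C i).proj (fromLimit C x (i + 1))) (fromLimit C x i) := by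
  intro n h
  rw [(C i).proj_apply n h, fromLimit_apply C x (show n < k + (i + 1) by omega),
    moveEquiv_limitEquiv, fromLimit_apply C x h]

theorem fromLimit_agree {n : ℕ} {x y : Play (LimitMove k A)} (h : Agree n x y) (i : ℕ) :
    Agree n (fromLimit C x i) (fromLimit C y i) := by
  intro m hm
  rw [fromLimit, fromLimit, h m hm]

/-- The projection of the limit to the `i`-th game. -/
noncomputable def limitProj (x : Play (LimitMove k A)) (i : ℕ) : Play (A i) :=
  thread (fun i => (C i).proj) (fromLimit C x) i

theorem limitProj_apply (x : Play (LimitMove k A)) (i n : ℕ) (h : n < k + i) :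
    limitProj C x i n = limitEquiv C i n h (x n) :=
  (thread_agree_descend (fun i => (C i).proj_agree) (proj_fromLimit_agree C x) 0 i n h).trans
    (fromLimit_apply C x h)

/-- The strategy of the `i`-th game that plays the first `k + i` moves like `σ`. -/
noncomputable def strategyFromLimit (σ : Strategy (LimitMove k A)) (i : ℕ) : Strategy (A i) where
  move n x := if h : n < k + i then limitEquiv C i n h (σ.move n (toLimit C x)) else somePlay C i n
  move_congr n x y h := by
    have hxy : Agree n (toLimit C x) (toLimit C y) := fun m hm => by
      rw [toLimit, toLimit, h m hm]
    rw [σ.move_congr _ _ _ hxy]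

theorem strategyFromLimit_move (σ : Strategy (LimitMove k A)) {i n : ℕ} (h : n < k + i)
    {x : Play (A i)} {y : Play (LimitMove k A)}
    (hxy : ∀ m (hm : m < n), x m = limitEquiv C i m (hm.trans h) (y m)) :
    (strategyFromLimit C σ i).move n x = limitEquiv C i n h (σ.move n y) := by
  change dite _ _ _ = _
  rw [dif_pos h]
  refine congrArg _ (σ.move_congr _ _ _ fun m hm => (limitEquiv C i m (hm.trans h)).injective ?_)
  rw [limitEquiv_toLimit, hxy m hm]

theorem push_strategyFromLimit_agree (p : ℕ) (σ : Strategy (LimitMove k A)) (i : ℕ) :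
    Agree (k + i) ((C i).pushPlay p (Strategy.equivPlay (strategyFromLimit C σ (i + 1))))
      (Strategy.equivPlay (strategyFromLimit C σ i)) := by
  refine Strategy.equivPlay_agree_iff.2 fun n h x => ?_
  have hx (m : ℕ) (hm : m < k + i) : (C i).moveEquiv m hm (fromLimit C (toLimit C x) (i + 1) m) =
      x m := by
    rw [fromLimit_apply C _ (show m < k + (i + 1) by omega), moveEquiv_limitEquiv,
      limitEquiv_toLimit]
  rw [(C i).push_apply p n h _ x _ fun m hm => (hx m (hm.trans h)).symm]
  change (C i).moveEquiv n h ((strategyFromLimit C σ (i + 1)).move n _) = _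
  rw [strategyFromLimit_move C σ (show n < k + (i + 1) by omega)
    fun m hm => fromLimit_apply C (toLimit C x) _, moveEquiv_limitEquiv,
    strategyFromLimit_move C σ h fun m hm => (limitEquiv_toLimit C x (hm.trans h)).symm]

/-- The projection of a strategy of the limit to the `i`-th game. -/
noncomputable def limitPush (p : ℕ) (σ : Strategy (LimitMove k A)) (i : ℕ) : Strategy (A i) :=
  Strategy.equivPlay.symm (thread (fun i => (C i).pushPlay p)
    (fun i => Strategy.equivPlay (strategyFromLimit C σ i)) i)

theorem equivPlay_limitPush (p : ℕ) (σ : Strategy (LimitMove k A)) (i : ℕ) :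
    Strategy.equivPlay (limitPush C p σ i) =
      thread (T := fun i => LocalMove (A i)) (fun i => (C i).pushPlay p)
        (fun i => Strategy.equivPlay (strategyFromLimit C σ i)) i :=
  rfl

theorem push_limitPush (p : ℕ) (σ : Strategy (LimitMove k A)) (i : ℕ) :
    (C i).push p (limitPush C p σ (i + 1)) = limitPush C p σ i :=
  Strategy.equivPlay.eq_symm_apply.2
    (thread_coherent (T := fun i => LocalMove (A i)) (fun i => (C i).pushPlay_agree p)
      (push_strategyFromLimit_agree C p σ) i)

theorem limitPush_move (p : ℕ) (σ : Strategy (LimitMove k A)) {i n : ℕ} (h : n < k + i)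
    {x : Play (A i)} {y : Play (LimitMove k A)}
    (hxy : ∀ m (hm : m < n), x m = limitEquiv C i m (hm.trans h) (y m)) :
    (limitPush C p σ i).move n x = limitEquiv C i n h (σ.move n y) := by
  rw [← strategyFromLimit_move C σ h hxy]
  have hagree : Agree (k + i) (Strategy.equivPlay (limitPush C p σ i))
      (Strategy.equivPlay (strategyFromLimit C σ i)) := by
    rw [equivPlay_limitPush]
    exact thread_agree_descend (T := fun i => LocalMove (A i))
      (fun i => (C i).pushPlay_agree p) (push_strategyFromLimit_agree C p σ) 0 i
  exact Strategy.equivPlay_agree_iff.1 hagree n h x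

theorem limitPush_congr (p n : ℕ) {σ τ : Strategy (LimitMove k A)}
    (h : ∀ m ≤ n, ∀ x, σ.move m x = τ.move m x) (i : ℕ) (x : Play (A i)) :
    (limitPush C p σ i).move n x = (limitPush C p τ i).move n x := by
  have hbase (i : ℕ) : Agree (n + 1) (Strategy.equivPlay (strategyFromLimit C σ i))
      (Strategy.equivPlay (strategyFromLimit C τ i)) := by
    refine Strategy.equivPlay_agree_iff.2 fun m hm x => ?_
    simp only [strategyFromLimit, h m (Nat.lt_succ_iff.1 hm)]
  have hagree : Agree (n + 1) (Strategy.equivPlay (limitPush C p σ i))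
      (Strategy.equivPlay (limitPush C p τ i)) := by
    rw [equivPlay_limitPush, equivPlay_limitPush]
    exact thread_agree_thread (T := fun i => LocalMove (A i))
      (fun i => (C i).pushPlay_agree p) hbase i
  exact Strategy.equivPlay_agree_iff.1 hagree n n.lt_succ_self x

theorem exists_coherent_plays {p : ℕ} (hp : p < 2) {σ : Strategy (LimitMove k A)} {x : Play (A 0)}
    (hx : Follows p (limitPush C p σ 0) x) :
    ∃ y : ∀ i, Play (A i), y 0 = x ∧ (∀ i, Follows p (limitPush C p σ i) (y i)) ∧
      ∀ i, (C i).proj (y (i + 1)) = y i := by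
  have lift (i : ℕ) (x : {x : Play (A i) // Follows p (limitPush C p σ i) x}) :
      ∃ y : {y : Play (A (i + 1)) // Follows p (limitPush C p σ (i + 1)) y},
        (C i).proj y.1 = x.1 := by
    obtain ⟨y, hy, hyx⟩ := (C i).exists_lift p hp _ x.1 (by
      rw [push_limitPush]
      exact x.2)
    exact ⟨⟨y, hy⟩, hyx⟩
  choose g hg using lift
  let y (i : ℕ) : {x : Play (A i) // Follows p (limitPush C p σ i) x} :=
    Nat.rec ⟨x, hx⟩ (fun i z => g i z) i
  exact ⟨fun i => (y i).1, rfl, fun i => (y i).2, fun i => hg i (y i)⟩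

theorem exists_limit_of_coherent {y : ∀ i, Play (A i)} (hy : ∀ i, (C i).proj (y (i + 1)) = y i) :
    ∃ z : Play (LimitMove k A), ∀ i n (h : n < k + i), y i n = limitEquiv C i n h (z n) := by
  refine ⟨fun n => y (n + 1 - k) n, fun i n h => ?_⟩
  obtain ⟨j, rfl⟩ := Nat.exists_eq_add_of_le (show n + 1 - k ≤ i by omega)
  induction j with
  | zero =>
    rw [limitEquiv, Nat.leRec_self]
    rfl
  | succ j ih =>
    apply ((C (n + 1 - k + j)).moveEquiv n (by omega)).injective
    rw [← (C (n + 1 - k + j)).proj_apply n (by omega)]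
    exact (congrFun (hy (n + 1 - k + j)) n).trans
      ((ih (by omega)).trans (moveEquiv_limitEquiv C (n + 1 - k + j) n _ _).symm)

theorem exists_lift_limit {p : ℕ} (hp : p < 2) {σ : Strategy (LimitMove k A)} {x : Play (A 0)}
    (hx : Follows p (limitPush C p σ 0) x) : ∃ z, Follows p σ z ∧ limitProj C z 0 = x := by
  obtain ⟨y, rfl, hyσ, hy⟩ := exists_coherent_plays C hp hx
  obtain ⟨z, hz⟩ := exists_limit_of_coherent C hy
  refine ⟨z, fun n hn => (limitEquiv C (n + 1) n (by omega)).injective ?_, ?_⟩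
  · rw [← hz, hyσ (n + 1) n hn]
    exact limitPush_move C p σ _ fun m hm => hz (n + 1) m _
  · refine (eq_thread_of_coherent (k := k) (fun i => (C i).proj_agree) hy (fun i n h => ?_) 0).symm
    rw [hz i n h, fromLimit_apply]

/-- The inverse limit of a sequence of covers fixing longer and longer initial parts of the game. -/
noncomputable def limit : Cover k (LimitMove k A) (A 0) where
  moveEquiv n h := limitEquiv C 0 n h
  proj x := limitProj C x 0
  proj_agree _ _ _ h :=
    thread_agree_thread (fun i => (C i).proj_agree) (fromLimit_agree C h) 0
  proj_apply n h x := limitProj_apply C x 0 n h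
  push p σ := limitPush C p σ 0
  push_congr p n _ _ h x := limitPush_congr C p n h 0 x
  push_apply p _ h σ _ _ hxy := limitPush_move C p σ h hxy
  exists_lift _ hp _ _ hx := exists_lift_limit C hp hx
  nonempty := ⟨fun n => somePlay C _ n⟩

end Cover

/-! ### Offers made while simulating a strategy -/

section Plan

variable {A : ℕ → Type u} {Ω : Type u}

theorem CanForce.exists_agree {p : ℕ} {R : PosSet A} {n : ℕ} {x : Play A} (h : CanForce p R n x) :
    ∃ y, Agree n y x ∧ ∃ m ≥ n, R m y := by
  obtain ⟨σ, hσ⟩ := h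
  let τ : Strategy A := ⟨fun m y => if m < n then x m else σ.move m y, fun m y z hyz =>
    ite_congr rfl (fun _ => rfl) fun _ => σ.move_congr m y z hyz⟩
  have hagree : Agree n (runAgainst p τ x) x :=
    runAgainst_agree_self fun m hm _ => (if_pos hm).symm
  exact ⟨_, hagree, hσ _ hagree.symm fun m hm hmp =>
    (runAgainst_follows p τ x m hmp).trans (if_neg hm.not_gt)⟩

/-- The strategy whose `n`-th move is `F n x`, where `x` is completed by `d` after `n` moves. -/
def Strategy.ofMoves (d : Play A) (F : ∀ n, Play A → A n) : Strategy A where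
  move n x := F n (truncate d n x)
  move_congr _ _ _ h := by rw [truncate_congr h]

/-- A plan for making an offer in `Ω`: the offer `offer j x` is made if the goal is reached at time
`j`, and `standing` is the offer as long as the goal cannot be forced after stage `start`. -/
structure OfferPlan (A : ℕ → Type u) (Ω : Type u) where
  start : ℕ
  goal : PosSet A
  offer : ℕ → Play A → Ω
  standing : Ω

variable (d : Play A) (p : ℕ) (P : OfferPlan A Ω) (G : Ω → ∀ n, Play A → A n)

/-- The positions after stage `start` from which `p` can force the goal of `P`. -/
def OfferPlan.forceable : PosSet A := fun j x => P.start ≤ j ∧ CanForce p P.goal j x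

theorem OfferPlan.forceable_isLocal : (P.forceable p).IsLocal :=
  fun _ _ _ h hx => ⟨hx.1, canForce_isLocal _ _ _ _ _ h hx.2⟩

open Classical in
/-- The moves of the player `p` who has the moves `G ω` for each offer `ω`: play with the standing
offer until the goal of `P` can be forced, then force the goal, and once it has been reached
play with the offer made at that time. -/
noncomputable def planMove (n : ℕ) (x : Play A) : A n :=
  if ∃ j ≤ n, P.goal j x then G (P.offer (firstTime P.goal x) x) n x
  else if ∃ j ≤ n, P.forceable p j x then
    (forcingStrategy d p P.goal (firstTime (P.forceable p) x) x).move n x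
  else G P.standing n x

variable {d p P G}

theorem planMove_of_goal {n j : ℕ} {x : Play A} (hj : j ≤ n) (h : P.goal j x) :
    planMove d p P G n x = G (P.offer (firstTime P.goal x) x) n x :=
  if_pos ⟨j, hj, h⟩

theorem planMove_of_forceable {n j : ℕ} {x : Play A} (hgoal : ∀ j ≤ n, ¬ P.goal j x) (hj : j ≤ n)
    (h : P.forceable p j x) : planMove d p P G n x =
      (forcingStrategy d p P.goal (firstTime (P.forceable p) x) x).move n x :=
  (if_neg fun ⟨i, hi, hx⟩ => hgoal i hi hx).trans (if_pos ⟨j, hj, h⟩)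

theorem planMove_of_not_forceable {n : ℕ} {x : Play A} (hgoal : ∀ j ≤ n, ¬ P.goal j x)
    (h : ∀ j ≤ n, ¬ P.forceable p j x) : planMove d p P G n x = G P.standing n x :=
  (if_neg fun ⟨i, hi, hx⟩ => hgoal i hi hx).trans (if_neg fun ⟨i, hi, hx⟩ => h i hi hx)

theorem planMove_congr (hgoal : P.goal.IsLocal)
    (hoffer : ∀ j x y, Agree j x y → P.goal j x → P.offer j x = P.offer j y)
    {n : ℕ} {x y : Play A} (hG : ∀ ω, G ω n x = G ω n y) (h : Agree n x y) :
    planMove d p P G n x = planMove d p P G n y := by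
  have hloc := P.forceable_isLocal p
  by_cases hx : ∃ j ≤ n, P.goal j x
  · obtain ⟨j, hj, hjx⟩ := hx
    have hfirst := firstTime_spec hjx
    have hle := (firstTime_le hjx).trans hj
    rw [planMove_of_goal hj hjx, planMove_of_goal hj (hgoal _ _ _ (h.mono hj) hjx), hG,
      ← firstTime_congr hgoal hj h hjx, hoffer _ _ _ (h.mono hle) hfirst]
  push Not at hx
  have hy : ∀ j ≤ n, ¬ P.goal j y := fun j hj hjy => hx j hj (hgoal _ _ _ (h.mono hj).symm hjy)
  by_cases hfx : ∃ j ≤ n, P.forceable p j x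
  · obtain ⟨j, hj, hjx⟩ := hfx
    have hle := (firstTime_le hjx).trans hj
    rw [planMove_of_forceable hx hj hjx, planMove_of_forceable hy hj (hloc _ _ _ (h.mono hj) hjx),
      ← firstTime_congr hloc hj h hjx, forcingStrategy_congr (h.mono hle)]
    exact (forcingStrategy _ _ _ _ _).move_congr _ _ _ h
  · push Not at hfx
    rw [planMove_of_not_forceable hx hfx, hG, planMove_of_not_forceable hy
      fun j hj hjy => hfx j hj (hloc _ _ _ (h.mono hj).symm hjy)]

theorem not_forceable_of_follows {x : Play A} (hx : ∀ j, ¬ P.goal j x)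
    (hf : ∀ n ≥ P.start, n % 2 = p → x n = planMove d p P G n x) (j : ℕ) :
    ¬ P.forceable p j x := by
  intro hj
  have hfirst := firstTime_spec hj
  obtain ⟨m, -, hm⟩ := forcingStrategy_spec (d := d) hfirst.2 fun m hm hmp => by
    rw [hf m (hfirst.1.trans hm) hmp, planMove_of_forceable (fun j _ => hx j) hm hfirst]
  exact hx m hm

theorem follows_planMove_cases {x : Play A}
    (hf : ∀ n ≥ P.start, n % 2 = p → x n = planMove d p P G n x) :
    (∃ j, P.goal j x ∧ ∀ n ≥ j, P.start ≤ n → n % 2 = p → x n = G (P.offer j x) n x) ∨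
      (∀ j ≥ P.start, ¬ CanForce p P.goal j x) ∧
        ∀ n ≥ P.start, n % 2 = p → x n = G P.standing n x := by
  by_cases hx : ∃ j, P.goal j x
  · obtain ⟨j, hj⟩ := hx
    refine Or.inl ⟨_, firstTime_spec hj, fun n hn hstart hp => ?_⟩
    exact (hf n hstart hp).trans (planMove_of_goal hn (firstTime_spec hj))
  · push Not at hx
    have hforce := not_forceable_of_follows hx hf
    refine Or.inr ⟨fun j hj h => hforce j ⟨hj, h⟩, fun n hn hp => ?_⟩
    rw [hf n hn hp, planMove_of_not_forceable (fun j _ => hx j) fun j _ => hforce j]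

end Plan

/-! ### Unraveling closed sets -/

section Unravel

variable {A : ℕ → Type u}

/-- `T` is a quasi-strategy, within the tree `S` and from stage `k` on, of the player moving at the
stages `n` with `n % 2 = p`: it is never stuck and never restricts the opponent. -/
structure IsQuasiStrategy (p k : ℕ) (S T : PosSet A) : Prop where
  isLocal : T.IsLocal
  exists_move : ∀ n ≥ k, n % 2 = p → ∀ y, T n y → ∃ a, T (n + 1) (Function.update y n a)
  forall_move : ∀ n ≥ k, n % 2 ≠ p → ∀ y, T n y → ∀ a,
    S (n + 1) (Function.update y n a) → T (n + 1) (Function.update y n a)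

theorem IsQuasiStrategy.succ_mem {p k : ℕ} {S T : PosSet A} (h : IsQuasiStrategy p k S T) {n : ℕ}
    (hn : n ≥ k) (hp : n % 2 ≠ p) {y : Play A} (hy : T n y) (hS : S (n + 1) y) : T (n + 1) y := by
  rw [← Function.update_eq_self n y] at hS ⊢
  exact h.forall_move n hn hp y hy _ hS

theorem isQuasiStrategy_top (p k : ℕ) : IsQuasiStrategy p k ⊤ (⊤ : PosSet A) :=
  ⟨fun _ _ _ _ _ => trivial, fun n _ _ y _ => ⟨y n, trivial⟩, fun _ _ _ _ _ _ _ => trivial⟩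

/-- The positions of `S` from which the player `p` cannot force the play to meet `R`. -/
def avoid (p : ℕ) (R S : PosSet A) : PosSet A := fun n x => S n x ∧ ¬ CanForce p R n x

theorem isQuasiStrategy_avoid {p q k : ℕ} (hpq : ∀ n, n % 2 = p ↔ n % 2 ≠ q) {R S : PosSet A}
    (hS : S.IsLocal) (hmove : ∀ n ≥ k, n % 2 = q → ∀ y, S n y → ∀ a,
      S (n + 1) (Function.update y n a)) :
    IsQuasiStrategy q k S (avoid p R S) where
  isLocal n x y h hx := ⟨hS n x y h hx.1, fun hy => hx.2 (canForce_isLocal p R n y x h.symm hy)⟩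
  exists_move n hn hq y hy := by
    by_contra! hstuck
    exact hy.2 (canForce_of_forall_move fun a =>
      by_contra fun hforce => hstuck a ⟨hmove n hn hq y hy.1 a, hforce⟩)
  forall_move n _ hq y hy a ha :=
    ⟨ha, fun hforce => hy.2 (canForce_of_own_move ((hpq n).2 hq) hforce)⟩

/-- A position of `C`: it is reached by some play in `C`. -/
def Touches (C : Set (Play A)) : PosSet A := fun n x => ∃ y ∈ C, Agree n x y

theorem touches_isLocal (C : Set (Play A)) : (Touches C).IsLocal := by
  rintro n x y h ⟨z, hz, hxz⟩
  exact ⟨z, hz, h.symm.trans hxz⟩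

/-- Replies of player `1` to the tree offered by player `0`: a position `(j, u)` of the tree outside
`C`, or a quasi-strategy for player `1` in the tree, all of whose positions touch `C`. -/
abbrev Answer (A : ℕ → Type u) : Type u := (ℕ × Play A) ⊕ PosSet A

/-- Information accompanying the moves from stage `k` on: a tree, read at stage `k`, and an answer,
read at stage `k + 1`. -/
abbrev Extra (A : ℕ → Type u) : Type u := PosSet A × Answer A

/-- The information accompanying the moves before stage `k`. -/
def trivialExtra (A : ℕ → Type u) : Extra A := (⊤, Sum.inr ⊤)

/-- Moves of the game unraveling a closed set. -/
abbrev UnravelMove (k : ℕ) (A : ℕ → Type u) (n : ℕ) : Type u :=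
  {q : A n × Extra A // n < k → q.2 = trivialExtra A}

/-- The play of the unraveled game with moves `x` and extra information `ω`. -/
def decorate (k : ℕ) (x : Play A) (ω : Extra A) : Play (UnravelMove k A) :=
  fun n => ⟨(x n, if n < k then trivialExtra A else ω), fun h => if_pos h⟩

/-- The moves of a play of the unraveled game, without the extra information. -/
def baseMoves {k : ℕ} (X : Play (UnravelMove k A)) : Play A := fun n => (X n).1.1

section Trees

variable (k : ℕ) (C : Set (Play A))

open Classical in
/-- The tree `S` if it is a legal offer at the position of length `k + 1` reached by `x`, and the
full tree otherwise. -/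
noncomputable def effectiveTree (S : PosSet A) (x : Play A) : PosSet A :=
  if IsQuasiStrategy 0 (k + 1) ⊤ S ∧ S (k + 1) x then S else ⊤

/-- The answer `o` is legal when `S` is offered at the position of length `k + 2` reached by
`x`. -/
def IsValidAnswer (S : PosSet A) (x : Play A) : Answer A → Prop
  | Sum.inl u => k + 2 ≤ u.1 ∧ Agree (k + 2) u.2 x ∧ S u.1 u.2 ∧ ¬ Touches C u.1 u.2
  | Sum.inr T => T (k + 2) x ∧ IsQuasiStrategy 1 (k + 2) S T ∧
      ∀ n ≥ k + 2, ∀ y, T n y → S n y ∧ Touches C n y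

/-- The answer `o` if it is legal, and some legal answer otherwise. -/
noncomputable def effectiveAnswer (S : PosSet A) (x : Play A) (o : Answer A) : Answer A :=
  correct (IsValidAnswer k C S x) o

/-- The positions of length at least `k + 2` from which `C` can no longer be reached. -/
def exits (S : PosSet A) : PosSet A := fun j x => k + 2 ≤ j ∧ S j x ∧ ¬ Touches C j x

/-- The positions compatible with an answer. -/
def allowed : Answer A → PosSet A
  | Sum.inl u => fun m y => m ≤ k + 2 ∨ Agree (min m u.1) u.2 y
  | Sum.inr T => fun m y => m ≤ k + 2 ∨ T m y

variable {k}

/-- The tree in force in the play `X`. -/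
noncomputable def treeOf (X : Play (UnravelMove k A)) : PosSet A :=
  effectiveTree k (X k).1.2.1 (baseMoves X)

/-- The answer in force in the play `X`. -/
noncomputable def answerOf (X : Play (UnravelMove k A)) : Answer A :=
  effectiveAnswer k C (treeOf X) (baseMoves X) (X (k + 1)).1.2.2

/-- The projection of the unraveled game: the moves are corrected so as to respect the answer in
force. -/
noncomputable def unravelProj (X : Play (UnravelMove k A)) : Play A :=
  steer (allowed k (answerOf C X)) (baseMoves X)

end Trees

variable {k : ℕ} {C : Set (Play A)}

theorem decorate_agree {x y : Play A} {n : ℕ} (h : Agree n x y) (ω : Extra A) :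
    Agree n (decorate k x ω) (decorate k y ω) :=
  fun m hm => Subtype.ext (Prod.ext (h m hm) rfl)

theorem decorate_agree_decorate (x : Play A) (ω ω' : Extra A) :
    Agree k (decorate k x ω) (decorate k x ω') := by
  intro m hm
  apply Subtype.ext
  simp only [decorate, if_pos hm]

theorem baseMoves_agree {X Y : Play (UnravelMove k A)} {n : ℕ} (h : Agree n X Y) :
    Agree n (baseMoves X) (baseMoves Y) :=
  fun m hm => congrArg (fun q => q.1.1) (h m hm)

theorem effectiveTree_spec (S : PosSet A) (x : Play A) :
    IsQuasiStrategy 0 (k + 1) ⊤ (effectiveTree k S x) ∧ effectiveTree k S x (k + 1) x := by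
  unfold effectiveTree
  split_ifs with h
  exacts [h, ⟨isQuasiStrategy_top 0 _, trivial⟩]

theorem effectiveTree_congr (S : PosSet A) {x y : Play A} (h : Agree (k + 1) x y) :
    effectiveTree k S x = effectiveTree k S y := by
  unfold effectiveTree
  congr 1
  exact propext (and_congr_right fun hS =>
    ⟨hS.isLocal _ _ _ h, hS.isLocal _ _ _ h.symm⟩)

theorem effectiveTree_of_isQuasiStrategy {S : PosSet A} {x : Play A}
    (h : IsQuasiStrategy 0 (k + 1) ⊤ S) (hx : S (k + 1) x) : effectiveTree k S x = S :=
  if_pos ⟨h, hx⟩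

theorem IsValidAnswer.congr {S : PosSet A} {x y : Play A} {o : Answer A}
    (ho : IsValidAnswer k C S x o) (h : Agree (k + 2) x y) : IsValidAnswer k C S y o := by
  cases o with
  | inl u => exact ⟨ho.1, ho.2.1.trans h, ho.2.2⟩
  | inr T => exact ⟨ho.2.1.isLocal _ _ _ h ho.1, ho.2⟩

theorem exits_isLocal {S : PosSet A} (hS : S.IsLocal) : (exits k C S).IsLocal :=
  fun _ _ _ h hx => ⟨hx.1, hS _ _ _ h hx.2.1,
    fun hy => hx.2.2 (touches_isLocal C _ _ _ h.symm hy)⟩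

theorem effectiveAnswer_congr (S : PosSet A) {x y : Play A} (h : Agree (k + 2) x y)
    (o : Answer A) : effectiveAnswer k C S x o = effectiveAnswer k C S y o := by
  unfold effectiveAnswer
  congr 1
  exact funext fun o => propext ⟨fun ho => ho.congr h, fun ho => ho.congr h.symm⟩

theorem isValidAnswer_avoid {S : PosSet A} (hS : IsQuasiStrategy 0 (k + 1) ⊤ S) {x : Play A}
    (hx : S (k + 2) x) (hforce : ¬ CanForce 0 (exits k C S) (k + 2) x) :
    IsValidAnswer k C S x (Sum.inr (avoid 0 (exits k C S) S)) := by
  refine ⟨⟨hx, hforce⟩, isQuasiStrategy_avoid (by omega) hS.isLocal fun n hn hp y hy a =>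
    hS.forall_move n (by omega) (by omega) y hy a trivial, fun n hn y hy => ⟨hy.1, ?_⟩⟩
  by_contra htouch
  exact hy.2 (canForce_of_mem (exits_isLocal hS.isLocal) ⟨hn, hy.1, htouch⟩)

theorem treeOf_congr {X Y : Play (UnravelMove k A)} (h : Agree (k + 1) X Y) :
    treeOf X = treeOf Y := by
  rw [treeOf, treeOf, effectiveTree_congr _ (baseMoves_agree h), h k k.lt_succ_self]

theorem answerOf_congr {X Y : Play (UnravelMove k A)} (h : Agree (k + 2) X Y) :
    answerOf C X = answerOf C Y := by
  rw [answerOf, answerOf, treeOf_congr (h.mono (by omega)),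
    effectiveAnswer_congr _ (baseMoves_agree h), h (k + 1) (by omega)]

theorem treeOf_spec (X : Play (UnravelMove k A)) :
    IsQuasiStrategy 0 (k + 1) ⊤ (treeOf X) ∧ treeOf X (k + 1) (baseMoves X) :=
  effectiveTree_spec _ _

theorem IsValidAnswer.allowed_isLocal {S : PosSet A} {x : Play A} {o : Answer A}
    (h : IsValidAnswer k C S x o) : (allowed k o).IsLocal := by
  cases o with
  | inl u => exact fun n y z hyz => Or.imp_right fun hy => hy.trans (hyz.mono (min_le_left _ _))
  | inr T => exact fun n y z hyz => Or.imp_right (h.2.1.isLocal n y z hyz)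

section Even

variable (hk : k % 2 = 0)
include hk

theorem exists_isValidAnswer {S : PosSet A} (hS : IsQuasiStrategy 0 (k + 1) ⊤ S) {x : Play A}
    (hx : S (k + 1) x) : ∃ o, IsValidAnswer k C S x o := by
  by_cases hforce : CanForce 0 (exits k C S) (k + 2) x
  · obtain ⟨y, hyx, m, hm, -, hSy, hy⟩ := hforce.exists_agree
    exact ⟨Sum.inl (m, y), hm, hyx, hSy, hy⟩
  · have hx' : S (k + 2) x := hS.succ_mem le_rfl (by omega) hx trivial
    exact ⟨_, isValidAnswer_avoid hS hx' hforce⟩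

theorem answerOf_spec (X : Play (UnravelMove k A)) :
    IsValidAnswer k C (treeOf X) (baseMoves X) (answerOf C X) :=
  correct_spec _ (exists_isValidAnswer hk (treeOf_spec X).1 (treeOf_spec X).2)

theorem allowed_answerOf_isLocal (X : Play (UnravelMove k A)) :
    (allowed k (answerOf C X)).IsLocal :=
  (answerOf_spec hk X).allowed_isLocal

theorem unravelProj_agree_baseMoves (X : Play (UnravelMove k A)) :
    Agree (k + 2) (unravelProj C X) (baseMoves X) := by
  refine steer_agree_of (allowed_answerOf_isLocal hk X) fun n hn _ => Or.inl ⟨?_, rfl⟩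
  cases answerOf C X <;> exact Or.inl hn

theorem unravelProj_agree {n : ℕ} {X Y : Play (UnravelMove k A)} (h : Agree n X Y) :
    Agree n (unravelProj C X) (unravelProj C Y) := by
  obtain hn | hn := le_total n (k + 2)
  · exact ((unravelProj_agree_baseMoves hk X).mono hn).trans
      ((baseMoves_agree h).trans ((unravelProj_agree_baseMoves hk Y).mono hn).symm)
  · refine steer_agree_steer (allowed_answerOf_isLocal hk X) (allowed_answerOf_isLocal hk Y)
      (baseMoves_agree h) fun m _ x => ?_
    rw [answerOf_congr (h.mono hn)]

theorem unravelProj_agree_exit {X : Play (UnravelMove k A)} {u : ℕ × Play A}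
    (h : answerOf C X = Sum.inl u) : Agree u.1 (unravelProj C X) u.2 := by
  have hvalid := answerOf_spec (C := C) hk X
  have hloc := allowed_answerOf_isLocal (C := C) hk X
  unfold unravelProj
  rw [h] at hvalid hloc ⊢
  refine steer_agree_of hloc fun n hn hagree => ?_
  obtain hnk | hnk := Nat.lt_or_ge n (k + 2)
  · exact Or.inl ⟨Or.inl hnk, (hvalid.2.1 n hnk).symm⟩
  · obtain hle | hmem := steer_mem hloc (baseMoves X) n
      ⟨u.2 n, Or.inr ((hagree.update_left rfl).symm.mono (min_le_left _ _))⟩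
    · omega
    · exact Or.inr (hmem n (by omega)).symm

theorem unravelProj_mem_succ {X : Play (UnravelMove k A)} {T : PosSet A}
    (h : answerOf C X = Sum.inr T) {n : ℕ} (hn : k + 2 ≤ n) (hT : T n (unravelProj C X)) :
    T (n + 1) (unravelProj C X) := by
  have hvalid := answerOf_spec (C := C) hk X
  have hloc := allowed_answerOf_isLocal (C := C) hk X
  have hproj : unravelProj C X = steer (allowed k (Sum.inr T)) (baseMoves X) := by
    rw [unravelProj, h]
  rw [h] at hvalid hloc
  obtain ⟨-, hquasi, hsub⟩ := hvalid
  have hmove : ∃ a, T (n + 1) (Function.update (unravelProj C X) n a) := by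
    obtain heven | hodd := Nat.mod_two_eq_zero_or_one n
    · obtain ⟨a, ha⟩ := (treeOf_spec X).1.exists_move n (by omega) heven _ (hsub n hn _ hT).1
      exact ⟨a, hquasi.forall_move n hn (by omega) _ hT a ha⟩
    · exact hquasi.exists_move n hn hodd _ hT
  rw [hproj] at hmove ⊢
  obtain hle | hmem := steer_mem hloc (baseMoves X) n (hmove.imp fun _ => Or.inr)
  · omega
  · exact hmem

theorem unravelProj_mem {X : Play (UnravelMove k A)} {T : PosSet A}
    (h : answerOf C X = Sum.inr T) {n : ℕ} (hn : k + 2 ≤ n) : T n (unravelProj C X) := by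
  have hvalid := answerOf_spec (C := C) hk X
  rw [h] at hvalid
  induction n, hn using Nat.le_induction with
  | base => exact hvalid.2.1.isLocal _ _ _ (unravelProj_agree_baseMoves hk X).symm hvalid.1
  | succ n hn ih => exact unravelProj_mem_succ hk h hn ih

theorem unravelProj_mem_iff (hC : IsOpenPayoff Cᶜ) (X : Play (UnravelMove k A)) :
    unravelProj C X ∈ C ↔ ∃ T, answerOf C X = Sum.inr T := by
  have hvalid := answerOf_spec (C := C) hk X
  cases h : answerOf C X with
  | inl u =>
    rw [h] at hvalid
    refine iff_of_false (fun hX => ?_) (by simp)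
    exact hvalid.2.2.2 ⟨_, hX, (unravelProj_agree_exit hk h).symm⟩
  | inr T =>
    rw [h] at hvalid
    refine iff_of_true (by_contra fun hX => ?_) ⟨T, rfl⟩
    obtain ⟨n, hn⟩ := hC _ hX
    obtain ⟨-, y, hy, hagree⟩ := hvalid.2.2 (max n (k + 2)) (le_max_right _ _) _
      (unravelProj_mem hk h (le_max_right _ _))
    exact hn y (hagree.mono (le_max_left _ _)) hy

end Even

end Unravel

section Simulation

variable {A : ℕ → Type u} {k : ℕ} {C : Set (Play A)}

theorem unravelProj_eq_of_exit (hk : k % 2 = 0) {X : Play (UnravelMove k A)} {x : Play A}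
    {u : ℕ × Play A} (h : answerOf C X = Sum.inl u) (hu : Agree u.1 u.2 x)
    (hx : ∀ n ≥ u.1, unravelProj C X n = x n ∨ baseMoves X n = x n) : unravelProj C X = x := by
  refine Agree.eq_of_forall fun N => steer_agree_of (allowed_answerOf_isLocal hk X) fun n _ _ => ?_
  obtain hn | hn := lt_or_ge n u.1
  · exact Or.inr (((unravelProj_agree_exit hk h).trans hu) n hn)
  · refine (hx n hn).symm.imp_left fun hX => ⟨?_, hX⟩
    rw [h]
    exact Or.inr (hu.mono (min_le_right _ _))

theorem unravelProj_eq_of_tree (hk : k % 2 = 0) {X : Play (UnravelMove k A)} {x : Play A}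
    {T : PosSet A} (h : answerOf C X = Sum.inr T) (hbase : Agree (k + 2) (baseMoves X) x)
    (hx : ∀ n ≥ k + 2, T n x → unravelProj C X n = x n ∨ T (n + 1) x ∧ baseMoves X n = x n) :
    unravelProj C X = x := by
  have hvalid := answerOf_spec (C := C) hk X
  rw [h] at hvalid
  refine Agree.eq_of_forall fun N =>
    steer_agree_of (allowed_answerOf_isLocal hk X) fun n _ hagree => ?_
  obtain hn | hn := lt_or_ge n (k + 2)
  · exact Or.inr (((unravelProj_agree_baseMoves hk X).trans hbase) n hn)
  · have hT : T n x := hvalid.2.1.isLocal _ _ _ hagree (unravelProj_mem hk h hn)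
    refine (hx n hn hT).symm.imp_left fun hX => ⟨?_, hX.2⟩
    rw [h]
    exact Or.inr hX.1

section Defs

variable (k C) (d : Play A) (p : ℕ) (σ τ : Strategy (UnravelMove k A))

/-- The `n`-th move of the projection of the run of `σ` against the moves of `x` decorated
by `ω`. -/
noncomputable def simulate (ω : Extra A) (n : ℕ) (x : Play A) : A n :=
  unravelProj C (runAgainst p σ (decorate k x ω)) n

/-- The move of `σ` at stage `n ≤ k`, where the extra information of `σ` is disregarded. -/
def baseMove (n : ℕ) (x : Play A) : A n := (σ.move n (decorate k x (trivialExtra A))).1.1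

/-- The tree offered by `σ`, as a strategy of player `0`, at stage `k`. -/
noncomputable def offeredTree (x : Play A) : PosSet A :=
  effectiveTree k (σ.move k (decorate k x (trivialExtra A))).1.2.1 x

/-- The reply of `σ`, as a strategy of player `1`, when the tree `S` is offered. -/
def replyTo (S : PosSet A) (x : Play A) : UnravelMove k A (k + 1) :=
  σ.move (k + 1) (decorate k x (S, (trivialExtra A).2))

/-- `x` reaches the exit chosen by `σ` when the tree `S` is offered, and `j` is its length. -/
def IsExitFor (S : PosSet A) (j : ℕ) (x : Play A) : Prop :=
  IsQuasiStrategy 0 (k + 1) ⊤ S ∧ S (k + 1) x ∧ x (k + 1) = (replyTo k σ S x).1.1 ∧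
    ∃ u, effectiveAnswer k C S x (replyTo k σ S x).1.2.2 = Sum.inl (j, u) ∧ Agree j u x

/-- The plan of player `0` once the tree `S` is in force: answer with the quasi-strategy avoiding
the exits, unless an exit can be forced, and then with the exit that is reached. -/
noncomputable def answerPlan (S : PosSet A) : OfferPlan A (Extra A) where
  start := k + 2
  goal := exits k C S
  offer j x := (⊤, Sum.inl (j, truncate d j x))
  standing := (⊤, Sum.inr (avoid 0 (exits k C S) S))

/-- The positions reached as an exit chosen by `σ` for some tree. -/
def exitsFor : PosSet A := fun j x => k + 2 ≤ j ∧ ∃ S, IsExitFor k C σ S j x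

/-- The plan of player `1`: offer the tree avoiding all exits chosen by `σ`, unless such an exit can
be forced, and then a tree for which the exit that is reached is chosen. -/
noncomputable def treePlan : OfferPlan A (Extra A) where
  start := k + 1
  goal := exitsFor k C σ
  offer j x := (correct (fun S => IsExitFor k C σ S j x) ⊤, (trivialExtra A).2)
  standing := (avoid 1 (exitsFor k C σ) ⊤, (trivialExtra A).2)

/-- How the player `p` chooses the opponent's extra information when simulating `σ`. -/
noncomputable def plan (x : Play A) : OfferPlan A (Extra A) :=
  if p = 0 then answerPlan k C d (offeredTree k σ x) else treePlan k C σ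

/-- The moves of the projection of `σ`. -/
noncomputable def pushMove (n : ℕ) (x : Play A) : A n :=
  if n ≤ k then baseMove k σ n x else planMove d p (plan k C d p σ x) (simulate k C p σ) n x

end Defs

variable {d x y : Play A} {p : ℕ} {σ τ : Strategy (UnravelMove k A)}

theorem simulate_congr (hk : k % 2 = 0) {n : ℕ} (hn : n % 2 = p) (h : Agree n x y)
    (ω : Extra A) : simulate k C p σ ω n x = simulate k C p σ ω n y := by
  refine unravelProj_agree hk (runAgainst_agree_runAgainst (fun _ _ _ => rfl) fun m hm hp => ?_) n
    n.lt_succ_self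
  exact decorate_agree h ω m ((Nat.le_of_lt_succ hm).lt_of_ne fun hmn => hp (hmn ▸ hn))

theorem simulate_congr_strategy (hk : k % 2 = 0) {n : ℕ}
    (h : ∀ m ≤ n, ∀ X, σ.move m X = τ.move m X) (ω : Extra A) :
    simulate k C p σ ω n = simulate k C p τ ω n :=
  funext fun _ => unravelProj_agree hk (runAgainst_agree_runAgainst
    (fun m hm => h m (Nat.le_of_lt_succ hm)) fun _ _ _ => rfl) n n.lt_succ_self

theorem baseMove_congr {n : ℕ} (h : Agree n x y) : baseMove k σ n x = baseMove k σ n y := by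
  rw [baseMove, baseMove, σ.move_congr n _ _ (decorate_agree h _)]

theorem offeredTree_congr (h : Agree (k + 1) x y) : offeredTree k σ x = offeredTree k σ y := by
  rw [offeredTree, offeredTree, effectiveTree_congr _ h,
    σ.move_congr k _ _ (decorate_agree (h.mono k.le_succ) _)]

theorem replyTo_congr (S : PosSet A) (h : Agree (k + 1) x y) :
    replyTo k σ S x = replyTo k σ S y :=
  σ.move_congr _ _ _ (decorate_agree h _)

theorem IsExitFor.congr {S : PosSet A} {j : ℕ} (hj : k + 2 ≤ j) (h : Agree j x y)
    (hx : IsExitFor k C σ S j x) : IsExitFor k C σ S j y := by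
  obtain ⟨hS, hSx, hmove, u, hu, hux⟩ := hx
  have hreply : replyTo k σ S x = replyTo k σ S y := replyTo_congr S (h.mono (by omega))
  refine ⟨hS, hS.isLocal _ _ _ (h.mono (by omega)) hSx, ?_, u, ?_, hux.trans h⟩
  · rw [← hreply, ← hmove, h (k + 1) (by omega)]
  · rw [← hreply, ← effectiveAnswer_congr S (h.mono hj), hu]

theorem exitsFor_isLocal : (exitsFor k C σ).IsLocal :=
  fun _ _ _ h ⟨hn, S, hS⟩ => ⟨hn, S, hS.congr hn h⟩

theorem answerPlan_goal_isLocal : (answerPlan k C d (offeredTree k σ x)).goal.IsLocal :=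
  exits_isLocal (effectiveTree_spec _ _).1.isLocal

theorem isExitFor_treePlan_offer {j : ℕ} (h : exitsFor k C σ j x) :
    IsExitFor k C σ ((treePlan k C σ).offer j x).1 j x :=
  correct_spec _ h.2

theorem plan_goal_isLocal : (plan k C d p σ x).goal.IsLocal := by
  unfold plan
  split_ifs
  exacts [answerPlan_goal_isLocal, exitsFor_isLocal]

theorem plan_offer_congr {j : ℕ} {y z : Play A} (h : Agree j y z)
    (hy : (plan k C d p σ x).goal j y) :
    (plan k C d p σ x).offer j y = (plan k C d p σ x).offer j z := by
  unfold plan at hy ⊢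
  split_ifs at hy ⊢
  · simp only [answerPlan, truncate_congr h]
  · have hQ (S : PosSet A) : IsExitFor k C σ S j y = IsExitFor k C σ S j z :=
      propext ⟨IsExitFor.congr hy.1 h, IsExitFor.congr hy.1 h.symm⟩
    simp only [treePlan, hQ]

theorem pushMove_congr (hk : k % 2 = 0) {n : ℕ} (hn : n % 2 = p) (h : Agree n x y) :
    pushMove k C d p σ n x = pushMove k C d p σ n y := by
  unfold pushMove
  split_ifs with hnk
  · exact baseMove_congr h
  · have hplan : plan k C d p σ x = plan k C d p σ y := by
      rw [plan, plan, offeredTree_congr (h.mono (by omega))]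
    rw [← hplan]
    exact planMove_congr plan_goal_isLocal (fun _ _ _ => plan_offer_congr)
      (simulate_congr hk hn h) h

theorem eq_pushMove (hk : k % 2 = 0)
    (hx : Follows p (Strategy.ofMoves d (pushMove k C d p σ)) x) {n : ℕ} (hn : n % 2 = p) :
    x n = pushMove k C d p σ n x :=
  (hx n hn).trans (pushMove_congr hk hn (truncate_agree d n x))

theorem eq_baseMove (hk : k % 2 = 0)
    (hx : Follows p (Strategy.ofMoves d (pushMove k C d p σ)) x) {n : ℕ} (hnk : n ≤ k)
    (hn : n % 2 = p) : x n = baseMove k σ n x :=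
  (eq_pushMove hk hx hn).trans (if_pos hnk)

theorem eq_planMove (hk : k % 2 = 0)
    (hx : Follows p (Strategy.ofMoves d (pushMove k C d p σ)) x) {n : ℕ} (hnk : k < n)
    (hn : n % 2 = p) : x n = planMove d p (plan k C d p σ x) (simulate k C p σ) n x :=
  (eq_pushMove hk hx hn).trans (if_neg hnk.not_ge)

theorem runAgainst_agree_decorate (hx : ∀ n ≤ k, n % 2 = p → x n = baseMove k σ n x)
    (ω : Extra A) : Agree k (runAgainst p σ (decorate k x ω)) (decorate k x ω) := by
  refine runAgainst_agree_self fun n hn hp => Subtype.ext (Prod.ext ?_ ?_)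
  · rw [σ.move_congr n _ _ ((decorate_agree_decorate x ω (trivialExtra A)).mono hn.le)]
    exact hx n hn.le hp
  · exact (if_pos hn).trans ((σ.move n _).2 hn).symm

theorem baseMoves_runAgainst (ω : Extra A) {n : ℕ} (hn : n % 2 ≠ p) :
    baseMoves (runAgainst p σ (decorate k x ω)) n = x n := by
  rw [baseMoves, runAgainst_opponent σ _ hn, decorate]

section PlayerZero

variable (hk : k % 2 = 0) (hx : ∀ n ≤ k, n % 2 = 0 → x n = baseMove k σ n x) (ω : Extra A)
include hk hx

theorem runAgainst_zero_apply :
    runAgainst 0 σ (decorate k x ω) k = σ.move k (decorate k x (trivialExtra A)) :=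
  (runAgainst_follows 0 σ _ k hk).trans (σ.move_congr _ _ _
    ((runAgainst_agree_decorate hx ω).trans (decorate_agree_decorate x _ _)))

theorem baseMoves_agree_zero : Agree (k + 2) (baseMoves (runAgainst 0 σ (decorate k x ω))) x := by
  refine ((baseMoves_agree (runAgainst_agree_decorate hx ω)).succ ?_).succ
    (baseMoves_runAgainst ω (by omega))
  rw [baseMoves, runAgainst_zero_apply hk hx]
  exact (hx k le_rfl hk).symm

theorem treeOf_zero : treeOf (runAgainst 0 σ (decorate k x ω)) = offeredTree k σ x := by
  rw [treeOf, runAgainst_zero_apply hk hx,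
    effectiveTree_congr _ ((baseMoves_agree_zero hk hx ω).mono (k + 1).le_succ), offeredTree]

theorem answerOf_zero (hω : IsValidAnswer k C (offeredTree k σ x) x ω.2) :
    answerOf C (runAgainst 0 σ (decorate k x ω)) = ω.2 := by
  rw [answerOf, treeOf_zero hk hx, effectiveAnswer_congr _ (baseMoves_agree_zero hk hx ω),
    runAgainst_opponent σ _ (by omega)]
  simp only [decorate, if_neg (show ¬ k + 1 < k by omega)]
  exact correct_of_pos hω

end PlayerZero

theorem exists_lift_zero (hk : k % 2 = 0)
    (hx : Follows 0 (Strategy.ofMoves d (pushMove k C d 0 σ)) x) :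
    ∃ X, Follows 0 σ X ∧ unravelProj C X = x := by
  have hbase : ∀ n ≤ k, n % 2 = 0 → x n = baseMove k σ n x := fun n => eq_baseMove hk hx
  set S := offeredTree k σ x
  obtain ⟨hS, hSx⟩ : IsQuasiStrategy 0 (k + 1) ⊤ S ∧ S (k + 1) x := effectiveTree_spec _ _
  obtain ⟨j, hj, hown⟩ | ⟨hforce, hown⟩ := follows_planMove_cases (P := answerPlan k C d S)
    fun n (hn : k + 2 ≤ n) => eq_planMove hk hx (n := n) (by omega)
  · have hagree := truncate_agree d j x
    have hvalid : IsValidAnswer k C S x (Sum.inl (j, truncate d j x)) :=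
      ⟨hj.1, hagree.mono hj.1, answerPlan_goal_isLocal _ _ _ hagree.symm hj |>.2⟩
    refine ⟨_, runAgainst_follows 0 σ (decorate k x (⊤, Sum.inl (j, truncate d j x))),
      unravelProj_eq_of_exit hk (answerOf_zero hk hbase _ hvalid) hagree fun n hn => ?_⟩
    obtain hp | hp := eq_or_ne (n % 2) 0
    exacts [Or.inl (hown n hn (hj.1.trans hn) hp).symm, Or.inr (baseMoves_runAgainst _ hp)]
  · have hSx2 : S (k + 2) x := hS.succ_mem le_rfl (by omega) hSx trivial
    refine ⟨_, runAgainst_follows 0 σ (decorate k x (⊤, Sum.inr (avoid 0 (exits k C S) S))),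
      unravelProj_eq_of_tree hk (answerOf_zero hk hbase _
        (isValidAnswer_avoid hS hSx2 (hforce _ le_rfl))) (baseMoves_agree_zero hk hbase _)
        fun n hn hT => ?_⟩
    obtain hp | hp := eq_or_ne (n % 2) 0
    · exact Or.inl (hown n hn hp).symm
    · exact Or.inr ⟨⟨hS.succ_mem (by omega) hp hT.1 trivial, hforce _ (Nat.le_succ_of_le hn)⟩,
        baseMoves_runAgainst _ hp⟩

section PlayerOne

variable (hk : k % 2 = 0) (hx : ∀ n ≤ k, n % 2 = 1 → x n = baseMove k σ n x) {S : PosSet A}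
  (hS : IsQuasiStrategy 0 (k + 1) ⊤ S) (hSx : S (k + 1) x)
  (hmove : x (k + 1) = (replyTo k σ S x).1.1)

/-- The run of `σ` when the opponent offers the tree `S` and otherwise copies `x`. -/
noncomputable def runOffering (σ : Strategy (UnravelMove k A)) (x : Play A) (S : PosSet A) :
    Play (UnravelMove k A) :=
  runAgainst 1 σ (decorate k x (S, (trivialExtra A).2))

include hk hx

theorem runOffering_agree_decorate (S : PosSet A) :
    Agree (k + 1) (runOffering σ x S) (decorate k x (S, (trivialExtra A).2)) :=
  (runAgainst_agree_decorate hx _).succ (runAgainst_opponent σ _ (by omega))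

theorem runOffering_apply (S : PosSet A) : runOffering σ x S (k + 1) = replyTo k σ S x :=
  (runAgainst_follows 1 σ _ (k + 1) (by omega)).trans
    (σ.move_congr _ _ _ (runOffering_agree_decorate hk hx S))

include hS hSx in
theorem treeOf_runOffering : treeOf (runOffering σ x S) = S := by
  have hagree := runOffering_agree_decorate hk hx S
  rw [treeOf, effectiveTree_congr _ (baseMoves_agree hagree), hagree k k.lt_succ_self]
  simp only [decorate, if_neg (lt_irrefl k)]
  exact effectiveTree_of_isQuasiStrategy hS hSx

include hmove in
theorem baseMoves_runOffering : Agree (k + 2) (baseMoves (runOffering σ x S)) x := by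
  refine Agree.succ (baseMoves_agree (runOffering_agree_decorate hk hx S)) ?_
  rw [baseMoves, runOffering_apply hk hx, hmove]

include hS hSx hmove in
theorem answerOf_runOffering : answerOf C (runOffering σ x S) =
    effectiveAnswer k C S x (replyTo k σ S x).1.2.2 := by
  rw [answerOf, treeOf_runOffering hk hx hS hSx, runOffering_apply hk hx,
    effectiveAnswer_congr _ (baseMoves_runOffering hk hx hmove)]

theorem unravelProj_runOffering_of_isExitFor {j : ℕ} (h : IsExitFor k C σ S j x)
    (hown : ∀ n ≥ j, n % 2 = 1 → x n = simulate k C 1 σ (S, (trivialExtra A).2) n x) :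
    unravelProj C (runOffering σ x S) = x := by
  obtain ⟨hS, hSx, hmove, u, hu, hux⟩ := h
  refine unravelProj_eq_of_exit hk ((answerOf_runOffering hk hx hS hSx hmove).trans hu) hux
    fun n hn => ?_
  obtain hp | hp := eq_or_ne (n % 2) 1
  exacts [Or.inl (hown n hn hp).symm, Or.inr (baseMoves_runAgainst _ hp)]

theorem unravelProj_runOffering_of_not_canForce
    (hforce : ∀ n ≥ k + 1, ¬ CanForce 1 (exitsFor k C σ) n x)
    (hS : S = avoid 1 (exitsFor k C σ) ⊤)
    (hown : ∀ n ≥ k + 1, n % 2 = 1 → x n = simulate k C 1 σ (S, (trivialExtra A).2) n x) :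
    unravelProj C (runOffering σ x S) = x := by
  have hquasi : IsQuasiStrategy 0 (k + 1) ⊤ S := hS ▸ isQuasiStrategy_avoid (by omega)
    (fun _ _ _ _ _ => trivial) fun _ _ _ _ _ _ => trivial
  have hSx (n : ℕ) (hn : n ≥ k + 1) : S n x := hS ▸ ⟨trivial, hforce n hn⟩
  have hmove : x (k + 1) = (replyTo k σ S x).1.1 := by
    rw [hown (k + 1) le_rfl (by omega), ← runOffering_apply hk hx]
    exact unravelProj_agree_baseMoves hk _ (k + 1) (by omega)
  have htree := treeOf_runOffering hk hx hquasi (hSx _ le_rfl)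
  have hbase := baseMoves_runOffering hk hx hmove
  have hvalid := answerOf_spec (C := C) hk (runOffering σ x S)
  rw [htree] at hvalid
  cases hanswer : answerOf C (runOffering σ x S) with
  | inl u =>
    -- The exit `u` chosen by `σ` would be a position of `S` reaching the goal avoided by `S`.
    rw [hanswer] at hvalid
    obtain ⟨hj, hux, hSu, -⟩ := hvalid
    have hxu : Agree (k + 2) x u.2 := (hux.trans hbase).symm
    have hreply : replyTo k σ S x = replyTo k σ S u.2 := replyTo_congr S (hxu.mono (by omega))
    have hexit : exitsFor k C σ u.1 u.2 := by
      refine ⟨hj, S, hquasi, hquasi.isLocal _ _ _ (hxu.mono (by omega)) (hSx _ le_rfl), ?_,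
        u.2, ?_, Agree.refl _ _⟩
      · rw [← hreply, ← hmove, hxu (k + 1) (by omega)]
      · rw [← hreply, ← effectiveAnswer_congr S hxu,
          ← answerOf_runOffering hk hx hquasi (hSx _ le_rfl) hmove, hanswer]
    rw [hS] at hSu
    exact absurd (canForce_of_mem exitsFor_isLocal hexit) hSu.2
  | inr T =>
    rw [hanswer] at hvalid
    refine unravelProj_eq_of_tree hk hanswer hbase fun n hn hT => ?_
    obtain hp | hp := eq_or_ne (n % 2) 1
    · exact Or.inl (hown n (by omega) hp).symm
    · exact Or.inr ⟨hvalid.2.1.succ_mem hn hp hT (hSx _ (by omega)), baseMoves_runAgainst _ hp⟩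

end PlayerOne

theorem exists_lift_one (hk : k % 2 = 0)
    (hx : Follows 1 (Strategy.ofMoves d (pushMove k C d 1 σ)) x) :
    ∃ X, Follows 1 σ X ∧ unravelProj C X = x := by
  have hbase : ∀ n ≤ k, n % 2 = 1 → x n = baseMove k σ n x := fun n => eq_baseMove hk hx
  obtain ⟨j, hj, hown⟩ | ⟨hforce, hown⟩ := follows_planMove_cases (P := treePlan k C σ)
    fun n (hn : k + 1 ≤ n) => eq_planMove hk hx (n := n) hn
  · exact ⟨_, runAgainst_follows 1 σ _, unravelProj_runOffering_of_isExitFor hk hbase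
      (isExitFor_treePlan_offer hj) fun n hn => hown n hn
        (show k + 1 ≤ n from (Nat.le_succ _).trans (hj.1.trans hn))⟩
  · exact ⟨_, runAgainst_follows 1 σ _,
      unravelProj_runOffering_of_not_canForce hk hbase hforce rfl hown⟩

theorem pushMove_congr_strategy (hk : k % 2 = 0) {n : ℕ}
    (h : ∀ m ≤ n, ∀ X, σ.move m X = τ.move m X) (x : Play A) :
    pushMove k C d p σ n x = pushMove k C d p τ n x := by
  unfold pushMove
  split_ifs with hnk
  · rw [baseMove, h n le_rfl, baseMove]
  · have hoffered : offeredTree k σ x = offeredTree k τ x := by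
      rw [offeredTree, h k (by omega), offeredTree]
    have hreply : replyTo k σ = replyTo k τ := funext₂ fun _ _ => h (k + 1) (by omega) _
    have hexit : IsExitFor k C σ = IsExitFor k C τ := by
      unfold IsExitFor
      rw [hreply]
    have hexits : exitsFor k C σ = exitsFor k C τ := by
      unfold exitsFor
      rw [hexit]
    have hplan : plan k C d p σ x = plan k C d p τ x := by
      simp only [plan, hoffered, treePlan, hexits, hexit]
    rw [hplan]
    simp only [planMove, simulate_congr_strategy hk h]

/-- Before stage `k` the moves of the unraveled game are those of the original game. -/
def unravelMoveEquiv (A : ℕ → Type u) {k n : ℕ} (h : n < k) : UnravelMove k A n ≃ A n where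
  toFun q := q.1.1
  invFun a := ⟨(a, trivialExtra A), fun _ => rfl⟩
  left_inv q := Subtype.ext (Prod.ext rfl (q.2 h).symm)
  right_inv _ := rfl

theorem baseMove_eq_move {n : ℕ} (hn : n < k) {X : Play (UnravelMove k A)}
    (h : Agree n x (baseMoves X)) : baseMove k σ n x = (σ.move n X).1.1 := by
  rw [baseMove, σ.move_congr n _ X]
  intro m hm
  exact Subtype.ext (Prod.ext (h m hm) ((if_pos (hm.trans hn)).trans ((X m).2 (hm.trans hn)).symm))

variable (C d) in
/-- Martin's cover unraveling a closed set `C`. -/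
noncomputable def unravelCover (hk : k % 2 = 0) : Cover k (UnravelMove k A) A where
  moveEquiv _ h := unravelMoveEquiv A h
  proj := unravelProj C
  proj_agree _ _ _ := unravelProj_agree hk
  proj_apply n h X := unravelProj_agree_baseMoves hk X n (by omega)
  push p σ := Strategy.ofMoves d (pushMove k C d p σ)
  push_congr p n σ τ h x := pushMove_congr_strategy hk h _
  push_apply p n h σ x X hxX := by
    have hagree : Agree n (truncate d n x) (baseMoves X) := (truncate_agree d n x).trans hxX
    exact (if_pos h.le).trans (baseMove_eq_move h hagree)
  exists_lift p hp σ x hx := by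
    obtain rfl | rfl : p = 0 ∨ p = 1 := by omega
    exacts [exists_lift_zero hk hx, exists_lift_one hk hx]
  nonempty := ⟨decorate k d (trivialExtra A)⟩

theorem exists_cover_of_isOpenPayoff_compl (k : ℕ) (hC : IsOpenPayoff Cᶜ) (d : Play A) :
    ∃ (B : ℕ → Type u) (c : Cover k B A),
      IsOpenPayoff (c.proj ⁻¹' C) ∧ IsOpenPayoff (c.proj ⁻¹' C)ᶜ := by
  have hk : 2 * k % 2 = 0 := by omega
  have hcongr {X Y : Play (UnravelMove (2 * k) A)} (h : Agree (2 * k + 2) X Y) :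
      unravelProj C X ∈ C ↔ unravelProj C Y ∈ C := by
    rw [unravelProj_mem_iff hk hC, unravelProj_mem_iff hk hC, answerOf_congr h]
  exact ⟨_, (unravelCover C d hk).restrict (by omega),
    fun X hX => ⟨_, fun Y hXY => (hcongr hXY).1 hX⟩,
    fun X hX => ⟨_, fun Y hXY hY => hX ((hcongr hXY).2 hY)⟩⟩

end Simulation

/-! ### Borel determinacy -/

namespace Cover

variable {k : ℕ} {A : ℕ → ℕ → Type u} (C : ∀ i, Cover (k + i) (A (i + 1)) (A i))

theorem proj_limitProj (x : Play (LimitMove k A)) (i : ℕ) :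
    (C i).proj (limitProj C x (i + 1)) = limitProj C x i :=
  thread_coherent (fun i => (C i).proj_agree) (proj_fromLimit_agree C x) i

theorem limitProj_agree {n : ℕ} {x y : Play (LimitMove k A)} (h : Agree n x y) (i : ℕ) :
    Agree n (limitProj C x i) (limitProj C y i) :=
  thread_agree_thread (fun i => (C i).proj_agree) (fromLimit_agree C h) i

/-- Every game with plays covers itself. -/
def refl (k : ℕ) {B : ℕ → Type u} (d : Play B) : Cover k B B where
  moveEquiv n _ := Equiv.refl (B n)
  proj := id
  proj_agree _ _ _ := id
  proj_apply _ _ _ := rfl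
  push _ := id
  push_congr _ n _ _ h := h n le_rfl
  push_apply _ n _ σ _ _ h := σ.move_congr n _ _ h
  exists_lift _ _ _ x hx := ⟨x, hx, rfl⟩
  nonempty := ⟨d⟩

end Cover

variable {A : ℕ → Type u}

/-- A game together with a cover of the game with moves `A`. -/
structure CoveringGame (A : ℕ → Type u) where
  moves : ℕ → Type u
  cover : Cover 0 moves A

/-- The payoff set `W` can be unraveled, i.e. made open and closed by a cover that preserves
arbitrarily many moves, even after passing to a cover of the game. -/
def IsUnravelable (W : Set (Play A)) : Prop :=
  ∀ (G : CoveringGame A) (k : ℕ), ∃ (B : ℕ → Type u) (c : Cover k B G.moves),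
    IsOpenPayoff (c.proj ⁻¹' (G.cover.proj ⁻¹' W)) ∧ IsOpenPayoff (c.proj ⁻¹' (G.cover.proj ⁻¹' W))ᶜ

theorem IsUnravelable.compl {W : Set (Play A)} (h : IsUnravelable W) : IsUnravelable Wᶜ := by
  intro G k
  obtain ⟨B, c, hopen, hclosed⟩ := h G k
  refine ⟨B, c, hclosed, ?_⟩
  rwa [Set.preimage_compl, Set.preimage_compl, compl_compl]

theorem exists_cover_of_isOpenPayoff {W : Set (Play A)} (k : ℕ) (hW : IsOpenPayoff W)
    (d : Play A) : ∃ (B : ℕ → Type u) (c : Cover k B A),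
      IsOpenPayoff (c.proj ⁻¹' W) ∧ IsOpenPayoff (c.proj ⁻¹' W)ᶜ := by
  obtain ⟨B, c, hclosed, hopen⟩ :=
    exists_cover_of_isOpenPayoff_compl (C := Wᶜ) k (by rwa [compl_compl]) d
  rw [Set.preimage_compl, compl_compl] at hopen
  exact ⟨B, c, hopen, hclosed⟩

theorem IsOpenPayoff.isUnravelable {W : Set (Play A)} (hW : IsOpenPayoff W) : IsUnravelable W :=
  fun G k => exists_cover_of_isOpenPayoff k (G.cover.isOpenPayoff_preimage hW)
    G.cover.nonempty.some

theorem IsUnravelable.iUnion {W : ℕ → Set (Play A)} (hW : ∀ i, IsUnravelable (W i)) :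
    IsUnravelable (⋃ i, W i) := by
  intro G₀ k
  choose B next hopen _ using fun i (G : CoveringGame A) => hW i G (k + i)
  let G : ℕ → CoveringGame A := Nat.rec G₀ fun i G =>
    ⟨B i G, ((next i G).restrict (Nat.zero_le _)).comp G.cover⟩
  let C (i : ℕ) : Cover (k + i) (G (i + 1)).moves (G i).moves := next i (G i)
  let L : Cover k (Cover.LimitMove k fun i => (G i).moves) G₀.moves :=
    Cover.limit (A := fun i => (G i).moves) C
  have hproj (x : Play (Cover.LimitMove k fun i => (G i).moves)) (i : ℕ) :
      (G i).cover.proj (Cover.limitProj C x i) = G₀.cover.proj (L.proj x) := by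
    induction i with
    | zero => rfl
    | succ i ih => rw [← ih, ← Cover.proj_limitProj C x i]; rfl
  have hlimit : IsOpenPayoff (L.proj ⁻¹' (G₀.cover.proj ⁻¹' ⋃ i, W i)) := by
    intro x hx
    obtain ⟨i, hi⟩ := Set.mem_iUnion.1 hx
    rw [← hproj x (i + 1)] at hi
    obtain ⟨n, hn⟩ := hopen i (G i) _ hi
    refine ⟨n, fun y hy => Set.mem_iUnion.2 ⟨i, ?_⟩⟩
    rw [← hproj y (i + 1)]
    exact hn _ (Cover.limitProj_agree C hy (i + 1))
  obtain ⟨B', c, hc⟩ := exists_cover_of_isOpenPayoff k hlimit L.nonempty.some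
  exact ⟨B', c.comp L, hc⟩

/-- Player `0` wins the game with payoff set `W`. -/
def PlayerZeroWins (W : Set (Play A)) : Prop := ∃ σ : Strategy A, ∀ x, Follows 0 σ x → x ∈ W

/-- Player `1` wins the game with payoff set `W`. -/
def PlayerOneWins (W : Set (Play A)) : Prop := ∃ σ : Strategy A, ∀ x, Follows 1 σ x → x ∉ W

theorem IsQuasiStrategy.exists_strategy {p : ℕ} {T : PosSet A} (hT : IsQuasiStrategy p 0 ⊤ T)
    {d : Play A} (hd : T 0 d) : ∃ σ : Strategy A, ∀ x, Follows p σ x → ∀ n, T n x := by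
  refine ⟨⟨steeredMove T d, steeredMove_congr hT.isLocal d⟩, fun x hx n => ?_⟩
  induction n with
  | zero => exact hT.isLocal 0 d x (fun m hm => absurd hm m.not_lt_zero) hd
  | succ n ih =>
    obtain hp | hp := eq_or_ne (n % 2) p
    · have hmem : T (n + 1) (Function.update x n (steeredMove T d n x)) :=
        correct_spec (d n) (hT.exists_move n n.zero_le hp x ih)
      rwa [← show x n = steeredMove T d n x from hx n hp, Function.update_eq_self] at hmem
    · exact hT.succ_mem n.zero_le hp ih trivial

theorem open_determinacy [Nonempty (Play A)] {W : Set (Play A)} (hW : IsOpenPayoff W) :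
    PlayerZeroWins W ∨ PlayerOneWins W := by
  obtain ⟨d⟩ := ‹Nonempty (Play A)›
  let R : PosSet A := fun n x => ∀ y, Agree n x y → y ∈ W
  have hR : R.IsLocal := fun n x y h hx z hz => hx z (h.trans hz)
  by_cases hforce : CanForce 0 R 0 d
  · obtain ⟨σ, hσ⟩ := hforce
    refine Or.inl ⟨σ, fun x hx => ?_⟩
    obtain ⟨m, -, hm⟩ := hσ x (fun m hm => absurd hm m.not_lt_zero) fun m _ => hx m
    exact hm x (Agree.refl m x)
  · have hquasi : IsQuasiStrategy 1 0 ⊤ (avoid 0 R ⊤) :=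
      isQuasiStrategy_avoid (by omega) (fun _ _ _ _ _ => trivial) fun _ _ _ _ _ _ => trivial
    obtain ⟨σ, hσ⟩ := hquasi.exists_strategy (d := d) ⟨trivial, hforce⟩
    refine Or.inr ⟨σ, fun x hx hxW => ?_⟩
    obtain ⟨n, hn⟩ := hW x hxW
    exact (hσ x hx n).2 (canForce_of_mem hR hn)

theorem IsUnravelable.determined [Nonempty (Play A)] {W : Set (Play A)} (hW : IsUnravelable W) :
    PlayerZeroWins W ∨ PlayerOneWins W := by
  obtain ⟨d⟩ := ‹Nonempty (Play A)›
  obtain ⟨B, c, hopen, -⟩ := hW ⟨A, Cover.refl 0 d⟩ 0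
  have := c.nonempty
  have push_wins (p : ℕ) (hp : p < 2) (σ : Strategy B) {V : Set (Play A)}
      (hσ : ∀ y, Follows p σ y → c.proj y ∈ V) : ∀ x, Follows p (c.push p σ) x → x ∈ V := by
    intro x hx
    obtain ⟨y, hy, rfl⟩ := c.exists_lift p hp σ x hx
    exact hσ y hy
  exact (open_determinacy hopen).imp
    (fun ⟨σ, hσ⟩ => ⟨c.push 0 σ, push_wins 0 two_pos σ hσ⟩)
    fun ⟨σ, hσ⟩ => ⟨c.push 1 σ, push_wins 1 one_lt_two σ (V := Wᶜ) hσ⟩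

section Topology

variable [∀ n, TopologicalSpace (A n)] [∀ n, DiscreteTopology (A n)]

theorem isOpenPayoff_of_isOpen {W : Set (Play A)} (hW : IsOpen W) : IsOpenPayoff W := by
  intro x hx
  obtain ⟨_, ⟨z, n, rfl⟩, hxz, hzW⟩ :=
    (PiNat.isTopologicalBasis_cylinders A).mem_nhds_iff.1 (hW.mem_nhds hx)
  exact ⟨n, fun y hxy => hzW (Agree.trans hxy.symm hxz)⟩

theorem borel_determinacy [Nonempty (Play A)] [MeasurableSpace (Play A)] [BorelSpace (Play A)]
    {W : Set (Play A)} (hW : MeasurableSet W) : PlayerZeroWins W ∨ PlayerOneWins W := by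
  refine IsUnravelable.determined ?_
  induction W, hW using MeasurableSet.induction_on_open with
  | isOpen U hU => exact (isOpenPayoff_of_isOpen hU).isUnravelable
  | compl U _ h => exact h.compl
  | iUnion U _ _ h => exact IsUnravelable.iUnion h

end Topology

/-! ### Wadge's lemma -/

theorem continuous_of_agree {A : ℕ → Type u} {B : ℕ → Type v} [∀ n, TopologicalSpace (A n)]
    [∀ n, DiscreteTopology (A n)] [∀ n, TopologicalSpace (B n)] [∀ n, DiscreteTopology (B n)]
    {f : Play A → Play B} (h : ∀ n x y, Agree n x y → Agree n (f x) (f y)) : Continuous f := by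
  refine (PiNat.isTopologicalBasis_cylinders B).continuous_iff.2 ?_
  rintro _ ⟨z, n, rfl⟩
  refine isOpen_iff_mem_nhds.2 fun x hx => Filter.mem_of_superset
    ((PiNat.isOpen_cylinder A x n).mem_nhds (PiNat.self_mem_cylinder x n)) fun y hy => ?_
  exact (h n y x hy).trans hx

theorem continuous_runAgainst [∀ n, TopologicalSpace (A n)] [∀ n, DiscreteTopology (A n)] (p : ℕ)
    (σ : Strategy A) : Continuous (runAgainst p σ) :=
  continuous_of_agree fun _ _ _ h =>
    runAgainst_agree_runAgainst (fun _ _ _ => rfl) fun m hm _ => h m hm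

section Wadge

variable {M : Type u} {N : Type v} [TopologicalSpace M] [TopologicalSpace N]

/-- The sequence in `M` played at the even stages. -/
def evenPart (x : ℕ → M × N) : ℕ → M := fun i => (x (2 * i)).1

/-- The sequence in `N` played at the odd stages. -/
def oddPart (x : ℕ → M × N) : ℕ → N := fun i => (x (2 * i + 1)).2

theorem continuous_evenPart : Continuous (evenPart : (ℕ → M × N) → ℕ → M) := by
  unfold evenPart
  fun_prop

theorem continuous_oddPart : Continuous (oddPart : (ℕ → M × N) → ℕ → N) := by
  unfold oddPart
  fun_prop

variable [DiscreteTopology M] [DiscreteTopology N] {S : Set (ℕ → M)} {T : Set (ℕ → N)}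

theorem exists_continuous_of_playerOneWins [Nonempty N]
    (h : PlayerOneWins (symmDiff (evenPart ⁻¹' S) (oddPart ⁻¹' T))) :
    ∃ f : (ℕ → M) → ℕ → N, Continuous f ∧ f ⁻¹' T = S := by
  obtain ⟨σ, hσ⟩ := h
  let e (w : ℕ → M) : ℕ → M × N := fun n => (w (n / 2), Classical.arbitrary N)
  have he (w : ℕ → M) : evenPart (runAgainst 1 σ (e w)) = w := by
    funext i
    rw [evenPart, runAgainst_opponent σ _ (by omega)]
    exact congrArg w (by omega)
  refine ⟨fun w => oddPart (runAgainst 1 σ (e w)),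
    continuous_oddPart.comp ((continuous_runAgainst 1 σ).comp (by fun_prop)), ?_⟩
  ext w
  have hw := hσ _ (runAgainst_follows 1 σ (e w))
  rw [Set.mem_symmDiff, Set.mem_preimage, Set.mem_preimage, he] at hw
  rw [Set.mem_preimage]
  tauto

theorem exists_continuous_of_playerZeroWins [Nonempty M]
    (h : PlayerZeroWins (symmDiff (evenPart ⁻¹' S) (oddPart ⁻¹' T))) :
    ∃ g : (ℕ → N) → ℕ → M, Continuous g ∧ g ⁻¹' S = Tᶜ := by
  obtain ⟨σ, hσ⟩ := h
  let e (w : ℕ → N) : ℕ → M × N := fun n => (Classical.arbitrary M, w (n / 2))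
  have he (w : ℕ → N) : oddPart (runAgainst 0 σ (e w)) = w := by
    funext i
    rw [oddPart, runAgainst_opponent σ _ (by omega)]
    exact congrArg w (by omega)
  refine ⟨fun w => evenPart (runAgainst 0 σ (e w)),
    continuous_evenPart.comp ((continuous_runAgainst 0 σ).comp (by fun_prop)), ?_⟩
  ext w
  have hw := hσ _ (runAgainst_follows 0 σ (e w))
  rw [Set.mem_symmDiff, Set.mem_preimage, Set.mem_preimage, he] at hw
  rw [Set.mem_preimage, Set.mem_compl_iff]
  tauto

theorem wadge_lemma [Nonempty M] [Nonempty N] [MeasurableSpace (ℕ → M)] [BorelSpace (ℕ → M)]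
    [MeasurableSpace (ℕ → N)] [BorelSpace (ℕ → N)] (hS : MeasurableSet S) (hT : MeasurableSet T) :
    (∃ f : (ℕ → M) → ℕ → N, Continuous f ∧ f ⁻¹' T = S) ∨
      ∃ g : (ℕ → N) → ℕ → M, Continuous g ∧ g ⁻¹' S = Tᶜ := by
  borelize (ℕ → M × N)
  exact ((borel_determinacy ((continuous_evenPart.measurable hS).symmDiff
    (continuous_oddPart.measurable hT))).imp exists_continuous_of_playerZeroWins
      exists_continuous_of_playerOneWins).symm

end Wadge

end BorelGame

namespace HHomogeneous

open Set Topology TopologicalSpace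

/-! ### Trees of clopen sets -/

section ClopenTree

variable {N X : Type*} [TopologicalSpace X] {child : ℕ → N → Bool → N} {root : N} {V : N → Set X}

/-- The node reached after `n` steps along the branch `z` of a binary tree. -/
def nodeAt (child : ℕ → N → Bool → N) (root : N) (z : ℕ → Bool) : ℕ → N
  | 0 => root
  | n + 1 => child n (nodeAt child root z n) (z n)

theorem nodeAt_congr {z w : ℕ → Bool} {n : ℕ} (h : ∀ i < n, z i = w i) :
    nodeAt child root z n = nodeAt child root w n := by
  induction n with
  | zero => rfl
  | succ n ih =>
    rw [nodeAt, nodeAt, ih fun i hi => h i (hi.trans n.lt_succ_self), h n n.lt_succ_self]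

/-- The nodes of a binary tree are labelled by clopen sets in such a way that the root is labelled
by the whole space and the children of each node partition its label. -/
structure IsClopenTree (child : ℕ → N → Bool → N) (root : N) (V : N → Set X) : Prop where
  root_eq : V root = univ
  isClopen (m : N) : IsClopen (V m)
  child_subset (n : ℕ) (m : N) (b : Bool) : V (child n m b) ⊆ V m
  existsUnique (n : ℕ) {m : N} {x : X} (hx : x ∈ V m) : ∃! b, x ∈ V (child n m b)

namespace IsClopenTree

variable (h : IsClopenTree child root V)

include h

theorem exists_branch (x : X) : ∃ z, ∀ n, x ∈ V (nodeAt child root z n) := by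
  choose bit hbit using fun n (m : {m // x ∈ V m}) => (h.existsUnique n m.2).exists
  let path : ℕ → {m // x ∈ V m} :=
    Nat.rec ⟨root, h.root_eq ▸ mem_univ x⟩ fun n m => ⟨child n m (bit n m), hbit n m⟩
  have hpath (n : ℕ) : nodeAt child root (fun n => bit n (path n)) n = (path n).1 := by
    induction n with
    | zero => rfl
    | succ n ih => rw [nodeAt, ih]
  exact ⟨_, fun n => hpath n ▸ (path n).2⟩

/-- The branch of the tree all of whose labels contain `x`. -/
noncomputable def branch (x : X) : ℕ → Bool := (h.exists_branch x).choose

theorem mem_branch (x : X) (n : ℕ) : x ∈ V (nodeAt child root (h.branch x) n) :=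
  (h.exists_branch x).choose_spec n

theorem mem_nodeAt_iff {x : X} {z : ℕ → Bool} {n : ℕ} :
    x ∈ V (nodeAt child root z n) ↔ ∀ i < n, z i = h.branch x i := by
  refine ⟨fun hx => ?_, fun hz => nodeAt_congr hz ▸ h.mem_branch x n⟩
  induction n with
  | zero => exact fun i hi => absurd hi i.not_lt_zero
  | succ n ih =>
    have below := ih (h.child_subset n _ _ hx)
    have last : z n = h.branch x n := by
      rw [nodeAt, nodeAt_congr below] at hx
      exact (h.existsUnique n (h.mem_branch x n)).unique hx (h.mem_branch x (n + 1))
    intro i hi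
    obtain hi | rfl := Nat.lt_succ_iff_lt_or_eq.1 hi
    exacts [below i hi, last]

theorem branch_eq {n : ℕ} {x : X} {b : Bool} (hb : ∀ m c, x ∈ V (child n m c) → b = c) :
    h.branch x n = b :=
  (hb _ _ (h.mem_branch x (n + 1))).symm

theorem continuous_branch : Continuous h.branch := by
  refine continuous_pi fun n =>
    IsLocallyConstant.continuous ((IsLocallyConstant.iff_eventually_eq _).2 fun x => ?_)
  filter_upwards [(h.isClopen _).isOpen.mem_nhds (h.mem_branch x (n + 1))] with y hy
  exact (h.mem_nodeAt_iff.1 hy n n.lt_succ_self).symm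

theorem mem_image_branch_iff [CompactSpace X] {K : Set X} (hK : IsClosed K) {z : ℕ → Bool} :
    z ∈ h.branch '' K ↔ ∀ n, (V (nodeAt child root z n) ∩ K).Nonempty := by
  refine ⟨?_, fun hz => ?_⟩
  · rintro ⟨x, hx, rfl⟩ n
    exact ⟨x, h.mem_branch x n, hx⟩
  · have hclosed (n : ℕ) : IsClosed (V (nodeAt child root z n) ∩ K) :=
      (h.isClopen _).isClosed.inter hK
    obtain ⟨x, hx⟩ := IsCompact.nonempty_iInter_of_sequence_nonempty_isCompact_isClosed _
      (fun n => inter_subset_inter_left K (h.child_subset n _ _)) hz (hclosed 0).isCompact hclosed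
    have hx (n : ℕ) := mem_iInter.1 hx n
    exact ⟨x, (hx 0).2, funext fun n =>
      (h.mem_nodeAt_iff.1 (hx (n + 1)).1 n n.lt_succ_self).symm⟩

variable {P : Type*} {G : N → Set P} {π : P → X}

theorem mem_nodeAt_of_le (hGV : ∀ m, MapsTo π (G m) (V m))
    (hG : ∀ n m, ∀ p ∈ G m, ∃ b, p ∈ G (child n m b)) {p : P} {k n : ℕ} (hkn : k ≤ n)
    (hp : p ∈ G (nodeAt child root (h.branch (π p)) k)) :
    p ∈ G (nodeAt child root (h.branch (π p)) n) := by
  induction n, hkn using Nat.le_induction with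
  | base => exact hp
  | succ n _ ih =>
    obtain ⟨b, hb⟩ := hG n _ p ih
    rwa [nodeAt, ← (h.existsUnique n (hGV _ ih)).unique (hGV _ hb) (h.mem_branch (π p) (n + 1))]

theorem notMem_of_frequently_empty (hGV : ∀ m, MapsTo π (G m) (V m))
    (hG : ∀ n m, ∀ p ∈ G m, ∃ b, p ∈ G (child n m b)) {L : ℕ → Set X} (hL : Monotone L)
    (hfill : ∀ n m, G m = ∅ → ∀ x ∈ L n ∩ V m, ∃ b, ∃ p ∈ G (child n m b), π p = x)
    {x : X} (hx : ∀ k, ∃ n ≥ k, G (nodeAt child root (h.branch x) n) = ∅) (i : ℕ) : x ∉ L i := by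
  intro hi
  obtain ⟨n, hin, hempty⟩ := hx i
  obtain ⟨b, p, hp, rfl⟩ := hfill n _ hempty x ⟨hL hin hi, h.mem_branch x n⟩
  rw [(h.existsUnique n (h.mem_branch (π p) n)).unique (hGV _ hp)
    (h.mem_branch (π p) (n + 1))] at hp
  obtain ⟨k, hk, hempty⟩ := hx (n + 1)
  exact hempty.subset (h.mem_nodeAt_of_le hGV hG hk hp)

end IsClopenTree

end ClopenTree

/-! ### A homeomorphism theorem -/

/-- The Cantor space. -/
abbrev Cantor := ℕ → Bool

/-- `F` is a closed set, contained in `K` and nowhere dense relative to `K`. -/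
structure IsClosedNowhereDenseIn (F K : Set Cantor) : Prop where
  isClosed : IsClosed F
  subset : F ⊆ K
  subset_closure_diff : K ⊆ closure (K \ F)

namespace IsClosedNowhereDenseIn

variable {F G K W : Set Cantor}

theorem diff_inter_nonempty (h : IsClosedNowhereDenseIn F K) (hW : IsOpen W)
    (hne : (W ∩ K).Nonempty) : ((W \ F) ∩ K).Nonempty := by
  obtain ⟨x, hxW, hxK⟩ := hne
  obtain ⟨y, hyW, hyK, hyF⟩ := mem_closure_iff.1 (h.subset_closure_diff hxK) W hW hxW
  exact ⟨y, ⟨hyW, hyF⟩, hyK⟩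

theorem mono (h : IsClosedNowhereDenseIn F K) (hG : IsClosed G) (hGF : G ⊆ F) :
    IsClosedNowhereDenseIn G K :=
  ⟨hG, hGF.trans h.subset,
    h.subset_closure_diff.trans (closure_mono (sdiff_subset_sdiff_right hGF))⟩

theorem empty (K : Set Cantor) : IsClosedNowhereDenseIn ∅ K :=
  ⟨isClosed_empty, empty_subset K, by rw [sdiff_empty]; exact subset_closure⟩

theorem union (hF : IsClosedNowhereDenseIn F K) (hG : IsClosedNowhereDenseIn G K) :
    IsClosedNowhereDenseIn (F ∪ G) K := by
  refine ⟨hF.isClosed.union hG.isClosed, union_subset hF.subset hG.subset, fun x hx =>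
    mem_closure_iff.2 fun W hW hxW => ?_⟩
  obtain ⟨y, ⟨⟨hyW, hyF⟩, hyG⟩, hyK⟩ := hG.diff_inter_nonempty (hW.sdiff hF.isClosed)
    (hF.diff_inter_nonempty hW ⟨x, hxW, hx⟩)
  exact ⟨y, hyW, hyK, not_or_intro hyF hyG⟩

end IsClosedNowhereDenseIn

/-- `Y` is a subset of the perfect set `K` that either contains or avoids the complement in `K` of
the increasing union of the sets `L n`, which are closed and nowhere dense in `K`. The former holds
if `c` is true, the latter if `c` is false. -/
structure IsPresentation (K Y : Set Cantor) (L : ℕ → Set Cantor) (c : Prop) : Prop where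
  perfect : Perfect K
  subset : Y ⊆ K
  monotone : Monotone L
  nowhereDense (n : ℕ) : IsClosedNowhereDenseIn (L n) K
  mem_iff {x : Cantor} (hx : x ∈ K) (hL : ∀ n, x ∉ L n) : x ∈ Y ↔ c

/-- `H` is the graph of a homeomorphism between sets that are closed and nowhere dense in `K` and
`K'`, respectively, and this homeomorphism matches `Y` with `Y'`. -/
structure IsMatching (K K' Y Y' : Set Cantor) (H : Set (Cantor × Cantor)) : Prop where
  isCompact : IsCompact H
  injOn_fst : InjOn Prod.fst H
  injOn_snd : InjOn Prod.snd H
  nowhereDense_fst : IsClosedNowhereDenseIn (Prod.fst '' H) K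
  nowhereDense_snd : IsClosedNowhereDenseIn (Prod.snd '' H) K'
  mem_iff : ∀ p ∈ H, (p.1 ∈ Y ↔ p.2 ∈ Y')

variable {K K' Y Y' : Set Cantor}

namespace IsMatching

variable {H H' : Set (Cantor × Cantor)}

theorem empty (K K' Y Y' : Set Cantor) : IsMatching K K' Y Y' ∅ where
  isCompact := isCompact_empty
  injOn_fst := injOn_empty _
  injOn_snd := injOn_empty _
  nowhereDense_fst := by rw [image_empty]; exact .empty K
  nowhereDense_snd := by rw [image_empty]; exact .empty K'
  mem_iff _ := False.elim

theorem swap (h : IsMatching K K' Y Y' H) : IsMatching K' K Y' Y (Prod.swap '' H) where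
  isCompact := h.isCompact.image continuous_swap
  injOn_fst := by
    rintro _ ⟨p, hp, rfl⟩ _ ⟨q, hq, rfl⟩ hpq
    rw [h.injOn_snd hp hq hpq]
  injOn_snd := by
    rintro _ ⟨p, hp, rfl⟩ _ ⟨q, hq, rfl⟩ hpq
    rw [h.injOn_fst hp hq hpq]
  nowhereDense_fst := by rw [image_image]; exact h.nowhereDense_snd
  nowhereDense_snd := by rw [image_image]; exact h.nowhereDense_fst
  mem_iff := by
    rintro _ ⟨p, hp, rfl⟩
    exact (h.mem_iff p hp).symm

theorem inter (h : IsMatching K K' Y Y' H) {F : Set (Cantor × Cantor)} (hF : IsClosed F) :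
    IsMatching K K' Y Y' (H ∩ F) where
  isCompact := h.isCompact.inter_right hF
  injOn_fst := h.injOn_fst.mono inter_subset_left
  injOn_snd := h.injOn_snd.mono inter_subset_left
  nowhereDense_fst := h.nowhereDense_fst.mono
    ((h.isCompact.inter_right hF).image continuous_fst).isClosed (image_mono inter_subset_left)
  nowhereDense_snd := h.nowhereDense_snd.mono
    ((h.isCompact.inter_right hF).image continuous_snd).isClosed (image_mono inter_subset_left)
  mem_iff p hp := h.mem_iff p hp.1

theorem union (h : IsMatching K K' Y Y' H) (h' : IsMatching K K' Y Y' H')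
    (hfst : ∀ p ∈ H, ∀ q ∈ H', p.1 ≠ q.1) (hsnd : ∀ p ∈ H, ∀ q ∈ H', p.2 ≠ q.2) :
    IsMatching K K' Y Y' (H ∪ H') := by
  have hdisj : Disjoint H H' := disjoint_left.2 fun p hp hp' => hfst p hp p hp' rfl
  exact
    { isCompact := h.isCompact.union h'.isCompact
      injOn_fst := (injOn_union hdisj).2 ⟨h.injOn_fst, h'.injOn_fst, hfst⟩
      injOn_snd := (injOn_union hdisj).2 ⟨h.injOn_snd, h'.injOn_snd, hsnd⟩
      nowhereDense_fst := by
        rw [image_union]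
        exact h.nowhereDense_fst.union h'.nowhereDense_fst
      nowhereDense_snd := by
        rw [image_union]
        exact h.nowhereDense_snd.union h'.nowhereDense_snd
      mem_iff := fun p hp => hp.elim (h.mem_iff p) (h'.mem_iff p) }

theorem graph {F : Set Cantor} {j : Cantor → Cantor} (hF : IsClosedNowhereDenseIn F K)
    (hcont : ContinuousOn j F) (hinj : InjOn j F) (hj : IsClosedNowhereDenseIn (j '' F) K')
    (hmem : ∀ x ∈ F, (x ∈ Y ↔ j x ∈ Y')) :
    IsMatching K K' Y Y' ((fun x => (x, j x)) '' F) where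
  isCompact := hF.isClosed.isCompact.image_of_continuousOn (continuousOn_id.prodMk hcont)
  injOn_fst := by
    rintro _ ⟨x, -, rfl⟩ _ ⟨y, -, rfl⟩ rfl
    rfl
  injOn_snd := by
    rintro _ ⟨x, hx, rfl⟩ _ ⟨y, hy, rfl⟩ hxy
    rw [hinj hx hy hxy]
  nowhereDense_fst := by rwa [image_image, image_id']
  nowhereDense_snd := by rwa [image_image]
  mem_iff := by
    rintro _ ⟨x, hx, rfl⟩
    exact hmem x hx

/-- The points of `K'` to be separated are the partners of `D` and `Dᶜ`; one further point on each
side keeps both parts nonempty. -/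
theorem exists_isClopen_iff (h : IsMatching K K' Y Y' H) (hK' : Preperfect K') {V : Set Cantor}
    (hV : IsOpen V) (hne : (V ∩ K').Nonempty) {D : Set Cantor} (hD : IsClopen D) :
    ∃ E, IsClopen E ∧ (V ∩ E ∩ K').Nonempty ∧ (V ∩ Eᶜ ∩ K').Nonempty ∧
      ∀ p ∈ H, (p.1 ∈ D ↔ p.2 ∈ E) := by
  obtain ⟨a, ⟨haV, haH⟩, haK⟩ := h.nowhereDense_snd.diff_inter_nonempty hV hne
  obtain ⟨b, ⟨⟨hbV, hbH⟩, hbK⟩, hba⟩ := preperfect_iff_nhds.1 hK' a haK _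
    ((hV.sdiff h.nowhereDense_snd.isClosed).mem_nhds ⟨haV, haH⟩)
  have hclosed {F : Set Cantor} (hF : IsClosed F) (y : Cantor) :
      IsClosed (Prod.snd '' (H ∩ F ×ˢ univ) ∪ {y}) :=
    (((h.isCompact.inter_right (hF.prod isClosed_univ)).image continuous_snd).union
      isCompact_singleton).isClosed
  have hdisj : Prod.snd '' (H ∩ D ×ˢ univ) ∪ {a} ⊆ (Prod.snd '' (H ∩ Dᶜ ×ˢ univ) ∪ {b})ᶜ := by
    rintro _ (⟨p, ⟨hp, hpD⟩, rfl⟩ | rfl) (⟨q, ⟨hq, hqD⟩, hqp⟩ | hb)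
    · exact hqD.1 (h.injOn_snd hq hp hqp ▸ hpD.1)
    · exact hbH ⟨p, hp, hb⟩
    · exact haH ⟨q, hq, hqp⟩
    · exact hba hb.symm
  obtain ⟨E, hE, hDE, hEb⟩ := exists_clopen_of_closed_subset_open (hclosed hD.isClosed a)
    (hclosed hD.compl.isClosed b).isOpen_compl hdisj
  refine ⟨E, hE, ⟨a, ⟨haV, hDE (Or.inr rfl)⟩, haK⟩,
    ⟨b, ⟨hbV, fun hb => hEb hb (Or.inr rfl)⟩, hbK⟩, fun p hp => ⟨fun hpD => ?_, fun hpE => ?_⟩⟩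
  · exact hDE (Or.inl ⟨p, ⟨hp, hpD, trivial⟩, rfl⟩)
  · by_contra hpD
    exact hEb hpE (Or.inl ⟨p, ⟨hp, hpD, trivial⟩, rfl⟩)

end IsMatching

/-- Each pair `(L n, L n ∩ Y)` embeds into `(V ∩ K', V ∩ Y')` for every relatively open nonempty
part `V ∩ K'` of `K'`, as a closed set that is nowhere dense in `K'`. -/
def EmbedsEverywhere (L : ℕ → Set Cantor) (Y K' Y' : Set Cantor) : Prop :=
  ∀ n V, IsOpen V → (V ∩ K').Nonempty → ∃ j : Cantor → Cantor,
    ContinuousOn j (L n) ∧ InjOn j (L n) ∧ MapsTo j (L n) (V ∩ K') ∧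
      IsClosedNowhereDenseIn (j '' L n) K' ∧ ∀ x ∈ L n, (x ∈ Y ↔ j x ∈ Y')

theorem EmbedsEverywhere.exists_isMatching {L : ℕ → Set Cantor} (he : EmbedsEverywhere L Y K' Y')
    {n : ℕ} (hL : IsClosedNowhereDenseIn (L n) K) {V W : Set Cantor} (hV : IsClosed V)
    (hW : IsOpen W) (hne : (W ∩ K').Nonempty) :
    ∃ H, IsMatching K K' Y Y' H ∧ Prod.fst '' H = L n ∩ V ∧ Prod.snd '' H ⊆ W := by
  obtain ⟨j, hcont, hinj, hmaps, hj, hmem⟩ := he n W hW hne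
  have hLV : L n ∩ V ⊆ L n := inter_subset_left
  refine ⟨_, IsMatching.graph (hL.mono (hL.isClosed.inter hV) hLV) (hcont.mono hLV)
    (hinj.mono hLV) (hj.mono ?_ (image_mono hLV)) fun x hx => hmem x hx.1, ?_, ?_⟩
  · exact ((hL.isClosed.inter hV).isCompact.image_of_continuousOn (hcont.mono hLV)).isClosed
  · rw [image_image, image_id']
  · rw [image_image]
    rintro _ ⟨x, hx, rfl⟩
    exact (hmaps hx.1).1

section Presentations

variable {L L' : ℕ → Set Cantor} {c : Prop}

/-- The two halves of the matching avoid each other because each `L n` is embedded away from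
`L' n`, and conversely. -/
theorem exists_isMatching_covering (hP : IsPresentation K Y L c) (hP' : IsPresentation K' Y' L' c)
    (he : EmbedsEverywhere L Y K' Y') (he' : EmbedsEverywhere L' Y' K Y) {V V' : Set Cantor}
    (hV : IsClopen V) (hV' : IsClopen V') (hne : (V ∩ K).Nonempty) (hne' : (V' ∩ K').Nonempty)
    (n : ℕ) : ∃ H, IsMatching K K' Y Y' H ∧ H ⊆ V ×ˢ V' ∧
      L n ∩ V ⊆ Prod.fst '' H ∧ L' n ∩ V' ⊆ Prod.snd '' H := by
  have hLn := hP.nowhereDense n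
  have hLn' := hP'.nowhereDense n
  obtain ⟨H, hH, hfst, hsnd⟩ := he.exists_isMatching hLn hV.isClosed
    (hV'.isOpen.sdiff hLn'.isClosed) (hLn'.diff_inter_nonempty hV'.isOpen hne')
  obtain ⟨H', hH', hfst', hsnd'⟩ := he'.exists_isMatching hLn' hV'.isClosed
    (hV.isOpen.sdiff hLn.isClosed) (hLn.diff_inter_nonempty hV.isOpen hne)
  have mem_H {p : Cantor × Cantor} (hp : p ∈ H) : p.1 ∈ L n ∩ V ∧ p.2 ∈ V' \ L' n :=
    ⟨hfst.subset ⟨p, hp, rfl⟩, hsnd ⟨p, hp, rfl⟩⟩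
  have mem_H' {p : Cantor × Cantor} (hp : p ∈ H') : p.1 ∈ L' n ∩ V' ∧ p.2 ∈ V \ L n :=
    ⟨hfst'.subset ⟨p, hp, rfl⟩, hsnd' ⟨p, hp, rfl⟩⟩
  refine ⟨H ∪ Prod.swap '' H', hH.union hH'.swap ?_ ?_, union_subset ?_ ?_, ?_, ?_⟩
  · rintro p hp _ ⟨q, hq, rfl⟩ (hpq : p.1 = q.2)
    exact (mem_H' hq).2.2 (hpq ▸ (mem_H hp).1.1)
  · rintro p hp _ ⟨q, hq, rfl⟩ (hpq : p.2 = q.1)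
    exact (mem_H hp).2.2 (hpq ▸ (mem_H' hq).1.1)
  · exact fun p hp => ⟨(mem_H hp).1.2, (mem_H hp).2.1⟩
  · rintro _ ⟨p, hp, rfl⟩
    exact ⟨(mem_H' hp).2.1, (mem_H' hp).1.2⟩
  · exact hfst ▸ image_mono subset_union_left
  · rw [image_union, image_image]
    exact hfst' ▸ subset_union_right

/-- A stage of the back-and-forth construction of a homeomorphism from `K` to `K'`: the part of `K`
in the clopen set `left` will be mapped onto the part of `K'` in the clopen set `right`, and the
homeomorphism will extend the one with graph `graph`. -/
structure Stage (K K' Y Y' : Set Cantor) where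
  left : Set Cantor
  right : Set Cantor
  graph : Set (Cantor × Cantor)
  isClopen_left : IsClopen left
  isClopen_right : IsClopen right
  nonempty_iff : (left ∩ K).Nonempty ↔ (right ∩ K').Nonempty
  isMatching : IsMatching K K' Y Y' graph
  graph_subset : graph ⊆ left ×ˢ right

namespace Stage

/-- The stage with the roles of the two sides exchanged. -/
def swap (m : Stage K K' Y Y') : Stage K' K Y' Y where
  left := m.right
  right := m.left
  graph := Prod.swap '' m.graph
  isClopen_left := m.isClopen_right
  isClopen_right := m.isClopen_left
  nonempty_iff := m.nonempty_iff.symm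
  isMatching := m.isMatching.swap
  graph_subset := by
    rintro _ ⟨p, hp, rfl⟩
    exact (m.graph_subset hp).symm

/-- The two sides of a stage can be split into two parts each, according to the values of the
functions `χ` and `χ'`. -/
structure Splits (m : Stage K K' Y Y') (χ χ' : Cantor → Bool) : Prop where
  continuous_left : Continuous χ
  continuous_right : Continuous χ'
  nonempty_iff (b : Bool) :
    (m.left ∩ χ ⁻¹' {b} ∩ K).Nonempty ↔ (m.right ∩ χ' ⁻¹' {b} ∩ K').Nonempty
  graph_eq : ∀ p ∈ m.graph, χ p.1 = χ' p.2

theorem exists_splits_left (m : Stage K K' Y Y') (hK' : Preperfect K') {χ : Cantor → Bool}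
    (hχ : Continuous χ) : ∃ χ', m.Splits χ χ' := by
  by_cases hboth : ∀ b, (m.left ∩ χ ⁻¹' {b} ∩ K).Nonempty
  · have hne : (m.right ∩ K').Nonempty :=
      m.nonempty_iff.1 ((hboth true).mono (inter_subset_inter_left K inter_subset_left))
    obtain ⟨E, hE, hin, hout, hiff⟩ := m.isMatching.exists_isClopen_iff hK'
      m.isClopen_right.isOpen hne ((isClopen_discrete {true}).preimage hχ)
    refine ⟨E.boolIndicator, hχ, (continuous_boolIndicator_iff_isClopen E).2 hE,
      fun b => iff_of_true (hboth b) ?_, fun p hp => ?_⟩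
    · cases b
      · rwa [preimage_boolIndicator_false]
      · rwa [preimage_boolIndicator_true]
    · rw [Bool.eq_iff_iff, ← E.mem_iff_boolIndicator]
      exact hiff p hp
  · push Not at hboth
    obtain ⟨b, hb⟩ := hboth
    have hconst : ∀ x ∈ m.left ∩ K, χ x = !b := fun x hx => by
      by_contra hxb
      exact hb.subset ⟨⟨hx.1, by simpa using hxb⟩, hx.2⟩
    refine ⟨fun _ => !b, hχ, continuous_const, fun b' => ?_, fun p hp =>
      hconst p.1 ⟨(m.graph_subset hp).1, m.isMatching.nowhereDense_fst.subset ⟨p, hp, rfl⟩⟩⟩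
    have hleft : m.left ∩ χ ⁻¹' {b'} ∩ K = m.left ∩ (fun _ => !b) ⁻¹' {b'} ∩ K := by
      rw [inter_right_comm, EqOn.inter_preimage_eq (f₂ := fun _ => !b) hconst, inter_right_comm]
    rw [hleft]
    by_cases hb' : (!b) = b'
    · simpa [hb'] using m.nonempty_iff
    · simp [hb']

theorem Splits.of_swap {m : Stage K K' Y Y'} {χ χ' : Cantor → Bool} (h : m.swap.Splits χ' χ) :
    m.Splits χ χ' :=
  ⟨h.continuous_right, h.continuous_left, fun b => (h.nonempty_iff b).symm, fun p hp =>
    (h.graph_eq p.swap ⟨p, hp, rfl⟩).symm⟩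

/-- Splitting alternately by the coordinates of the left and of the right side separates all points
on both sides in the limit. -/
theorem exists_splits (m : Stage K K' Y Y') (hK : Preperfect K) (hK' : Preperfect K') (n : ℕ) :
    ∃ χ χ', m.Splits χ χ' ∧ (n % 2 = 0 → ∀ x, χ x = x (n / 2)) ∧
      (n % 2 = 1 → ∀ y, χ' y = y (n / 2)) := by
  obtain hn | hn := Nat.mod_two_eq_zero_or_one n
  · obtain ⟨χ', h⟩ := m.exists_splits_left hK' (continuous_apply (n / 2))
    exact ⟨_, χ', h, fun _ _ => rfl, by omega⟩
  · obtain ⟨χ, h⟩ := m.swap.exists_splits_left hK (continuous_apply (n / 2))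
    exact ⟨χ, _, h.of_swap, by omega, fun _ _ => rfl⟩

/-- The part of a split stage on which the splitting functions take the value `b`. -/
def part (m : Stage K K' Y Y') {χ χ' : Cantor → Bool} (h : m.Splits χ χ') (b : Bool) :
    Stage K K' Y Y' where
  left := m.left ∩ χ ⁻¹' {b}
  right := m.right ∩ χ' ⁻¹' {b}
  graph := m.graph ∩ (χ ⁻¹' {b}) ×ˢ (χ' ⁻¹' {b})
  isClopen_left := m.isClopen_left.inter ((isClopen_discrete {b}).preimage h.continuous_left)
  isClopen_right := m.isClopen_right.inter ((isClopen_discrete {b}).preimage h.continuous_right)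
  nonempty_iff := h.nonempty_iff b
  isMatching := m.isMatching.inter ((isClosed_singleton.preimage h.continuous_left).prod
    (isClosed_singleton.preimage h.continuous_right))
  graph_subset _ hp := ⟨⟨(m.graph_subset hp.1).1, hp.2.1⟩, (m.graph_subset hp.1).2, hp.2.2⟩

theorem mem_graph_part {m : Stage K K' Y Y'} {χ χ' : Cantor → Bool} (h : m.Splits χ χ')
    {p : Cantor × Cantor} (hp : p ∈ m.graph) : p ∈ (m.part h (χ p.1)).graph :=
  ⟨hp, rfl, (h.graph_eq p hp).symm⟩

/-- The stages `child false` and `child true` may follow the stage `m` at step `n` of the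
construction: they partition both sides of `m` and extend its graph. The graph covers the `n`-th
nowhere dense sets if `m.graph` is empty; otherwise no new points are added to it. -/
structure IsStep (L L' : ℕ → Set Cantor) (n : ℕ) (m : Stage K K' Y Y')
    (child : Bool → Stage K K' Y Y') : Prop where
  left_subset (b : Bool) : (child b).left ⊆ m.left
  right_subset (b : Bool) : (child b).right ⊆ m.right
  existsUnique_left {x : Cantor} (hx : x ∈ m.left) : ∃! b, x ∈ (child b).left
  existsUnique_right {y : Cantor} (hy : y ∈ m.right) : ∃! b, y ∈ (child b).right
  bit_left (hn : n % 2 = 0) {x : Cantor} {b : Bool} (hx : x ∈ (child b).left) : x (n / 2) = b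
  bit_right (hn : n % 2 = 1) {y : Cantor} {b : Bool} (hy : y ∈ (child b).right) : y (n / 2) = b
  exists_mem_graph : ∀ p ∈ m.graph, ∃ b, p ∈ (child b).graph
  graph_subset (hne : m.graph.Nonempty) (b : Bool) : (child b).graph ⊆ m.graph
  covers_left (hm : m.graph = ∅) : ∀ x ∈ L n ∩ m.left, ∃ b, ∃ p ∈ (child b).graph, p.1 = x
  covers_right (hm : m.graph = ∅) : ∀ y ∈ L' n ∩ m.right, ∃ b, ∃ p ∈ (child b).graph, p.2 = y

theorem exists_filled (hP : IsPresentation K Y L c) (hP' : IsPresentation K' Y' L' c)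
    (he : EmbedsEverywhere L Y K' Y') (he' : EmbedsEverywhere L' Y' K Y) (n : ℕ)
    (m : Stage K K' Y Y') : ∃ H, IsMatching K K' Y Y' H ∧ H ⊆ m.left ×ˢ m.right ∧
      m.graph ⊆ H ∧ (m.graph.Nonempty → H = m.graph) ∧
      (m.graph = ∅ → L n ∩ m.left ⊆ Prod.fst '' H ∧ L' n ∩ m.right ⊆ Prod.snd '' H) := by
  obtain hm | hm := m.graph.eq_empty_or_nonempty
  swap
  · exact ⟨m.graph, m.isMatching, m.graph_subset, subset_rfl, fun _ => rfl,
      fun h => absurd h hm.ne_empty⟩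
  by_cases hne : (m.left ∩ K).Nonempty
  · obtain ⟨H, hH, hsub, hcover⟩ := exists_isMatching_covering hP hP' he he' m.isClopen_left
      m.isClopen_right hne (m.nonempty_iff.1 hne) n
    exact ⟨H, hH, hsub, hm ▸ empty_subset H, fun h => absurd hm h.ne_empty, fun _ => hcover⟩
  · have hne' := mt m.nonempty_iff.2 hne
    exact ⟨m.graph, m.isMatching, m.graph_subset, subset_rfl, fun _ => rfl, fun _ =>
      ⟨fun x hx => absurd ⟨x, hx.2, (hP.nowhereDense n).subset hx.1⟩ hne,
        fun y hy => absurd ⟨y, hy.2, (hP'.nowhereDense n).subset hy.1⟩ hne'⟩⟩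

theorem exists_isStep (hP : IsPresentation K Y L c) (hP' : IsPresentation K' Y' L' c)
    (he : EmbedsEverywhere L Y K' Y') (he' : EmbedsEverywhere L' Y' K Y) (n : ℕ)
    (m : Stage K K' Y Y') : ∃ child, IsStep L L' n m child := by
  obtain ⟨H, hH, hsub, hext, heq, hcover⟩ := exists_filled hP hP' he he' n m
  let filled : Stage K K' Y Y' := { m with graph := H, isMatching := hH, graph_subset := hsub }
  obtain ⟨χ, χ', hsplit, hleft, hright⟩ :=
    filled.exists_splits hP.perfect.acc hP'.perfect.acc n
  exact ⟨filled.part hsplit,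
    { left_subset := fun _ => inter_subset_left
      right_subset := fun _ => inter_subset_left
      existsUnique_left := fun {x} hx => ⟨χ x, ⟨hx, rfl⟩, fun _ hb => hb.2.symm⟩
      existsUnique_right := fun {y} hy => ⟨χ' y, ⟨hy, rfl⟩, fun _ hb => hb.2.symm⟩
      bit_left := fun hn x _ hx => (hleft hn x).symm.trans hx.2
      bit_right := fun hn y _ hy => (hright hn y).symm.trans hy.2
      exists_mem_graph := fun p hp => ⟨χ p.1, mem_graph_part hsplit (hext hp)⟩
      graph_subset := fun hne _ => inter_subset_left.trans (heq hne).subset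
      covers_left := fun hm x hx =>
        let ⟨p, hp, hpx⟩ := (hcover hm).1 hx
        ⟨χ p.1, p, mem_graph_part hsplit hp, hpx⟩
      covers_right := fun hm y hy =>
        let ⟨p, hp, hpy⟩ := (hcover hm).2 hy
        ⟨χ p.1, p, mem_graph_part hsplit hp, hpy⟩ }⟩

section Limit

variable {child : ℕ → Stage K K' Y Y' → Bool → Stage K K' Y Y'} {root : Stage K K' Y Y'}

theorem isClopenTree_left (hstep : ∀ n m, IsStep L L' n m (child n m)) (hroot : root.left = univ) :
    IsClopenTree child root left where
  root_eq := hroot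
  isClopen m := m.isClopen_left
  child_subset n m b := (hstep n m).left_subset b
  existsUnique n {m} {_} hx := (hstep n m).existsUnique_left hx

theorem isClopenTree_right (hstep : ∀ n m, IsStep L L' n m (child n m))
    (hroot : root.right = univ) : IsClopenTree child root right where
  root_eq := hroot
  isClopen m := m.isClopen_right
  child_subset n m b := (hstep n m).right_subset b
  existsUnique n {m} {_} hy := (hstep n m).existsUnique_right hy

variable (hstep : ∀ n m, IsStep L L' n m (child n m)) (hl : IsClopenTree child root left)
  (hr : IsClopenTree child root right)

include hstep

theorem injective_branch_left : Function.Injective hl.branch := by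
  intro x y hxy
  have hbit (x : Cantor) (k : ℕ) : hl.branch x (2 * k) = x k := hl.branch_eq fun m _ hx => by
    simpa using (hstep (2 * k) m).bit_left (by omega) hx
  exact funext fun k => by rw [← hbit x, ← hbit y, hxy]

theorem injective_branch_right : Function.Injective hr.branch := by
  intro x y hxy
  have hbit (y : Cantor) (k : ℕ) : hr.branch y (2 * k + 1) = y k := hr.branch_eq fun m _ hy => by
    simpa [show (2 * k + 1) / 2 = k by omega] using (hstep (2 * k + 1) m).bit_right (by omega) hy
  exact funext fun k => by rw [← hbit x, ← hbit y, hxy]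

/-- The graphs along the branch shrink to the point `(x, y)`. -/
theorem mem_graph_of_eventually_nonempty {x y : Cantor} (hxy : hl.branch x = hr.branch y) {k : ℕ}
    (hne : ∀ n ≥ k, (nodeAt child root (hl.branch x) n).graph.Nonempty) :
    (x, y) ∈ (nodeAt child root (hl.branch x) k).graph := by
  let z := hl.branch x
  obtain ⟨⟨x', y'⟩, hp⟩ := IsCompact.nonempty_iInter_of_sequence_nonempty_isCompact_isClosed
    (fun n => (nodeAt child root z (k + n)).graph)
    (fun n => (hstep (k + n) _).graph_subset (hne _ (k.le_add_right n)) _)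
    (fun n => hne _ (k.le_add_right n))
    (Stage.isMatching _).isCompact (fun n => (Stage.isMatching _).isCompact.isClosed)
  have hp (n : ℕ) : (x', y') ∈ (nodeAt child root z (k + n)).graph := mem_iInter.1 hp n
  have hx : x' = x := injective_branch_left hstep hl <| funext fun n =>
    (hl.mem_nodeAt_iff.1 (Stage.graph_subset _ (hp (n + 1))).1 n (by omega)).symm
  have hy : y' = y := injective_branch_right hstep hr <| funext fun n => by
    rw [← hxy]
    exact (hr.mem_nodeAt_iff.1 (Stage.graph_subset _ (hp (n + 1))).2 n (by omega)).symm
  subst hx hy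
  exact hp 0

theorem mem_iff_of_branch_eq (hP : IsPresentation K Y L c) (hP' : IsPresentation K' Y' L' c)
    {x y : Cantor} (hx : x ∈ K) (hy : y ∈ K') (hxy : hl.branch x = hr.branch y) :
    x ∈ Y ↔ y ∈ Y' := by
  by_cases hne : ∃ k, ∀ n ≥ k, (nodeAt child root (hl.branch x) n).graph.Nonempty
  · obtain ⟨k, hk⟩ := hne
    exact (Stage.isMatching _).mem_iff _ (mem_graph_of_eventually_nonempty hstep hl hr hxy hk)
  · simp only [not_exists, not_forall, not_nonempty_iff_eq_empty, exists_prop] at hne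
    have hxL := hl.notMem_of_frequently_empty (G := graph) (π := Prod.fst)
      (fun m _ hp => (m.graph_subset hp).1) (fun n m => (hstep n m).exists_mem_graph) hP.monotone
      (fun n m => (hstep n m).covers_left) hne
    have hyL := hr.notMem_of_frequently_empty (G := graph) (π := Prod.snd)
      (fun m _ hp => (m.graph_subset hp).2) (fun n m => (hstep n m).exists_mem_graph) hP'.monotone
      (fun n m => (hstep n m).covers_right) (hxy ▸ hne)
    rw [hP.mem_iff hx hxL, hP'.mem_iff hy hyL]

theorem image_branch_eq (hP : IsPresentation K Y L c) (hP' : IsPresentation K' Y' L' c) :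
    hl.branch '' Y = hr.branch '' Y' := by
  have hrange : hl.branch '' K = hr.branch '' K' := by
    ext z
    rw [hl.mem_image_branch_iff hP.perfect.closed, hr.mem_image_branch_iff hP'.perfect.closed]
    exact forall_congr' fun n => Stage.nonempty_iff _
  apply Subset.antisymm
  · rintro _ ⟨x, hx, rfl⟩
    obtain ⟨y, hy, hyx⟩ := hrange.subset ⟨x, hP.subset hx, rfl⟩
    exact ⟨y, (mem_iff_of_branch_eq hstep hl hr hP hP' (hP.subset hx) hy hyx.symm).1 hx, hyx⟩
  · rintro _ ⟨y, hy, rfl⟩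
    obtain ⟨x, hx, hxy⟩ := hrange.superset ⟨y, hP'.subset hy, rfl⟩
    exact ⟨x, (mem_iff_of_branch_eq hstep hl hr hP hP' hx (hP'.subset hy) hxy).2 hy, hxy⟩

end Limit

end Stage

theorem nonempty_homeomorph (hP : IsPresentation K Y L c) (hP' : IsPresentation K' Y' L' c)
    (hK : K.Nonempty) (hK' : K'.Nonempty) (he : EmbedsEverywhere L Y K' Y')
    (he' : EmbedsEverywhere L' Y' K Y) : Nonempty (Y ≃ₜ Y') := by
  choose child hstep using Stage.exists_isStep hP hP' he he'
  let root : Stage K K' Y Y' := ⟨univ, univ, ∅, isClopen_univ, isClopen_univ,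
    by simp only [univ_inter, hK, hK'], .empty K K' Y Y', empty_subset _⟩
  have hl := Stage.isClopenTree_left (root := root) hstep rfl
  have hr := Stage.isClopenTree_right (root := root) hstep rfl
  have hembl := (hl.continuous_branch.isClosedEmbedding
    (Stage.injective_branch_left hstep hl)).isEmbedding
  have hembr := (hr.continuous_branch.isClosedEmbedding
    (Stage.injective_branch_right hstep hr)).isEmbedding
  exact ⟨(hembl.homeomorphImage Y).trans ((Homeomorph.setCongr
    (Stage.image_branch_eq hstep hl hr hP hP')).trans (hembr.homeomorphImage Y').symm)⟩

end Presentations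

/-! ### Criteria for h-homogeneity -/

section Criteria

variable {F K K' O Y Y' : Set Cantor} {L : ℕ → Set Cantor} {c : Prop}

theorem of_homeomorph {P Q : Type*} [TopologicalSpace P] [TopologicalSpace Q]
    (h : HHomogeneous P) (e : P ≃ₜ Q) : HHomogeneous Q := by
  intro U hU hne
  obtain ⟨g⟩ := h (e ⁻¹' U) (hU.preimage e.continuous) (hne.preimage e.surjective)
  exact ⟨((e.sets rfl).symm.trans g).trans e⟩

theorem of_subsingleton {P : Type*} [TopologicalSpace P] [Subsingleton P] : HHomogeneous P := by
  intro U _ hne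
  obtain rfl := Subsingleton.eq_univ_of_nonempty hne
  exact ⟨Homeomorph.Set.univ P⟩

theorem subtype_of_isClopen {P : Type*} [TopologicalSpace P] (h : HHomogeneous P) {U : Set P}
    (hU : IsClopen U) : HHomogeneous U := by
  obtain rfl | hne := U.eq_empty_or_nonempty
  · exact of_subsingleton
  · obtain ⟨e⟩ := h U hU hne
    exact h.of_homeomorph e.symm

namespace IsClosedNowhereDenseIn

theorem accumulate {E : ℕ → Set Cantor} (h : ∀ n, IsClosedNowhereDenseIn (E n) K) (n : ℕ) :
    IsClosedNowhereDenseIn (accumulate E n) K := by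
  induction n with
  | zero => rw [accumulate_zero_nat]; exact h 0
  | succ n ih => rw [accumulate_succ]; exact ih.union (h _)

theorem closure_inter (h : IsClosedNowhereDenseIn F K) (hO : IsOpen O) :
    IsClosedNowhereDenseIn (F ∩ closure (O ∩ K)) (closure (O ∩ K)) := by
  refine ⟨h.isClosed.inter isClosed_closure, inter_subset_right,
    closure_minimal (fun x hx => mem_closure_iff.2 fun W hW hxW => ?_) isClosed_closure⟩
  obtain ⟨y, ⟨hyW, hyF⟩, hyK⟩ := h.diff_inter_nonempty (hW.inter hO) ⟨x, ⟨hxW, hx.1⟩, hx.2⟩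
  exact ⟨y, hyW.1, subset_closure ⟨hyW.2, hyK⟩, fun hy => hyF hy.1⟩

theorem closure_sdiff (hO : IsOpen O) (K : Set Cantor) :
    IsClosedNowhereDenseIn (closure (O ∩ K) \ O) (closure (O ∩ K)) :=
  ⟨isClosed_closure.sdiff hO, sdiff_subset,
    closure_mono fun _ hx => ⟨subset_closure hx, fun h => h.2 hx.1⟩⟩

end IsClosedNowhereDenseIn

/-- The set `L n` cut down to the closure of `O ∩ K`. If `c` is true, the boundary points outside
`O` are added: they do not belong to `Y ∩ O`, hence must be covered by the layers in a presentation
of `Y ∩ O`. -/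
def restrictLayer (L : ℕ → Set Cantor) (c : Prop) (K O : Set Cantor) (n : ℕ) : Set Cantor :=
  (L n ∩ closure (O ∩ K)) ∪ {x | x ∈ closure (O ∩ K) \ O ∧ c}

theorem restrictLayer_univ (hK : IsClosed K) (hL : ∀ n, L n ⊆ K) :
    restrictLayer L c K univ = L := by
  ext n x
  simp only [restrictLayer, univ_inter, hK.closure_eq, sdiff_univ, mem_empty_iff_false, false_and,
    ofPred_false, union_empty, inter_eq_left.2 (hL n)]

namespace IsPresentation

theorem of_accumulate {E : ℕ → Set Cantor} (hK : Perfect K) (hY : Y ⊆ K)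
    (hE : ∀ n, IsClosedNowhereDenseIn (E n) K) (h : ∀ x ∈ K, (∀ n, x ∉ E n) → (x ∈ Y ↔ c)) :
    IsPresentation K Y (accumulate E) c where
  perfect := hK
  subset := hY
  monotone := monotone_accumulate
  nowhereDense := .accumulate hE
  mem_iff hx hL := h _ hx fun n hn => hL n (subset_accumulate hn)

theorem restrict (hP : IsPresentation K Y L c) (hO : IsOpen O) :
    IsPresentation (closure (O ∩ K)) (Y ∩ O) (restrictLayer L c K O) c where
  perfect := (hP.perfect.acc.open_inter hO).perfect_closure
  subset _ hx := subset_closure ⟨hx.2, hP.subset hx.1⟩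
  monotone _ _ hmn := union_subset_union_left _ (inter_subset_inter_left _ (hP.monotone hmn))
  nowhereDense n := by
    refine ((hP.nowhereDense n).closure_inter hO).union ?_
    by_cases hc : c
    · simp only [hc, and_true, ofPred_mem_eq]
      exact .closure_sdiff hO K
    · simp only [hc, and_false, ofPred_false]
      exact .empty _
  mem_iff {x} hx hL := by
    have hxK : x ∈ K := closure_minimal inter_subset_right hP.perfect.closed hx
    have hYc := hP.mem_iff hxK fun n hn => hL n (.inl ⟨hn, hx⟩)
    refine ⟨fun h => hYc.1 h.1, fun hc => ⟨hYc.2 hc, by_contra fun hxO => ?_⟩⟩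
    exact hL 0 (.inr ⟨⟨hx, hxO⟩, hc⟩)

end IsPresentation

namespace EmbedsEverywhere

theorem of_continuous (hL : ∀ n, IsClosed (L n))
    (h : ∀ n V, IsOpen V → (V ∩ K').Nonempty → ∃ (j : Cantor → Cantor) (F : Set Cantor),
      Continuous j ∧ Function.Injective j ∧ (∀ x, j x ∈ V ∩ F) ∧ IsClosedNowhereDenseIn F K' ∧
        ∀ x ∈ L n, (x ∈ Y ↔ j x ∈ Y')) :
    EmbedsEverywhere L Y K' Y' := by
  intro n V hV hne
  obtain ⟨j, F, hj, hinj, hjF, hF, hjY⟩ := h n V hV hne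
  refine ⟨j, hj.continuousOn, hinj.injOn, fun x _ => ⟨(hjF x).1, hF.subset (hjF x).2⟩,
    hF.mono ((hL n).isCompact.image hj).isClosed ?_, hjY⟩
  rintro _ ⟨x, -, rfl⟩
  exact (hjF x).2

theorem restrict (h : EmbedsEverywhere L Y K' Y') (hO : IsOpen O) :
    EmbedsEverywhere L Y (closure (O ∩ K')) (Y' ∩ O) := by
  rintro n V hV ⟨x, hxV, hx⟩
  obtain ⟨j, hj, hinj, hmaps, hF, hjY⟩ := h n (V ∩ O) (hV.inter hO)
    (by rw [inter_assoc]; exact mem_closure_iff.1 hx V hV hxV)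
  have hjO {x : Cantor} (hx : x ∈ L n) : j x ∈ O ∩ K' := ⟨(hmaps hx).1.2, (hmaps hx).2⟩
  refine ⟨j, hj, hinj, fun x hx => ⟨(hmaps hx).1.1, subset_closure (hjO hx)⟩, ?_,
    fun x hx => (hjY x hx).trans (and_iff_left (hjO hx).1).symm⟩
  have hsub : j '' L n ⊆ closure (O ∩ K') :=
    (image_subset_iff.2 fun x hx => hjO hx).trans subset_closure
  rw [← inter_eq_left.2 hsub]
  exact hF.closure_inter hO

end EmbedsEverywhere

theorem exists_isOpen_of_isClopen {P : Type*} [TopologicalSpace P] {Y : Set P} {U : Set Y}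
    (hU : IsClopen U) :
    ∃ O, IsOpen O ∧ Subtype.val ⁻¹' O = U ∧ Y ∩ closure (Y ∩ O) ⊆ O := by
  obtain ⟨O, hO, rfl⟩ := isOpen_induced_iff.1 hU.2
  refine ⟨O, hO, rfl, fun x ⟨hxY, hx⟩ => ?_⟩
  have hcl : (⟨x, hxY⟩ : Y) ∈ closure (Subtype.val ⁻¹' O) := by
    rwa [closure_subtype, Subtype.image_preimage_coe]
  rwa [hU.1.closure_eq] at hcl

theorem of_embedsEverywhere (hP : IsPresentation K Y L c) (hY : K ⊆ closure Y)
    (he : ∀ O, IsOpen O → Y ∩ closure (O ∩ K) ⊆ O →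
      EmbedsEverywhere (restrictLayer L c K O) (Y ∩ O) K Y) : HHomogeneous Y := by
  rintro U hU ⟨⟨x, hxY⟩, hxU⟩
  obtain ⟨O, hO, rfl, hcl⟩ := exists_isOpen_of_isClopen hU
  have hcl' : Y ∩ closure (O ∩ K) ⊆ O := by
    refine (inter_subset_inter_right Y (closure_minimal ?_ isClosed_closure)).trans hcl
    rw [inter_comm Y O]
    exact (inter_subset_inter_right O hY).trans hO.inter_closure
  have hwhole := he univ isOpen_univ (subset_univ _)
  rw [restrictLayer_univ hP.perfect.closed fun n => (hP.nowhereDense n).subset, inter_univ]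
    at hwhole
  obtain ⟨e⟩ := nonempty_homeomorph (hP.restrict hO) hP
    ⟨x, subset_closure ⟨hxU, hP.subset hxY⟩⟩ ⟨x, hP.subset hxY⟩ (he O hO hcl') (hwhole.restrict hO)
  exact ⟨((IsEmbedding.subtypeVal.homeomorphImage _).trans
    (Homeomorph.setCongr (Subtype.image_preimage_coe Y O))).trans e⟩

end Criteria

/-! ### Partitions into h-homogeneous sets -/

theorem exists_isGδ_preimage_eq {P Q : Type*} [TopologicalSpace P] [TopologicalSpace Q]
    {j : P → Q} (hj : IsInducing j) {O : Set P} (hO : IsGδ O) : ∃ O', IsGδ O' ∧ j ⁻¹' O' = O := by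
  obtain ⟨f, hf, rfl⟩ := isGδ_iff_eq_iInter_nat.1 hO
  choose g hg hgf using fun n => hj.isOpen_iff.1 (hf n)
  exact ⟨⋂ n, g n, .iInter_of_isOpen hg, by rw [preimage_iInter]; exact iInter_congr hgf⟩

/-- `X` is the union of a sequence of pairwise disjoint h-homogeneous subspaces, each of which is a
`Gδ` set relative to `X`. -/
def HasPartition {P : Type*} [TopologicalSpace P] (X : Set P) : Prop :=
  ∃ f : ℕ → Set P, Pairwise (Function.onFun Disjoint f) ∧
    (∀ i, HHomogeneous (f i) ∧ ∃ O, IsGδ O ∧ f i = X ∩ O) ∧ ⋃ i, f i = X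

namespace HasPartition

section General

variable {P Q : Type*} [TopologicalSpace P] [TopologicalSpace Q]

theorem of_countable_family {ι : Type*} [Countable ι] {X : Set P} {f : ι → Set P}
    (hd : Pairwise (Function.onFun Disjoint f))
    (hf : ∀ i, HHomogeneous (f i) ∧ ∃ O, IsGδ O ∧ f i = X ∩ O) (hX : ⋃ i, f i = X) :
    HasPartition X := by
  have : Encodable ι := Encodable.ofCountable ι
  refine ⟨fun n => ⋃ b ∈ Encodable.decode₂ ι n, f b, Encodable.iUnion_decode₂_disjoint_on hd,
    fun n => ?_, (Encodable.iUnion_decode₂ f).trans hX⟩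
  exact Encodable.iUnion_decode₂_cases
    (C := fun A : Set P => HHomogeneous A ∧ ∃ O, IsGδ O ∧ A = X ∩ O)
    ⟨of_subsingleton, ∅, .empty, (inter_empty X).symm⟩ hf

theorem of_hHomogeneous {X : Set P} (h : HHomogeneous X) : HasPartition X :=
  of_countable_family (ι := Unit) (f := fun _ => X) (fun _ _ hij => (hij rfl).elim)
    (fun _ => ⟨h, univ, .univ, (inter_univ X).symm⟩) (iUnion_const X)

theorem empty : HasPartition (∅ : Set P) := of_hHomogeneous of_subsingleton

theorem of_countable [T1Space P] {X : Set P} (hX : X.Countable) : HasPartition X := by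
  have := hX.to_subtype
  refine of_countable_family (f := fun x : X => {x.1}) (fun x y hxy => ?_)
    (fun x => ⟨of_subsingleton, (X \ {x.1})ᶜ, (hX.mono sdiff_subset).isGδ_compl, ?_⟩)
    (iUnion_of_singleton_coe X)
  · exact disjoint_singleton.2 (Subtype.coe_ne_coe.2 hxy)
  · rw [← sdiff_eq, sdiff_sdiff_right_self, inter_eq_right.2 (singleton_subset_iff.2 x.2)]

theorem of_isGδ_cover {ι : Type*} [Countable ι] {X : Set P} {O : ι → Set P} (hO : ∀ i, IsGδ (O i))
    (hd : Pairwise (Function.onFun Disjoint O)) (hX : X ⊆ ⋃ i, O i)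
    (h : ∀ i, HasPartition (X ∩ O i)) : HasPartition X := by
  choose f fd hf fX using h
  have hsub (i n) : f i n ⊆ X ∩ O i := fX i ▸ subset_iUnion (f i) n
  refine of_countable_family (ι := ι × ℕ) (f := fun p => f p.1 p.2) ?_ ?_ ?_
  · rintro ⟨i, m⟩ ⟨j, n⟩ hne
    obtain rfl | hij := eq_or_ne i j
    · exact fd i fun h => hne (Prod.ext rfl h)
    · exact (hd hij).mono ((hsub i m).trans inter_subset_right)
        ((hsub j n).trans inter_subset_right)
  · rintro ⟨i, n⟩
    obtain ⟨hh, U, hU, heq⟩ := hf i n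
    exact ⟨hh, O i ∩ U, (hO i).inter hU, by rw [heq, inter_assoc]⟩
  · rw [iUnion_prod', ← inter_eq_left.2 hX, inter_iUnion]
    exact iUnion_congr fX

theorem inter_isClopen {X V : Set P} (h : HasPartition X) (hV : IsClopen V) :
    HasPartition (X ∩ V) := by
  obtain ⟨f, fd, hf, fX⟩ := h
  refine ⟨fun i => f i ∩ V, fun i j hij => (fd hij).mono inter_subset_left inter_subset_left,
    fun i => ?_, by rw [← iUnion_inter, fX]⟩
  obtain ⟨hh, O, hO, heq⟩ := hf i
  refine ⟨?_, O, hO, by simp only [heq, inter_right_comm]⟩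
  exact (hh.subtype_of_isClopen (hV.preimage continuous_subtype_val)).of_homeomorph
    ((IsEmbedding.subtypeVal.homeomorphImage _).trans
      (Homeomorph.setCongr (Subtype.image_preimage_coe _ V)))

theorem of_image {j : P → Q} (hj : IsEmbedding j) {X : Set P} (h : HasPartition (j '' X)) :
    HasPartition X := by
  obtain ⟨f, fd, hf, fX⟩ := h
  refine ⟨fun i => j ⁻¹' f i, fun i k hik => (fd hik).preimage j, fun i => ?_, ?_⟩
  · obtain ⟨hh, O, hO, heq⟩ := hf i
    refine ⟨hh.of_homeomorph ?_, j ⁻¹' O, hO.preimage hj.continuous, ?_⟩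
    · refine ((hj.homeomorphImage _).trans (Homeomorph.setCongr ?_)).symm
      rw [image_preimage_eq_inter_range, inter_eq_left]
      exact heq ▸ inter_subset_left.trans (image_subset_range j X)
    · simp only [heq, preimage_inter, hj.injective.preimage_image]
  · rw [← preimage_iUnion, fX, hj.injective.preimage_image]

theorem image {j : P → Q} (hj : IsEmbedding j) {X : Set P} (h : HasPartition X) :
    HasPartition (j '' X) := by
  obtain ⟨f, fd, hf, fX⟩ := h
  refine ⟨fun i => j '' f i, fun i k hik => (disjoint_image_iff hj.injective).2 (fd hik),
    fun i => ?_, by rw [← image_iUnion, fX]⟩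
  obtain ⟨hh, O, hO, heq⟩ := hf i
  obtain ⟨O', hO', rfl⟩ := exists_isGδ_preimage_eq hj.isInducing hO
  exact ⟨hh.of_homeomorph (hj.homeomorphImage _), O', hO',
    by simp only [heq, image_inter_preimage]⟩

theorem of_isClopen_cover {X : Set P} {V : ℕ → Set P} (hV : ∀ n, IsClopen (V n))
    (hX : X ⊆ ⋃ n, V n) (h : ∀ n, HasPartition (X ∩ V n)) : HasPartition X := by
  have hcl (n : ℕ) : IsClopen (disjointed V n) := by
    rw [disjointed_eq_inter_compl]
    exact (hV n).inter ((finite_lt_nat n).isClopen_biInter fun i _ => (hV i).compl)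
  refine of_isGδ_cover (fun n => (hcl n).2.isGδ) (disjoint_disjointed V)
    (by rwa [iUnion_disjointed]) fun n => ?_
  rw [← inter_eq_right.2 (disjointed_subset V n), ← inter_assoc]
  exact (h n).inter_isClopen (hcl n)

theorem of_locally [SecondCountableTopology P] {X : Set P}
    (h : ∀ x ∈ X, ∃ V, IsClopen V ∧ x ∈ V ∧ HasPartition (X ∩ V)) : HasPartition X := by
  obtain rfl | hne := X.eq_empty_or_nonempty
  · exact empty
  choose! V hV hxV hXV using h
  obtain ⟨t, htX, htc, ht⟩ := TopologicalSpace.countable_cover_nhdsWithin (s := X) (f := V)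
    fun x hx => mem_nhdsWithin_of_mem_nhds ((hV x hx).2.mem_nhds (hxV x hx))
  obtain rfl | htne := t.eq_empty_or_nonempty
  · simp only [mem_empty_iff_false, iUnion_of_empty, iUnion_empty, subset_empty_iff] at ht
    exact (hne.ne_empty ht).elim
  obtain ⟨x, rfl⟩ := htc.exists_eq_range htne
  rw [biUnion_range] at ht
  exact of_isClopen_cover (fun n => hV _ (htX (mem_range_self n))) ht
    fun n => hXV _ (htX (mem_range_self n))

end General

variable {X : Set Cantor}

theorem inter_isOpen (h : HasPartition X) {W : Set Cantor} (hW : IsOpen W) :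
    HasPartition (X ∩ W) := by
  refine of_locally fun x hx => ?_
  obtain ⟨V, hV, hxV, hVW⟩ := compact_exists_isClopen_in_isOpen hW hx.2
  refine ⟨V, hV, hxV, ?_⟩
  rw [inter_assoc, inter_eq_right.2 hVW]
  exact h.inter_isClopen hV

theorem of_isClosed_cover {T : ℕ → Set Cantor} (hT : ∀ n, IsClosed (T n))
    (h : ∀ n, HasPartition (X ∩ T n)) (hr : HasPartition (X \ ⋃ n, T n)) : HasPartition X := by
  have ho (n : ℕ) : IsOpen (⋂ i < n, (T i)ᶜ) :=
    (finite_lt_nat n).isOpen_biInter fun i _ => (hT i).isOpen_compl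
  have hdis (n : ℕ) : disjointed T n = T n ∩ ⋂ i < n, (T i)ᶜ := disjointed_eq_inter_compl T n
  have hrest (n : ℕ) : Disjoint (⋃ n, T n)ᶜ (disjointed T n) :=
    disjoint_compl_left.mono_right ((disjointed_subset T n).trans (subset_iUnion T n))
  refine of_isGδ_cover (O := fun o : Option ℕ => o.elim (⋃ n, T n)ᶜ (disjointed T)) ?_ ?_ ?_ ?_
  · rintro (_ | n)
    · simp only [Option.elim, compl_iUnion]
      exact .iInter_of_isOpen fun n => (hT n).isOpen_compl
    · simp only [Option.elim, hdis]
      exact (hT n).isGδ.inter (ho n).isGδ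
  · rintro (_ | n) (_ | m) hne
    · exact (hne rfl).elim
    · exact hrest m
    · exact (hrest n).symm
    · exact disjoint_disjointed T fun h => hne (congrArg some h)
  · rw [iUnion_option]
    simp only [Option.elim, iUnion_disjointed, compl_union_self, subset_univ]
  · rintro (_ | n)
    · exact hr
    · simp only [Option.elim, hdis, ← inter_assoc]
      exact (h n).inter_isOpen (ho n)

theorem of_isClosed_of_sdiff {C : Set Cantor} (hC : IsClosed C) (h : HasPartition (X ∩ C))
    (h' : HasPartition (X \ C)) : HasPartition X :=
  of_isClosed_cover (T := fun _ => C) (fun _ => hC) (fun _ => h) (by rwa [iUnion_const])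

end HasPartition

/-- No nonempty relatively open part of `Y` has a partition into h-homogeneous sets. -/
def IsNowherePartitionable (Y : Set Cantor) : Prop :=
  ∀ W, IsOpen W → (Y ∩ W).Nonempty → ¬ HasPartition (Y ∩ W)

namespace IsNowherePartitionable

variable {Y : Set Cantor}

theorem not_hasPartition (h : IsNowherePartitionable Y) (hne : Y.Nonempty) : ¬ HasPartition Y := by
  have := h univ isOpen_univ
  rw [inter_univ] at this
  exact this hne

theorem inter (h : IsNowherePartitionable Y) {V : Set Cantor} (hV : IsOpen V) :
    IsNowherePartitionable (Y ∩ V) := by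
  intro W hW
  rw [inter_assoc]
  exact h _ (hV.inter hW)

theorem perfect_closure (h : IsNowherePartitionable Y) : Perfect (closure Y) := by
  refine Preperfect.perfect_closure (preperfect_iff_nhds.2 fun x hx U hU => ?_)
  by_contra! hiso
  have hsub : Y ∩ interior U ⊆ {x} := fun y hy => hiso y ⟨interior_subset hy.2, hy.1⟩
  exact h _ isOpen_interior ⟨x, hx, mem_interior_iff_mem_nhds.2 hU⟩
    (.of_countable ((countable_singleton x).mono hsub))

end IsNowherePartitionable

theorem exists_isNowherePartitionable {X : Set Cantor} (hX : ¬ HasPartition X) :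
    ∃ C, IsClosed C ∧ (X ∩ C).Nonempty ∧ IsNowherePartitionable (X ∩ C) := by
  let G : Set Cantor := ⋃₀ {V | IsClopen V ∧ HasPartition (X ∩ V)}
  have hG : IsOpen G := isOpen_sUnion fun V hV => hV.1.2
  have hXG : HasPartition (X ∩ G) := by
    refine .of_locally ?_
    rintro x ⟨-, V, hV, hxV⟩
    refine ⟨V, hV.1, hxV, ?_⟩
    rw [inter_assoc, inter_eq_right.2 (subset_sUnion_of_mem hV)]
    exact hV.2
  have hrest {W : Set Cantor} (hW : IsOpen W) (h : HasPartition (X ∩ Gᶜ ∩ W)) :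
      HasPartition (X ∩ W) := by
    refine .of_isClosed_of_sdiff hG.isClosed_compl (by rwa [inter_right_comm]) ?_
    rw [sdiff_compl, inter_right_comm]
    exact hXG.inter_isOpen hW
  refine ⟨Gᶜ, hG.isClosed_compl, ?_, ?_⟩
  · by_contra hne
    rw [not_nonempty_iff_eq_empty] at hne
    refine hX (inter_univ X ▸ hrest isOpen_univ ?_)
    rw [hne, empty_inter]
    exact .empty
  · rintro W hW ⟨x, ⟨-, hxG⟩, hxW⟩ h
    obtain ⟨V, hV, hxV, hVW⟩ := compact_exists_isClopen_in_isOpen hW hxW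
    refine hxG ⟨V, ⟨hV, ?_⟩, hxV⟩
    rw [← inter_eq_right.2 hVW, ← inter_assoc]
    exact (hrest hW h).inter_isClopen hV

/-! ### Partitions of closed sets and of `Gδ` sets -/

theorem HasPartition.of_isClosed {C : Set Cantor} (hC : IsClosed C) : HasPartition C := by
  by_contra hbad
  obtain ⟨D, hD, hne, hn⟩ := exists_isNowherePartitionable hbad
  have hcl := hC.inter hD
  have hP : IsPresentation (C ∩ D) (C ∩ D) (fun _ => ∅) True :=
    ⟨hcl.closure_eq ▸ hn.perfect_closure, subset_rfl, monotone_const, fun _ => .empty _,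
      fun hx _ => by simp only [hx]⟩
  refine hn.not_hasPartition hne (.of_hHomogeneous (of_embedsEverywhere hP subset_closure
    fun O _ hO n V _ _ => ?_))
  have hlayer : restrictLayer (fun _ => ∅) True (C ∩ D) O n = ∅ := by
    refine eq_empty_of_forall_notMem fun x hx => ?_
    obtain hx | ⟨⟨hx, hxO⟩, -⟩ := hx
    · exact hx.1
    · exact hxO (hO ⟨closure_minimal inter_subset_right hcl hx, hx⟩)
  rw [hlayer]
  exact ⟨id, continuousOn_empty _, injOn_empty _, mapsTo_empty _ _,
    by rw [image_empty]; exact .empty _, fun _ => False.elim⟩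

theorem exists_nowhereDense_selfEmbedding : ∃ d : Cantor → Cantor, Continuous d ∧
    Function.Injective d ∧ IsClosedNowhereDenseIn (range d) univ := by
  let d : Cantor → Cantor := fun z n => if n % 2 = 0 then false else z (n / 2)
  have hd : Continuous d := by
    refine continuous_pi fun n => ?_
    by_cases hn : n % 2 = 0
    · simp only [d, hn, if_true, continuous_const]
    · simp only [d, hn, if_false, continuous_apply]
  have hinj : Function.Injective d := fun z w h => funext fun n => by
    simpa [d, show (2 * n + 1) / 2 = n by omega] using congrFun h (2 * n + 1)
  refine ⟨d, hd, hinj, (isCompact_range hd).isClosed, subset_univ _, fun x _ => ?_⟩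
  have hlim : Filter.Tendsto (fun n => Function.update x (2 * n) true) Filter.atTop (𝓝 x) := by
    refine tendsto_pi_nhds.2 fun k => tendsto_const_nhds.congr' ?_
    filter_upwards [Filter.eventually_gt_atTop k] with n hn
    rw [Function.update_of_ne (by omega)]
  refine mem_closure_of_tendsto hlim (.of_forall fun n => ⟨trivial, ?_⟩)
  rintro ⟨z, hz⟩
  simpa [d] using congrFun hz (2 * n)

theorem IsClosedNowhereDenseIn.image {F K : Set Cantor} (h : IsClosedNowhereDenseIn F univ)
    {j : Cantor → Cantor} (hj : Continuous j) (hinj : Function.Injective j) (hK : ∀ z, j z ∈ K) :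
    IsClosedNowhereDenseIn (j '' F) K := by
  refine ⟨(h.isClosed.isCompact.image hj).isClosed, image_subset_iff.2 fun z _ => hK z,
    fun x hx => ?_⟩
  by_cases hxF : x ∈ j '' F
  · obtain ⟨z, -, rfl⟩ := hxF
    have hz := image_closure_subset_closure_image hj
      (mem_image_of_mem j (h.subset_closure_diff (mem_univ z)))
    refine closure_mono ?_ hz
    rintro _ ⟨w, hw, rfl⟩
    exact ⟨hK w, fun hwF => hw.2 (hinj.mem_set_image.1 hwF)⟩
  · exact subset_closure ⟨hx, hxF⟩

theorem exists_continuous_injective_of_not_countable {X : Set Cantor} (hX : MeasurableSet X)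
    (hc : ¬ X.Countable) : ∃ j : Cantor → Cantor, Continuous j ∧ Function.Injective j ∧
      ∀ z, j z ∈ X := by
  have : PolishSpace Cantor := { }
  obtain ⟨t, ht, hp, hcl, -⟩ := hX.isClopenable
  obtain ⟨j, hjX, hj, hinj⟩ :=
    @IsClosed.exists_nat_bool_injection_of_not_countable Cantor t hp X hcl hc
  exact ⟨j, continuous_le_rng ht hj, hinj, fun z => hjX ⟨z, rfl⟩⟩

section Copies

variable {Y : Set Cantor}

theorem IsNowherePartitionable.exists_copy (h : IsNowherePartitionable Y) (hY : MeasurableSet Y)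
    {W : Set Cantor} (hW : IsOpen W) (hne : (Y ∩ W).Nonempty) :
    ∃ j : Cantor → Cantor, Continuous j ∧ Function.Injective j ∧ (∀ z, j z ∈ Y ∩ W) ∧
      IsClosedNowhereDenseIn (range j) (closure Y) := by
  obtain ⟨j, hj, hinj, hjY⟩ := exists_continuous_injective_of_not_countable
    (hY.inter hW.measurableSet) fun hc => h W hW hne (.of_countable hc)
  obtain ⟨d, hd, hdinj, hdn⟩ := exists_nowhereDense_selfEmbedding
  refine ⟨j ∘ d, hj.comp hd, hinj.comp hdinj, fun z => hjY _, ?_⟩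
  rw [range_comp]
  exact hdn.image hj hinj fun z => subset_closure (hjY z).1

theorem IsNowherePartitionable.exists_copies (h : IsNowherePartitionable Y)
    (hY : MeasurableSet Y) : ∃ D : ℕ → Set Cantor, (∀ n, D n ⊆ Y) ∧
      (∀ n, IsClosedNowhereDenseIn (D n) (closure Y)) ∧
      ∀ W, IsOpen W → (Y ∩ W).Nonempty → ∃ n, ∃ j : Cantor → Cantor,
        Continuous j ∧ Function.Injective j ∧ ∀ z, j z ∈ W ∩ D n := by
  classical
  have hB := TopologicalSpace.isBasis_countableBasis Cantor
  obtain ⟨b₀, hb₀, -⟩ := hB.exists_subset_of_mem_open (mem_univ default) isOpen_univ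
  obtain ⟨b, hb⟩ :=
    (TopologicalSpace.countable_countableBasis Cantor).exists_eq_range ⟨b₀, hb₀⟩
  have hopen (n : ℕ) : IsOpen (b n) := hB.isOpen (hb ▸ mem_range_self n)
  choose! j hj hinj hjY hjn using fun n (hne : (Y ∩ b n).Nonempty) => h.exists_copy hY (hopen n) hne
  let D (n : ℕ) : Set Cantor := if (Y ∩ b n).Nonempty then range (j n) else ∅
  refine ⟨D, fun n => ?_, fun n => ?_, fun W hW ⟨x, hxY, hxW⟩ => ?_⟩
  · by_cases hne : (Y ∩ b n).Nonempty
    · simp only [D, hne, if_true]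
      exact range_subset_iff.2 fun z => (hjY n hne z).1
    · simp only [D, hne, if_false, empty_subset]
  · by_cases hne : (Y ∩ b n).Nonempty
    · simp only [D, hne, if_true, hjn]
    · simp only [D, hne, if_false]
      exact .empty _
  · obtain ⟨_, hb', hxb, hbW⟩ := hB.exists_subset_of_mem_open hxW hW
    obtain ⟨n, rfl⟩ := hb.subset hb'
    have hne : (Y ∩ b n).Nonempty := ⟨x, hxY, hxb⟩
    refine ⟨n, j n, hj n hne, hinj n hne, fun z => ⟨hbW (hjY n hne z).2, ?_⟩⟩
    simp only [D, hne, if_true, mem_range_self]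

theorem subset_closure_sdiff_iUnion (h : IsNowherePartitionable Y) {D : ℕ → Set Cantor}
    (hD : ∀ n, IsClosed (D n)) (hDY : ∀ n, D n ⊆ Y) : Y ⊆ closure (Y \ ⋃ n, D n) := by
  refine fun x hx => mem_closure_iff.2 fun W hW hxW => ?_
  by_contra hempty
  refine h W hW ⟨x, hx, hxW⟩ (.of_isClosed_cover hD (fun n => ?_) ?_)
  · rw [inter_right_comm, inter_eq_right.2 (hDY n)]
    exact (HasPartition.of_isClosed (hD n)).inter_isOpen hW
  · rw [inter_comm Y W, inter_sdiff_assoc, not_nonempty_iff_eq_empty.1 hempty]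
    exact .empty

/-- The layers must contain copies of themselves everywhere, so `Y` itself need not satisfy the
criterion, but it does after removing countably many Cantor sets. -/
theorem hHomogeneous_sdiff_copies (h : IsNowherePartitionable Y) {U : ℕ → Set Cantor}
    (hU : ∀ n, IsOpen (U n)) (hYU : Y = ⋂ n, U n) {D : ℕ → Set Cantor} (hDY : ∀ n, D n ⊆ Y)
    (hD : ∀ n, IsClosedNowhereDenseIn (D n) (closure Y))
    (hcopy : ∀ W, IsOpen W → (Y ∩ W).Nonempty → ∃ n, ∃ j : Cantor → Cantor,
      Continuous j ∧ Function.Injective j ∧ ∀ z, j z ∈ W ∩ D n) :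
    HHomogeneous ↥(Y \ ⋃ n, D n) := by
  let E (n : ℕ) : Set Cantor := closure Y \ U n ∪ D n
  have hE (n : ℕ) : IsClosedNowhereDenseIn (E n) (closure Y) := by
    refine .union ⟨isClosed_closure.sdiff (hU n), sdiff_subset, closure_mono fun x hx => ?_⟩ (hD n)
    exact ⟨subset_closure hx, fun h => h.2 (mem_iInter.1 (hYU.subset hx) n)⟩
  have hEY (n : ℕ) : Disjoint (E n) (Y \ ⋃ n, D n) := by
    refine disjoint_left.2 ?_
    rintro x (hx | hx) ⟨hxY, hxD⟩
    · exact hx.2 (mem_iInter.1 (hYU.subset hxY) n)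
    · exact hxD (mem_iUnion_of_mem n hx)
  have hP : IsPresentation (closure Y) (Y \ ⋃ n, D n) (accumulate E) True := by
    refine .of_accumulate h.perfect_closure (sdiff_subset.trans subset_closure) hE
      fun x hx hxE => ?_
    refine iff_true_intro ⟨hYU ▸ mem_iInter.2 fun n => ?_, fun hxD => ?_⟩
    · exact by_contra fun hxU => hxE n (.inl ⟨hx, hxU⟩)
    · obtain ⟨n, hn⟩ := mem_iUnion.1 hxD
      exact hxE n (.inr hn)
  refine of_embedsEverywhere hP (closure_minimal (subset_closure_sdiff_iUnion h
    (fun n => (hD n).isClosed) hDY) isClosed_closure) fun O hO _ => .of_continuous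
    (fun n => ((hP.restrict hO).nowhereDense n).isClosed) fun n V hV hne => ?_
  obtain ⟨m, j, hj, hinj, hjD⟩ :=
    hcopy V hV ((closure_inter_open_nonempty_iff hV).1 (by rwa [inter_comm]))
  refine ⟨j, D m, hj, hinj, hjD, hD m, fun x hx => iff_of_false ?_ fun hjY => ?_⟩
  · rintro ⟨hxY, hxO⟩
    obtain ⟨hx, -⟩ | ⟨⟨-, hx⟩, -⟩ := hx
    · obtain ⟨k, -, hk⟩ := mem_accumulate.1 hx
      exact disjoint_left.1 (hEY k) hk hxY
    · exact hx hxO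
  · exact hjY.2 (mem_iUnion_of_mem m (hjD x).2)

theorem HasPartition.of_isGδ {X : Set Cantor} (hX : IsGδ X) : HasPartition X := by
  by_contra hbad
  obtain ⟨C, hC, hne, hn⟩ := exists_isNowherePartitionable hbad
  have hY : IsGδ (X ∩ C) := hX.inter hC.isGδ
  obtain ⟨D, hDY, hD, hcopy⟩ := hn.exists_copies hY.measurableSet
  obtain ⟨U, hU, hYU⟩ := isGδ_iff_eq_iInter_nat.1 hY
  refine hn.not_hasPartition hne (.of_isClosed_cover (fun n => (hD n).isClosed) (fun n => ?_)
    (.of_hHomogeneous (hHomogeneous_sdiff_copies hn hU hYU hDY hD hcopy)))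
  rw [inter_eq_right.2 (hDY n)]
  exact .of_isClosed (hD n).isClosed

end Copies

/-! ### The Martin–Monk argument -/

section MartinMonk

open Filter

/-- The homeomorphism of the Cantor space negating the `n`-th coordinate. -/
def flipAt (n : ℕ) : Cantor ≃ₜ Cantor where
  toFun z := Function.update z n (!z n)
  invFun z := Function.update z n (!z n)
  left_inv z := by simp
  right_inv z := by simp
  continuous_toFun :=
    continuous_id.update n
      ((continuous_of_discreteTopology (f := Bool.not)).comp (continuous_apply n))
  continuous_invFun :=
    continuous_id.update n
      ((continuous_of_discreteTopology (f := Bool.not)).comp (continuous_apply n))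

theorem flipAt_apply_self (n : ℕ) (z : Cantor) : flipAt n z n = !z n :=
  Function.update_self (β := fun _ => Bool) n (!z n) z

theorem flipAt_apply_of_ne {i n : ℕ} (h : i ≠ n) (z : Cantor) : flipAt n z i = z i :=
  Function.update_of_ne (β := fun _ => Bool) h (!z n) z

/-- By the Baire property, `S` agrees with an open set `U` up to a meager set. A flip far out leaves
a basic open subset of `U` invariant. -/
theorem not_forall_flipAt_mem_iff {S : Set Cantor} (hS : MeasurableSet S) :
    ¬ ∀ n z, flipAt n z ∈ S ↔ z ∉ S := by
  intro hflip
  obtain ⟨U, hU, hSU⟩ := hS.residualEq_isOpen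
  have hflipU (n : ℕ) : ∀ᶠ z in residual Cantor, flipAt n z ∈ U ↔ z ∉ U := by
    have hflipped := hSU.mem_iff
    rw [← (flipAt n).residual_map_eq, eventually_map] at hflipped
    filter_upwards [hSU.mem_iff, hflipped] with z h h'
    rw [← h, ← h', hflip]
  obtain ⟨x, hx⟩ : U.Nonempty := by
    obtain ⟨z, hz⟩ := (dense_of_mem_residual (hflipU 0)).nonempty
    by_contra! h
    simp [h] at hz
  obtain ⟨_, ⟨y, n, rfl⟩, hxy, hyU⟩ :=
    (PiNat.isTopologicalBasis_cylinders fun _ : ℕ => Bool).exists_subset_of_mem_open hx hU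
  obtain ⟨z, hzy, hz⟩ := (dense_of_mem_residual (hflipU n)).inter_open_nonempty _
    (PiNat.isOpen_cylinder _ y n) ⟨x, hxy⟩
  refine hz.1 (hyU fun i hi => ?_) (hyU hzy)
  rw [flipAt_apply_of_ne hi.ne, hzy i hi]

section Threads

variable {Y : ℕ → Type*} [∀ n, MetricSpace (Y n)] {φ ψ : ∀ n, Y (n + 1) → Y n}

theorem exists_thread [∀ n, CompleteSpace (Y n)] [∀ n, Nonempty (Y n)]
    (hφ : ∀ n x y, dist (φ n x) (φ n y) ≤ dist x y)
    (hd : ∀ n (x y : Y n), dist x y ≤ (1 / 2) ^ n) :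
    ∃ x : ∀ n, Y n, ∀ n, x n = φ n (x (n + 1)) := by
  let u : ℕ → ∀ n, Y n :=
    Nat.rec (fun n => Classical.arbitrary (Y n)) fun _ v n => φ n (v (n + 1))
  have hu (k n : ℕ) : dist (u k n) (u (k + 1) n) ≤ (1 / 2) ^ (n + k) := by
    induction k generalizing n with
    | zero => exact hd n _ _
    | succ k ih =>
      refine (hφ n (u k (n + 1)) (u (k + 1) (n + 1))).trans ((ih (n + 1)).trans_eq ?_)
      rw [add_right_comm, add_assoc]
  have hcauchy (n : ℕ) : CauchySeq fun k => u k n :=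
    cauchySeq_of_le_geometric (1 / 2) ((1 / 2) ^ n) (by norm_num) fun k =>
      (hu k n).trans_eq (pow_add _ n k)
  choose x hx using fun n => cauchySeq_tendsto_of_complete (hcauchy n)
  have hcont (n : ℕ) : Continuous (φ n) :=
    (LipschitzWith.of_dist_le_mul (K := 1) (by simpa using hφ n)).continuous
  exact ⟨x, fun n => tendsto_nhds_unique ((tendsto_add_atTop_iff_nat 1).2 (hx n))
    (((hcont n).tendsto _).comp (hx (n + 1)))⟩

theorem dist_thread_le (hφ : ∀ n x y, dist (φ n x) (φ n y) ≤ dist x y)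
    (hd : ∀ n (x y : Y n), dist x y ≤ (1 / 2) ^ n) {x y : ∀ n, Y n}
    (hx : ∀ n, x n = φ n (x (n + 1))) (hy : ∀ n, y n = ψ n (y (n + 1))) (n k : ℕ)
    (h : ∀ i, n ≤ i → i < n + k → φ i = ψ i) : dist (x n) (y n) ≤ (1 / 2) ^ (n + k) := by
  induction k generalizing n with
  | zero => exact hd n _ _
  | succ k ih =>
    rw [hx, hy, ← h n le_rfl (by omega), ← add_assoc, add_right_comm]
    exact (hφ n _ _).trans (ih (n + 1) fun i hi hik => h i (by omega) (by omega))

end Threads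

/-- The infinite compositions `f (z 0) 0 ∘ f (z 1) 1 ∘ ⋯` pull back `X 0` to a Borel set of `z`
that is complemented by every flip. -/
theorem martin_monk {Y : ℕ → Type*} [∀ n, MetricSpace (Y n)] [∀ n, CompleteSpace (Y n)]
    [∀ n, Nonempty (Y n)] [MeasurableSpace (Y 0)] [BorelSpace (Y 0)]
    {f : Bool → ∀ n, Y (n + 1) → Y n} (hf : ∀ b n x y, dist (f b n x) (f b n y) ≤ dist x y)
    (hd : ∀ n (x y : Y n), dist x y ≤ (1 / 2) ^ n) {X : ∀ n, Set (Y n)} (hX : MeasurableSet (X 0)) :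
    ¬ ∀ b n x, f b n x ∈ X n ↔ (x ∈ X (n + 1) ↔ b = true) := by
  intro hfX
  choose x hx using fun z : Cantor => exists_thread (fun n => hf (z n) n) hd
  have hdist (z w : Cantor) (n k : ℕ) (h : ∀ i, n ≤ i → i < n + k → z i = w i) :
      dist (x z n) (x w n) ≤ (1 / 2) ^ (n + k) :=
    dist_thread_le (fun n => hf (z n) n) hd (hx z) (hx w) n k fun i hi hik => by rw [h i hi hik]
  have hsmall : Tendsto (fun k : ℕ => (1 / 2 : ℝ) ^ k) atTop (𝓝 0) :=
    tendsto_pow_atTop_nhds_zero_of_lt_one (by norm_num) (by norm_num)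
  have htail {z w : Cantor} {n : ℕ} (h : ∀ i, n ≤ i → z i = w i) : x z n = x w n := by
    refine dist_le_zero.1 (ge_of_tendsto' (hsmall.comp (tendsto_add_atTop_nat n)) fun k => ?_)
    rw [Function.comp, add_comm k]
    exact hdist z w n k fun i hi _ => h i hi
  have hcont : Continuous fun z => x z 0 := by
    refine Metric.continuous_iff'.2 fun z ε hε => ?_
    obtain ⟨k, hk⟩ := (hsmall.eventually_lt_const hε).exists
    filter_upwards [(PiNat.isOpen_cylinder (fun _ : ℕ => Bool) z k).mem_nhds
      (PiNat.self_mem_cylinder z k)] with w hw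
    refine (hdist w z 0 k fun i _ hi => hw i (by omega)).trans_lt ?_
    rwa [zero_add]
  refine not_forall_flipAt_mem_iff (hcont.measurable hX) fun n z => ?_
  have hflip {m : ℕ} (hm : m ≤ n) : x (flipAt n z) m ∈ X m ↔ x z m ∉ X m := by
    induction hm using Nat.decreasingInduction with
    | self =>
      rw [hx, hx z, hfX, hfX, htail fun i hi => flipAt_apply_of_ne (by omega) z, flipAt_apply_self]
      cases z n <;> simp
    | of_succ m hm ih =>
      rw [hx, hx z, hfX, hfX, ih, flipAt_apply_of_ne hm.ne]
      tauto
  exact hflip n.zero_le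

end MartinMonk

/-! ### Minimal bad pairs -/

theorem polishSpace_of_isGδ {Q : Type*} [TopologicalSpace Q] [PolishSpace Q] {P : Set Q}
    (hP : IsGδ P) : PolishSpace P := by
  obtain ⟨U, hU, hPU⟩ := isGδ_iff_eq_iInter_nat.1 hP
  have (n : ℕ) : PolishSpace (U n) := (hU n).polishSpace
  have : PolishSpace (∀ n, U n) := { }
  let g (x : P) (n : ℕ) : U n := ⟨x, mem_iInter.1 (hPU.subset x.2) n⟩
  have hg : Continuous g := continuous_pi fun n => continuous_subtype_val.subtype_mk _
  have hval (n : ℕ) : Continuous fun y : ∀ n, U n => (y n : Q) :=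
    continuous_subtype_val.comp (continuous_apply n)
  have hrange : range g = ⋂ n, {y : ∀ n, U n | (y n : Q) = y 0} := by
    refine subset_antisymm (range_subset_iff.2 fun x => mem_iInter.2 fun _ => rfl) fun y hy => ?_
    have hy0 (n : ℕ) : (y n : Q) = y 0 := mem_iInter.1 hy n
    refine ⟨⟨y 0, hPU.superset (mem_iInter.2 fun n => hy0 n ▸ (y n).2)⟩, ?_⟩
    exact funext fun n => Subtype.ext (hy0 n).symm
  refine IsClosedEmbedding.polishSpace
    ⟨IsEmbedding.of_comp hg (hval 0) IsEmbedding.subtypeVal, ?_⟩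
  rw [hrange]
  exact isClosed_iInter fun n => isClosed_eq (hval n) (hval 0)

theorem exists_homeomorph_nonexpansive {Q T : Type u} [TopologicalSpace Q]
    [IsCompletelyMetrizableSpace Q] [MetricSpace T] [CompleteSpace T] {γ : Q → T}
    (hγ : Continuous γ) :
    ∃ (G : Type u) (_ : MetricSpace G) (_ : CompleteSpace G) (e : G ≃ₜ Q),
      ∀ x y, dist (γ (e x)) (γ (e y)) ≤ dist x y := by
  let := upgradeIsCompletelyMetrizable Q
  have hclosed : IsClosed (range fun q => (q, γ q)) := by
    have hgraph : range (fun q => (q, γ q)) = {p : Q × T | γ p.1 = p.2} := by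
      ext ⟨q, t⟩
      simp
    exact hgraph ▸ isClosed_eq (hγ.comp continuous_fst) continuous_snd
  let e := (isEmbedding_graph hγ).toHomeomorph
  refine ⟨_, inferInstance, hclosed.completeSpace_coe, e.symm, fun x y => ?_⟩
  obtain ⟨⟨q, rfl⟩, r, rfl⟩ := And.intro (e.surjective x) (e.surjective y)
  rw [e.symm_apply_apply, e.symm_apply_apply]
  exact le_max_right (dist q r) _

/-- `(P, X)` is a *bad pair*: `P` is a `Gδ` subset of the Cantor space, `X` is Borel, and the trace
of `X` on `P` has no partition. -/
structure IsBad (P X : Set Cantor) : Prop where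
  isGδ : IsGδ P
  measurableSet : MeasurableSet X
  not_hasPartition : ¬ HasPartition (X ∩ P)

/-- On the subspace `P`, the set `X` is Wadge reducible to the trace of `X'` on `P'`. -/
def ReducesOn {S : Type*} [TopologicalSpace S] (P X : Set S) (P' X' : Set Cantor) : Prop :=
  ∃ f : S → Cantor, ContinuousOn f P ∧ MapsTo f P P' ∧ ∀ x ∈ P, x ∈ X ↔ f x ∈ X'

theorem ReducesOn.exists_lift {S T : Type*} [TopologicalSpace S] [TopologicalSpace T]
    {P X : Set S} {X' : Set Cantor} {ι : T → Cantor} (h : ReducesOn P X (range ι) X')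
    (hι : IsEmbedding ι) : ∃ g : P → T, Continuous g ∧ ∀ x, ι (g x) ∈ X' ↔ x.1 ∈ X := by
  obtain ⟨f, hf, hfP, hfX⟩ := h
  choose g hg using fun x : P => hfP x.2
  refine ⟨g, hι.continuous_iff.2 ?_, fun x => by rw [hg, hfX x x.2]⟩
  exact hf.domRestrict.congr fun x => (hg x).symm

theorem IsBad.exists_mem {P X : Set Cantor} (h : IsBad P X) :
    ∃ x ∈ P, ∀ V, IsClopen V → x ∈ V → IsBad (P ∩ V) X := by
  by_contra! hlocal
  refine h.not_hasPartition (.of_locally fun x hx => ?_)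
  obtain ⟨V, hV, hxV, hgood⟩ := hlocal x hx.2
  refine ⟨V, hV, hxV, ?_⟩
  by_contra hbad
  rw [inter_assoc] at hbad
  exact hgood ⟨h.isGδ.inter hV.isOpen.isGδ, h.measurableSet, hbad⟩

/-- A bad pair `(P, X)` whose `P` is presented as the range of an embedding of a complete metric
space. -/
structure BadSpace where
  /-- the complete metric space homeomorphic to `P` -/
  carrier : Type
  [metricSpace : MetricSpace carrier]
  [completeSpace : CompleteSpace carrier]
  /-- the embedding with range `P` -/
  toCantor : carrier → Cantor
  isEmbedding : IsEmbedding toCantor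
  /-- the Borel set `X` -/
  set : Set Cantor
  isBad : IsBad (range toCantor) set

namespace BadSpace

attribute [instance] metricSpace completeSpace

instance (S : BadSpace) : Nonempty S.carrier := by
  obtain ⟨_, ⟨x, -⟩, -⟩ := S.isBad.exists_mem
  exact ⟨x⟩

/-- The metric of the next space is chosen on the graph of the pair of reductions, and the space is
then cut down to a small ball. -/
theorem exists_next (S : BadSpace)
    (hS : ∃ P X, IsBad P X ∧ ReducesOn P X (range S.toCantor) S.set ∧
      ReducesOn P Xᶜ (range S.toCantor) S.set)
    {ε : ℝ} (hε : 0 < ε) : ∃ (S' : BadSpace) (f : Bool → S'.carrier → S.carrier),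
      (∀ b x y, dist (f b x) (f b y) ≤ dist x y) ∧ (∀ x y : S'.carrier, dist x y ≤ ε) ∧
      ∀ b x, S.toCantor (f b x) ∈ S.set ↔ (S'.toCantor x ∈ S'.set ↔ b = true) := by
  obtain ⟨P, X, h, hX, hXc⟩ := hS
  obtain ⟨g, hg, hgX⟩ := hX.exists_lift S.isEmbedding
  obtain ⟨g', hg', hgX'⟩ := hXc.exists_lift S.isEmbedding
  have : PolishSpace Cantor := { }
  have := polishSpace_of_isGδ h.isGδ
  obtain ⟨G, _, _, e, he⟩ := exists_homeomorph_nonexpansive (hg.prodMk hg')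
  obtain ⟨x, hxP, hx⟩ := h.exists_mem
  obtain ⟨W, hW, hWball⟩ := (IsEmbedding.subtypeVal.comp e.isEmbedding).isInducing.isOpen_iff.1
    (Metric.isOpen_ball (x := e.symm ⟨x, hxP⟩) (ε := ε / 2))
  have hmemW {q : G} : (e q).1 ∈ W ↔ dist q (e.symm ⟨x, hxP⟩) < ε / 2 := by
    rw [← Metric.mem_ball, ← hWball]
    rfl
  have hxW : x ∈ W := by
    simpa [hε] using (hmemW (q := e.symm ⟨x, hxP⟩)).2
  obtain ⟨V, hV, hxV, hVW⟩ := compact_exists_isClopen_in_isOpen hW hxW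
  have hclosed : IsClosed {q : G | (e q).1 ∈ V} :=
    hV.isClosed.preimage (continuous_subtype_val.comp e.continuous)
  have hrange : range (fun q : {q : G | (e q).1 ∈ V} => (e q).1) = P ∩ V := by
    refine subset_antisymm (range_subset_iff.2 fun q => ⟨(e q).2, q.2⟩) fun y hy => ?_
    exact ⟨⟨e.symm ⟨y, hy.1⟩, by simpa using hy.2⟩, by simp⟩
  have := hclosed.completeSpace_coe
  refine ⟨⟨{q : G | (e q).1 ∈ V}, fun q => (e q).1,
    IsEmbedding.subtypeVal.comp (e.isEmbedding.comp .subtypeVal), X, hrange ▸ hx V hV hxV⟩,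
    fun b q => if b then g (e q) else g' (e q), ?_, fun q r => ?_, ?_⟩
  · rintro (_ | _) q r
    · exact (le_max_right _ _).trans (he q r)
    · exact (le_max_left _ _).trans (he q r)
  · have hq := hmemW.1 (hVW q.2)
    have hr := hmemW.1 (hVW r.2)
    refine (dist_triangle_right q.1 r.1 (e.symm ⟨x, hxP⟩)).trans ?_
    linarith
  · rintro (_ | _) q
    · simpa using hgX' (e q)
    · simpa using hgX (e q)

theorem exists_seq (S : BadSpace) (h : ∀ P X, IsBad P X →
      ∃ P' X', IsBad P' X' ∧ ReducesOn P' X' P X ∧ ReducesOn P' X'ᶜ P X) :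
    ∃ (s : ℕ → BadSpace) (f : ∀ n, Bool → (s (n + 1)).carrier → (s n).carrier),
      (∀ n b x y, dist (f n b x) (f n b y) ≤ dist x y) ∧
      (∀ n (x y : (s n).carrier), dist x y ≤ (1 / 2) ^ n) ∧
      ∀ n b x, (s n).toCantor (f n b x) ∈ (s n).set ↔
        ((s (n + 1)).toCantor x ∈ (s (n + 1)).set ↔ b = true) := by
  choose next f hf hd hfX using fun (S : BadSpace) (n : ℕ) =>
    S.exists_next (h _ _ S.isBad) (ε := (1 / 2) ^ n) (by positivity)
  let s (n : ℕ) : BadSpace := n.rec (next S 0) fun n S => next S (n + 1)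
  refine ⟨s, fun n => f (s n) (n + 1), fun n => hf (s n) (n + 1), fun n => ?_,
    fun n => hfX (s n) (n + 1)⟩
  cases n with
  | zero => exact hd S 0
  | succ n => exact hd (s n) (n + 1)

end BadSpace

/-- A bad pair is *minimal* if no bad pair reduces to it both directly and after complementation. -/
structure IsMinimalBad (P X : Set Cantor) : Prop extends IsBad P X where
  not_reducesOn_compl {P' X' : Set Cantor} :
    IsBad P' X' → ReducesOn P' X' P X → ¬ ReducesOn P' X'ᶜ P X

theorem IsBad.exists_isMinimalBad {P X : Set Cantor} (h : IsBad P X) :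
    ∃ P X, IsMinimalBad P X := by
  by_contra! hmin
  have hreduce (P X : Set Cantor) (hPX : IsBad P X) :
      ∃ P' X', IsBad P' X' ∧ ReducesOn P' X' P X ∧ ReducesOn P' X'ᶜ P X := by
    by_contra! hcon
    exact hmin P X ⟨hPX, hcon _ _⟩
  have : PolishSpace Cantor := { }
  have := polishSpace_of_isGδ h.isGδ
  let := upgradeIsCompletelyMetrizable P
  let S : BadSpace := ⟨P, Subtype.val, .subtypeVal, X, Subtype.range_val.symm ▸ h⟩
  obtain ⟨s, f, hf, hd, hfX⟩ := S.exists_seq hreduce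
  borelize (s 0).carrier
  exact martin_monk (f := fun b n => f n b) (X := fun n => (s n).toCantor ⁻¹' (s n).set)
    (fun b n => hf n b) hd ((s 0).isEmbedding.continuous.measurable (s 0).isBad.measurableSet)
    fun b n => hfX n b

/-! ### Reducibility on countably many pieces -/

section Refinement

variable {P : Type*} [TopologicalSpace P] [PerfectlyNormalSpace P]

theorem exists_isGδ_fibers {O : Set P} (hO : IsGδ O) :
    ∃ c : P → ℕ, c ⁻¹' {0} = O ∧ ∀ n, IsGδ (c ⁻¹' {n}) := by
  classical
  obtain ⟨U, hU, rfl⟩ := isGδ_iff_eq_iInter_nat.1 hO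
  let c (x : P) : ℕ := if h : ∃ n, x ∉ U n then Nat.find h + 1 else 0
  have hzero : c ⁻¹' {0} = ⋂ n, U n := by
    ext x
    simp [c, dite_eq_right_iff]
  have hsucc (n : ℕ) : c ⁻¹' {n + 1} = (U n)ᶜ ∩ ⋂ i < n, U i := by
    ext x
    by_cases hx : ∃ n, x ∉ U n
    · simp [c, hx, Nat.find_eq_iff]
    · have hn : x ∈ U n := by_contra fun h => hx ⟨n, h⟩
      simp [c, hx, hn]
  refine ⟨c, hzero, fun n => ?_⟩
  cases n with
  | zero => exact hzero ▸ hO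
  | succ n =>
    rw [hsucc]
    exact (hU n).isClosed_compl.isGδ.inter
      ((finite_lt_nat n).isOpen_biInter fun i _ => hU i).isGδ

/-- A countable `Gδ` cover is refined to a disjoint one by sorting the points according to the first
piece they belong to and their fibers outside the earlier pieces. -/
theorem HasPartition.of_isGδ_sUnion {X : Set P} {𝒟 : Set (Set P)} (h𝒟 : 𝒟.Countable)
    (hG : ∀ D ∈ 𝒟, IsGδ D) (hX : X ⊆ ⋃₀ 𝒟)
    (h : ∀ D ∈ 𝒟, ∀ G ⊆ D, IsGδ G → HasPartition (X ∩ G)) : HasPartition X := by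
  classical
  obtain rfl | hne := 𝒟.eq_empty_or_nonempty
  · rw [sUnion_empty, subset_empty_iff] at hX
    exact hX ▸ .empty
  obtain ⟨O, rfl⟩ := h𝒟.exists_eq_range hne
  rw [forall_mem_range] at hG h
  choose c hcO hc using fun k => exists_isGδ_fibers (hG k)
  have hmem {x : P} {k : ℕ} : c k x = 0 ↔ x ∈ O k := by rw [← hcO]; rfl
  let D (i : Σ k, Fin k → ℕ) : Set P := O i.1 ∩ ⋂ j : Fin i.1, c j ⁻¹' {i.2 j + 1}
  have hD (i) : IsGδ (D i) := (hG _).inter (.iInter fun j => hc _ _)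
  refine .of_isGδ_cover hD (fun i i' hne => disjoint_left.2 ?_) (fun x hx => ?_)
    fun i => h _ _ inter_subset_left (hD i)
  · rintro x ⟨hx, hxc⟩ ⟨hx', hxc'⟩
    refine hne ?_
    obtain ⟨k, w⟩ := i
    obtain ⟨k', w'⟩ := i'
    simp only [mem_iInter, mem_preimage, mem_singleton_iff] at hxc hxc'
    obtain hk | rfl | hk := lt_trichotomy k k'
    · simpa [hmem.2 hx] using hxc' ⟨k, hk⟩
    · rw [show w = w' from funext fun j => Nat.succ_injective ((hxc j).symm.trans (hxc' j))]
    · simpa [hmem.2 hx'] using hxc ⟨k', hk⟩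
  · have hex : ∃ k, x ∈ O k := by simpa using hX hx
    refine mem_iUnion.2 ⟨⟨Nat.find hex, fun j => c j x - 1⟩, Nat.find_spec hex,
      mem_iInter.2 fun j => ?_⟩
    have hj := mt hmem.1 (Nat.find_min hex j.2)
    exact (Nat.succ_pred hj).symm

end Refinement

section Reduces

variable {Q Q' : Type*} [TopologicalSpace Q] [TopologicalSpace Q'] {P X : Set Cantor}
  {E E' A : Set Q} {A' : Set Q'}

theorem ReducesOn.mono (h : ReducesOn E A P X) (hE : E' ⊆ E) : ReducesOn E' A P X := by
  obtain ⟨f, hf, hfP, hfX⟩ := h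
  exact ⟨f, hf.mono hE, hfP.mono_left hE, fun x hx => hfX x (hE hx)⟩

theorem ReducesOn.comp {E' : Set Q'} (h : ReducesOn E' A' P X) {f : Q → Q'}
    (hf : ContinuousOn f E) (hE : MapsTo f E E') (hA : ∀ x ∈ E, x ∈ A ↔ f x ∈ A') :
    ReducesOn E A P X := by
  obtain ⟨g, hg, hgP, hgX⟩ := h
  exact ⟨g ∘ f, hg.comp hf hE, hgP.comp hE, fun x hx => (hA x hx).trans (hgX _ (hE hx))⟩

/-- Countably many `Gδ` sets, on each of which `A` reduces to the trace of `X` on `P`, cover `E`. -/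
def SigmaReducesOn (E A : Set Q) (P X : Set Cantor) : Prop :=
  ∃ 𝒟 : Set (Set Q), 𝒟.Countable ∧ (∀ D ∈ 𝒟, IsGδ D ∧ ReducesOn D A P X) ∧ E ⊆ ⋃₀ 𝒟

theorem ReducesOn.sigmaReducesOn (h : ReducesOn E A P X) (hE : IsGδ E) :
    SigmaReducesOn E A P X :=
  ⟨{E}, countable_singleton E, by simp [h, hE], by simp⟩

namespace SigmaReducesOn

theorem mono (h : SigmaReducesOn E A P X) (hE : E' ⊆ E) : SigmaReducesOn E' A P X := by
  obtain ⟨𝒟, hc, h𝒟, hE𝒟⟩ := h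
  exact ⟨𝒟, hc, h𝒟, hE.trans hE𝒟⟩

theorem iUnion {ι : Type*} [Countable ι] {E : ι → Set Q} (h : ∀ i, SigmaReducesOn (E i) A P X) :
    SigmaReducesOn (⋃ i, E i) A P X := by
  choose 𝒟 hc h𝒟 hE using h
  refine ⟨⋃ i, 𝒟 i, countable_iUnion hc, fun D hD => ?_, iUnion_subset fun i x hx => ?_⟩
  · obtain ⟨i, hi⟩ := mem_iUnion.1 hD
    exact h𝒟 i D hi
  · obtain ⟨D, hD, hxD⟩ := hE i hx
    exact ⟨D, mem_iUnion.2 ⟨i, hD⟩, hxD⟩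

theorem union (h : SigmaReducesOn E A P X) (h' : SigmaReducesOn E' A P X) :
    SigmaReducesOn (E ∪ E') A P X := by
  rw [union_eq_iUnion]
  exact iUnion (Bool.rec h' h)

theorem comp {E' : Set Q'} (h : SigmaReducesOn E' A' P X) (hE : IsGδ E) {f : Q → Q'}
    (hf : ContinuousOn f E) (hfE : MapsTo f E E') (hA : ∀ x ∈ E, x ∈ A ↔ f x ∈ A') :
    SigmaReducesOn E A P X := by
  obtain ⟨𝒟, hc, h𝒟, hE𝒟⟩ := h
  refine ⟨(fun D => E ∩ f ⁻¹' D) '' 𝒟, hc.image _, forall_mem_image.2 fun D hD => ⟨?_, ?_⟩, ?_⟩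
  · obtain ⟨O, hO, hOD⟩ := exists_isGδ_preimage_eq IsInducing.subtypeVal
      ((h𝒟 D hD).1.preimage hf.domRestrict)
    have : E ∩ f ⁻¹' D = E ∩ O := by
      ext x
      exact and_congr_right fun hx => (Set.ext_iff.1 hOD ⟨x, hx⟩).symm
    exact this ▸ hE.inter hO
  · exact (h𝒟 D hD).2.comp (hf.mono inter_subset_left) inter_subset_right fun x hx => hA x hx.1
  · intro x hx
    obtain ⟨D, hD, hxD⟩ := hE𝒟 (hfE hx)
    exact ⟨_, mem_image_of_mem _ hD, hx, hxD⟩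

end SigmaReducesOn

end Reduces

namespace IsMinimalBad

variable {P X : Set Cantor} (h : IsMinimalBad P X)

include h

theorem reducesOn_of_subset {Q : Type*} [TopologicalSpace Q] {E A : Set Q} (hA : E ⊆ A) :
    ReducesOn E A P X := by
  obtain ⟨p, hpX, hpP⟩ : (X ∩ P).Nonempty := by
    by_contra! hempty
    exact h.not_hasPartition (hempty ▸ .empty)
  exact ⟨fun _ => p, continuousOn_const, fun _ _ => hpP, fun x hx => by simp [hpX, hA hx]⟩

theorem reducesOn_of_disjoint {Q : Type*} [TopologicalSpace Q] {E A : Set Q}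
    (hA : Disjoint E A) : ReducesOn E A P X := by
  obtain ⟨p, hpP, hpX⟩ : (P \ X).Nonempty := by
    by_contra! hempty
    rw [sdiff_eq_empty] at hempty
    have hP : HasPartition P := .of_isGδ h.isGδ
    exact h.not_hasPartition (by rwa [inter_eq_right.2 hempty])
  exact ⟨fun _ => p, continuousOn_const, fun _ _ => hpP, fun x hx => by
    simp [hpX, disjoint_left.1 hA hx]⟩

theorem hasPartition_inter {Y T : Set Cantor} (hY : MeasurableSet Y) (hT : IsGδ T)
    (h₁ : SigmaReducesOn T Y P X) (h₂ : SigmaReducesOn T Yᶜ P X) : HasPartition (Y ∩ T) := by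
  obtain ⟨𝒟₁, hc₁, h𝒟₁, hT₁⟩ := h₁
  obtain ⟨𝒟₂, hc₂, h𝒟₂, hT₂⟩ := h₂
  refine .of_isGδ_sUnion (hc₁.image2 hc₂ (· ∩ ·)) ?_ ?_ ?_
  · rintro _ ⟨D₁, hD₁, D₂, hD₂, rfl⟩
    exact (h𝒟₁ D₁ hD₁).1.inter (h𝒟₂ D₂ hD₂).1
  · rintro x ⟨-, hx⟩
    obtain ⟨D₁, hD₁, hx₁⟩ := hT₁ hx
    obtain ⟨D₂, hD₂, hx₂⟩ := hT₂ hx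
    exact ⟨_, mem_image2_of_mem hD₁ hD₂, hx₁, hx₂⟩
  · rintro _ ⟨D₁, hD₁, D₂, hD₂, rfl⟩ G hGD hG
    by_contra hbad
    rw [inter_assoc] at hbad
    exact h.not_reducesOn_compl ⟨hT.inter hG, hY, hbad⟩
      ((h𝒟₁ D₁ hD₁).2.mono fun x hx => (hGD hx.2).1) ((h𝒟₂ D₂ hD₂).2.mono fun x hx => (hGD hx.2).2)

/-- Otherwise Wadge's lemma would reduce the complement of `Y ∩ T` to `A`, making it, like `Y`,
σ-reducible to the minimal pair. -/
theorem exists_continuous_preimage_eq {M : Type*} [TopologicalSpace M] [DiscreteTopology M]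
    [Nonempty M] [MeasurableSpace (ℕ → M)] [BorelSpace (ℕ → M)] {A : Set (ℕ → M)}
    (hA : MeasurableSet A) (hAX : SigmaReducesOn univ A P X) {Y : Set Cantor}
    (hY : MeasurableSet Y) (hYX : SigmaReducesOn univ Y P X) {T : Set Cantor} (hT : IsClosed T)
    (hYT : ¬ HasPartition (Y ∩ T)) :
    ∃ f : (ℕ → M) → Cantor, Continuous f ∧ (∀ z, f z ∈ T) ∧ f ⁻¹' Y = A := by
  have hTne : T.Nonempty := by
    by_contra! hempty
    exact hYT (by simpa [hempty] using HasPartition.empty)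
  obtain ⟨ρ, hρ, hρT, hρc⟩ := PiNat.exists_retraction_of_isClosed hT hTne
  obtain ⟨f, hf, hfA⟩ | ⟨g, hg, hgA⟩ := BorelGame.wadge_lemma hA (hρc.measurable hY)
  · exact ⟨ρ ∘ f, hρc.comp hf, fun z => hρT ▸ mem_range_self (f z), hfA⟩
  · refine absurd (h.hasPartition_inter hY hT.isGδ (hYX.mono (subset_univ T))
      (hAX.comp hT.isGδ hg.continuousOn (mapsTo_univ g T) fun x hx => ?_)) hYT
    rw [← mem_preimage, hgA, mem_compl_iff, mem_compl_iff, mem_preimage, hρ x hx]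

end IsMinimalBad

/-! ### Coding points of the Cantor space by sequences -/

/-- The alphabet of the coding sequences: `Sum.inr (k, b)` announces that the coded point takes the
value `b` at `k`, while a padding letter `Sum.inl b` announces nothing. -/
abbrev Letter := Bool ⊕ ℕ × Bool

/-- The letters of `z` announce exactly the values of `x`. -/
def Encodes (z : ℕ → Letter) (x : Cantor) : Prop := ∀ k b, Sum.inr (k, b) ∈ range z ↔ x k = b

open Classical in
/-- The point encoded by `z`; it is meaningful only when `z` encodes some point. -/
noncomputable def decode (z : ℕ → Letter) : Cantor := fun k => decide (Sum.inr (k, true) ∈ range z)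

/-- The sequences encoding a point. -/
def codes : Set (ℕ → Letter) := {z | Encodes z (decode z)}

/-- The sequences eventually equal to the padding letter `Sum.inl true`. -/
def idle : Set (ℕ → Letter) := range fun (w : List Letter) n => w.getD n (Sum.inl true)

/-- The codes of the points of `A`, together with the idle sequences. The latter make membership in
`coded A` depend on how a finite word is padded. -/
def coded (A : Set Cantor) : Set (ℕ → Letter) := idle ∪ codes ∩ decode ⁻¹' A

theorem Encodes.decode_eq {z : ℕ → Letter} {x : Cantor} (h : Encodes z x) : decode z = x := by
  funext k
  classical exact Bool.eq_iff_iff.2 (decide_eq_true_iff.trans (h k true))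

theorem Encodes.mem_codes {z : ℕ → Letter} {x : Cantor} (h : Encodes z x) : z ∈ codes :=
  mem_ofPred.2 (h.decode_eq.symm ▸ h)

theorem isOpen_mem_range (a : Letter) : IsOpen {z : ℕ → Letter | a ∈ range z} := by
  simp only [mem_range, ofPred_exists]
  exact isOpen_iUnion fun n => (isOpen_discrete ({a} : Set Letter)).preimage
    (continuous_apply (A := fun _ => Letter) n)

theorem isGδ_codes : IsGδ codes := by
  have heq : codes = ⋂ k, {z | Sum.inr (k, false) ∈ range z} \ {z | Sum.inr (k, true) ∈ range z} ∪
      {z | Sum.inr (k, true) ∈ range z} \ {z | Sum.inr (k, false) ∈ range z} := by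
    ext z
    simp only [codes, Encodes, decode, Bool.forall_bool, mem_ofPred, decide_eq_false_iff_not,
      decide_eq_true_iff, mem_iInter, mem_union, mem_sdiff]
    grind
  rw [heq]
  have hdiff (a b : Letter) : IsGδ ({z : ℕ → Letter | a ∈ range z} \ {z | b ∈ range z}) :=
    (isOpen_mem_range a).isGδ.inter (isOpen_mem_range b).isClosed_compl.isGδ
  exact .iInter fun k => (hdiff _ _).union (hdiff _ _)

theorem continuousOn_decode : ContinuousOn decode codes := by
  refine continuousOn_pi.2 fun k z hz => ?_
  have hnhds : ∀ᶠ y in 𝓝[codes] z, Sum.inr (k, decode z k) ∈ range y :=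
    ((isOpen_mem_range _).eventually_mem ((hz k _).2 rfl)).filter_mono nhdsWithin_le_nhds
  refine tendsto_const_nhds.congr' ?_
  filter_upwards [hnhds, self_mem_nhdsWithin] with y hy hycode
  exact ((hycode k _).1 hy).symm

theorem finite_range_getD (w : List Letter) (a : Letter) : (range fun n => w.getD n a).Finite := by
  refine (w.finite_toSet.insert a).subset ?_
  rintro _ ⟨n, rfl⟩
  obtain hn | hn := lt_or_ge n w.length
  · have : w.getD n a ∈ w := List.getD_eq_getElem w a hn ▸ List.getElem_mem hn
    exact .inr this
  · exact .inl (List.getD_eq_default _ _ hn)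

theorem notMem_codes_of_finite_range {z : ℕ → Letter} (hz : (range z).Finite) : z ∉ codes := by
  intro hcode
  have hinj : Function.Injective fun k => (Sum.inr (k, decode z k) : Letter) := fun k l hkl =>
    congrArg Prod.fst (Sum.inr_injective hkl)
  exact infinite_of_injective_forall_mem hinj (fun k => (hcode k _).2 rfl) hz

theorem disjoint_idle_codes : Disjoint idle codes := by
  rw [disjoint_left]
  rintro _ ⟨w, rfl⟩
  exact notMem_codes_of_finite_range (finite_range_getD w _)

theorem getD_true_mem_coded (A : Set Cantor) (w : List Letter) :
    (fun n => w.getD n (Sum.inl true)) ∈ coded A :=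
  .inl (mem_range_self w)

theorem getD_false_notMem_coded (A : Set Cantor) (w : List Letter) :
    (fun n => w.getD n (Sum.inl false)) ∉ coded A := by
  rintro (⟨w', hw'⟩ | ⟨hcode, -⟩)
  · have : w'.getD _ _ = w.getD _ _ := congrFun hw' (max w'.length w.length)
    rw [List.getD_eq_default _ _ (le_max_left _ _), List.getD_eq_default _ _ (le_max_right _ _)]
      at this
    simp at this
  · exact notMem_codes_of_finite_range (finite_range_getD w _) hcode

theorem Encodes.mem_coded {z : ℕ → Letter} {x : Cantor} (h : Encodes z x) {A : Set Cantor} :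
    z ∈ coded A ↔ x ∈ A := by
  have hidle : z ∉ idle := disjoint_right.1 disjoint_idle_codes h.mem_codes
  simp [coded, hidle, h.mem_codes, h.decode_eq]

theorem measurableSet_coded [MeasurableSpace (ℕ → Letter)] [BorelSpace (ℕ → Letter)]
    {A : Set Cantor} (hA : MeasurableSet A) : MeasurableSet (coded A) := by
  refine (countable_range _).measurableSet.union ?_
  rw [← Subtype.image_preimage_coe]
  exact (MeasurableEmbedding.subtype_coe isGδ_codes.measurableSet).measurableSet_image.2
    (continuousOn_decode.domRestrict.measurable hA)

theorem IsMinimalBad.sigmaReducesOn_coded {P X A : Set Cantor} (h : IsMinimalBad P X)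
    (hA : SigmaReducesOn univ A P X) : SigmaReducesOn univ (coded A) P X := by
  have hcodes : SigmaReducesOn codes (coded A) P X :=
    hA.comp isGδ_codes continuousOn_decode (mapsTo_univ _ _) fun z hz => Encodes.mem_coded hz
  have hidle : SigmaReducesOn idle (coded A) P X := by
    have : Countable idle := (countable_range _).to_subtype
    rw [← iUnion_of_singleton_coe idle]
    refine .iUnion fun z => (h.reducesOn_of_subset ?_).sigmaReducesOn isClosed_singleton.isGδ
    exact singleton_subset_iff.2 (.inl z.2)
  have hrest : SigmaReducesOn (codesᶜ ∩ idleᶜ) (coded A) P X := by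
    obtain ⟨U, hU, hcU⟩ := isGδ_iff_eq_iInter_nat.1 isGδ_codes
    rw [hcU, compl_iInter, iUnion_inter]
    refine .iUnion fun n => (h.reducesOn_of_disjoint (disjoint_left.2 ?_)).sigmaReducesOn
      ((hU n).isClosed_compl.isGδ.inter (countable_range _).isGδ_compl)
    rintro z ⟨hzU, hzidle⟩ (hz | ⟨hz, -⟩)
    · exact hzidle hz
    · exact hzU (mem_iInter.1 (hcU.subset hz) n)
  refine ((hcodes.union hidle).union hrest).mono fun z _ => ?_
  by_cases z ∈ codes <;> by_cases z ∈ idle <;> simp [*]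

theorem exists_cylinder_forall_ne {M Z : Type*} [TopologicalSpace M] [DiscreteTopology M]
    [TopologicalSpace Z] [T2Space Z] {f : (ℕ → M) → Z} (hf : Continuous f) {x y : ℕ → M}
    (hxy : f x ≠ f y) :
    ∃ m, ∀ z ∈ PiNat.cylinder x m, ∀ z' ∈ PiNat.cylinder y m, f z ≠ f z' := by
  have hcyl {V : Set Z} (hV : IsOpen V) {x : ℕ → M} (hx : f x ∈ V) :
      ∃ n, PiNat.cylinder x n ⊆ f ⁻¹' V := by
    obtain ⟨_, ⟨y, n, rfl⟩, hxn, hn⟩ :=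
      (PiNat.isTopologicalBasis_cylinders fun _ => M).exists_subset_of_mem_open
        (show x ∈ f ⁻¹' V from hx) (hV.preimage hf)
    exact ⟨n, PiNat.mem_cylinder_iff_eq.1 hxn ▸ hn⟩
  obtain ⟨U, V, hU, hV, hxU, hyV, hUV⟩ := t2_separation hxy
  obtain ⟨k, hk⟩ := hcyl hU hxU
  obtain ⟨l, hl⟩ := hcyl hV hyV
  refine ⟨max k l, fun z hz z' hz' heq => hUV.ne_of_mem (hk ?_) (hl ?_) heq⟩
  · exact PiNat.cylinder_anti _ (le_max_left k l) hz
  · exact PiNat.cylinder_anti _ (le_max_right k l) hz'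

section Words

variable (m : List Letter → ℕ)

/-- The word announcing the first `n` values of `x`. Before each announcement `(k, x k)`, the word
`w` obtained so far is padded with `m w` letters `x k`. -/
def codeWord (x : Cantor) : ℕ → List Letter
  | 0 => []
  | n + 1 => codeWord x n ++
      (List.replicate (m (codeWord x n)) (Sum.inl (x n)) ++ [Sum.inr (n, x n)])

/-- The sequence extending the words `codeWord m x n`; the padding value is never reached. -/
def paddedCode (x : Cantor) : ℕ → Letter := fun i => (codeWord m x (i + 1)).getD i (Sum.inl true)

theorem le_length_codeWord (x : Cantor) (n : ℕ) : n ≤ (codeWord m x n).length := by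
  induction n with
  | zero => exact Nat.zero_le _
  | succ n ih =>
    simp only [codeWord, List.length_append, List.length_cons, List.length_nil]
    lia

theorem codeWord_prefix_of_le (x : Cantor) {n n' : ℕ} (h : n ≤ n') :
    codeWord m x n <+: codeWord m x n' := by
  induction n', h using Nat.le_induction with
  | base => exact List.prefix_rfl
  | succ k _ ih => exact ih.trans (List.prefix_append _ _)

theorem codeWord_congr {x y : Cantor} {n : ℕ} (h : ∀ k < n, x k = y k) :
    codeWord m x n = codeWord m y n := by
  induction n with
  | zero => rfl
  | succ n ih =>
    rw [codeWord, codeWord, ih fun k hk => h k (hk.trans n.lt_succ_self), h n n.lt_succ_self]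

theorem mem_codeWord {x : Cantor} {n k : ℕ} {b : Bool} :
    Sum.inr (k, b) ∈ codeWord m x n ↔ k < n ∧ x k = b := by
  induction n with
  | zero => simp [codeWord]
  | succ n ih =>
    simp only [codeWord, List.mem_append, ih, List.mem_replicate, List.mem_singleton]
    grind

theorem paddedCode_eq_getElem {x : Cantor} {n i : ℕ} (hi : i < (codeWord m x n).length) :
    paddedCode m x i = (codeWord m x n)[i] := by
  have hi' : i < (codeWord m x (i + 1)).length := le_length_codeWord m x (i + 1)
  rw [paddedCode, List.getD_eq_getElem _ _ hi']
  obtain h | h := le_total n (i + 1)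
  · exact ((codeWord_prefix_of_le m x h).getElem hi).symm
  · exact (codeWord_prefix_of_le m x h).getElem hi'

theorem paddedCode_mem_cylinder (x : Cantor) (n : ℕ) :
    paddedCode m x ∈ PiNat.cylinder (fun i => (codeWord m x n).getD i (Sum.inl (x n)))
      (m (codeWord m x n)) := by
  intro i hi
  have hlen : i < (codeWord m x (n + 1)).length := by
    simp only [codeWord, List.length_append, List.length_replicate]
    lia
  rw [paddedCode_eq_getElem m hlen]
  simp only [codeWord, List.getElem_append, List.getElem_replicate, List.getD_eq_getElem?_getD]
  grind

theorem encodes_paddedCode (x : Cantor) : Encodes (paddedCode m x) x := by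
  refine fun k b => ⟨?_, ?_⟩
  · rintro ⟨i, hi⟩
    refine ((mem_codeWord m (n := i + 1)).1 ?_).2
    rw [← hi, paddedCode_eq_getElem m (le_length_codeWord m x (i + 1))]
    exact List.getElem_mem _
  · intro hb
    obtain ⟨i, hi, hib⟩ := List.getElem_of_mem ((mem_codeWord m).2 ⟨k.lt_succ_self, hb⟩)
    exact ⟨i, (paddedCode_eq_getElem m hi).trans hib⟩

theorem continuous_paddedCode : Continuous (paddedCode m) := by
  refine BorelGame.continuous_of_agree fun n x y hxy i hi => ?_
  rw [paddedCode, paddedCode, codeWord_congr m fun k hk => hxy k (hk.trans_le hi)]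

end Words

/-- A reduction of `coded A` to `Y` tells apart the two ways of padding a finite word. With paddings
long enough for continuity to see this, it is injective on codes. -/
theorem IsMinimalBad.exists_injective_preimage_eq {P X A Y T : Set Cantor} (h : IsMinimalBad P X)
    (hA : MeasurableSet A) (hAX : SigmaReducesOn univ A P X) (hY : MeasurableSet Y)
    (hYX : SigmaReducesOn univ Y P X) (hT : IsClosed T) (hYT : ¬ HasPartition (Y ∩ T)) :
    ∃ j : Cantor → Cantor, Continuous j ∧ Function.Injective j ∧ (∀ x, j x ∈ T) ∧ j ⁻¹' Y = A := by
  borelize (ℕ → Letter)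
  obtain ⟨f, hf, hfT, hfY⟩ := h.exists_continuous_preimage_eq (measurableSet_coded hA)
    (h.sigmaReducesOn_coded hAX) hY hYX hT hYT
  have hne (w : List Letter) : f (fun n => w.getD n (Sum.inl true)) ≠
      f (fun n => w.getD n (Sum.inl false)) := fun heq => by
    have htrue := getD_true_mem_coded A w
    rw [← hfY, mem_preimage, heq, ← mem_preimage, hfY] at htrue
    exact getD_false_notMem_coded A w htrue
  choose m hm using fun w => exists_cylinder_forall_ne hf (hne w)
  refine ⟨f ∘ paddedCode m, hf.comp (continuous_paddedCode m), fun x y hxy => ?_,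
    fun x => hfT _, ?_⟩
  · by_contra hne
    let n := PiNat.firstDiff x y
    have hword : codeWord m x n = codeWord m y n :=
      codeWord_congr m fun k hk => PiNat.apply_eq_of_lt_firstDiff hk
    have hx := paddedCode_mem_cylinder m x n
    have hy := paddedCode_mem_cylinder m y n
    have hn : x n ≠ y n := PiNat.apply_firstDiff_ne hne
    rw [← hword] at hy
    cases hxn : x n <;> cases hyn : y n <;> rw [hxn] at hx hn <;> rw [hyn] at hy hn
    · exact hn rfl
    · exact hm _ _ hy _ hx hxy.symm
    · exact hm _ _ hx _ hy hxy
    · exact hn rfl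
  · ext x
    rw [preimage_comp, hfY, mem_preimage, (encodes_paddedCode m x).mem_coded]

/-! ### Borel subsets of the Cantor space -/

section BorelCantor

variable {P X Y K : Set Cantor}

theorem exists_isOpen_mem_iff_of_notMem (hK : IsClosed K) (hY : MeasurableSet Y) :
    ∃ (U : Set Cantor) (E : ℕ → Set Cantor), IsOpen U ∧ (∀ n, IsClosedNowhereDenseIn (E n) K) ∧
      ∀ x ∈ K, (∀ n, x ∉ E n) → (x ∈ Y ↔ x ∈ U) := by
  have : CompactSpace K := isCompact_iff_compactSpace.1 hK.isCompact
  obtain ⟨_, hU', hYU⟩ := (measurable_subtype_coe hY : MeasurableSet (Subtype.val ⁻¹' Y : Set K))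
    |>.residualEq_isOpen
  obtain ⟨U, hU, rfl⟩ := isOpen_induced_iff.1 hU'
  obtain ⟨t, htYU, htG, htd⟩ := mem_residual.1 hYU.mem_iff
  obtain ⟨G, hG, rfl⟩ := isGδ_iff_eq_iInter_nat.1 htG
  choose W hW hWG using fun n => isOpen_induced_iff.1 (hG n)
  have hmem {x : Cantor} (hx : x ∈ K) (n : ℕ) : x ∈ W n ↔ ⟨x, hx⟩ ∈ G n := by
    rw [← hWG n, mem_preimage]
  refine ⟨U, fun n => K \ W n, hU, fun n => ⟨hK.sdiff (hW n), sdiff_subset, fun x hx => ?_⟩,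
    fun x hx hxE => ?_⟩
  · refine mem_closure_iff.2 fun V hV hxV => ?_
    obtain ⟨⟨y, hy⟩, hyV, hyG⟩ := htd.inter_open_nonempty (Subtype.val ⁻¹' V)
      (hV.preimage continuous_subtype_val) ⟨⟨x, hx⟩, hxV⟩
    exact ⟨y, hyV, hy, fun h => h.2 ((hmem hy n).2 (mem_iInter.1 hyG n))⟩
  · have hxG : ⟨x, hx⟩ ∈ ⋂ n, G n :=
      mem_iInter.2 fun n => (hmem hx n).1 (by_contra fun h => hxE n ⟨hx, h⟩)
    exact htYU hxG

theorem IsNowherePartitionable.exists_isPresentation (h : IsNowherePartitionable Y)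
    (hY : MeasurableSet Y) (hne : Y.Nonempty) :
    ∃ (O : Set Cantor) (L : ℕ → Set Cantor) (c : Prop), IsOpen O ∧ (Y ∩ O).Nonempty ∧
      IsPresentation (closure (Y ∩ O)) (Y ∩ O) L c := by
  obtain ⟨U, E, hU, hE, hYU⟩ := exists_isOpen_mem_iff_of_notMem isClosed_closure hY
  obtain hUY | hUY := (Y ∩ U).eq_empty_or_nonempty
  · refine ⟨univ, accumulate E, False, isOpen_univ, by rwa [inter_univ], ?_⟩
    rw [inter_univ]
    refine .of_accumulate h.perfect_closure subset_closure hE fun x hx hxE => ?_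
    have hdisj := (disjoint_iff_inter_eq_empty.2 hUY).closure_left hU
    simp [hYU x hx hxE, disjoint_left.1 hdisj hx]
  · have hcl : closure (U ∩ closure Y) = closure (Y ∩ U) := by
      rw [inter_comm Y]
      exact subset_antisymm (closure_minimal hU.inter_closure isClosed_closure)
        (closure_mono (inter_subset_inter_right U subset_closure))
    refine ⟨U, _, True, hU, hUY, .of_accumulate (E := fun n => E n ∩ closure (Y ∩ U) ∪
      closure (Y ∩ U) \ U) (h.inter hU).perfect_closure subset_closure (fun n => ?_) ?_⟩
    · simpa only [hcl] using ((hE n).closure_inter hU).union (.closure_sdiff hU (closure Y))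
    · intro x hx hxE
      have hxU : x ∈ U := by_contra fun h => hxE 0 (.inr ⟨hx, h⟩)
      have hxY : x ∈ Y := (hYU x (closure_mono inter_subset_left hx)
        fun n hn => hxE n (.inl ⟨hn, hx⟩)).2 hxU
      simp [hxU, hxY]

theorem IsPresentation.exists_not_hasPartition {L : ℕ → Set Cantor} {c : Prop}
    (hP : IsPresentation K Y L c) {V : Set Cantor} (hV : IsOpen V) (hYV : ¬ HasPartition (Y ∩ V)) :
    ∃ n, ¬ HasPartition (Y ∩ V ∩ L n) := by
  by_contra! hL
  refine hYV (.of_isClosed_cover (fun n => (hP.nowhereDense n).isClosed) hL ?_)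
  by_cases hc : c
  · have heq : (Y ∩ V) \ ⋃ n, L n = (K ∩ V) \ ⋃ n, L n := by
      ext x
      simp only [mem_sdiff, mem_inter_iff, mem_iUnion, not_exists]
      refine ⟨fun ⟨⟨hxY, hxV⟩, hxL⟩ => ⟨⟨hP.subset hxY, hxV⟩, hxL⟩, fun ⟨⟨hxK, hxV⟩, hxL⟩ => ?_⟩
      exact ⟨⟨(hP.mem_iff hxK hxL).2 hc, hxV⟩, hxL⟩
    rw [heq, sdiff_eq, compl_iUnion]
    exact .of_isGδ ((hP.perfect.closed.isGδ.inter hV.isGδ).inter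
      (.iInter_of_isOpen fun n => (hP.nowhereDense n).isClosed.isOpen_compl))
  · have heq : (Y ∩ V) \ ⋃ n, L n = ∅ := by
      refine eq_empty_of_forall_notMem fun x ⟨⟨hxY, _⟩, hxL⟩ => hc ?_
      simp only [mem_iUnion, not_exists] at hxL
      exact (hP.mem_iff (hP.subset hxY) hxL).1 hxY
    exact heq ▸ .empty

namespace IsMinimalBad

theorem sigmaReducesOn_inter (h : IsMinimalBad P X) {E : Set Cantor} (hE : IsGδ E) (hEP : E ⊆ P) :
    SigmaReducesOn univ (X ∩ E) P X := by
  have hinside : SigmaReducesOn E (X ∩ E) P X :=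
    ReducesOn.sigmaReducesOn ⟨id, continuousOn_id, hEP, fun x hx => and_iff_left hx⟩ hE
  have houtside : SigmaReducesOn Eᶜ (X ∩ E) P X := by
    obtain ⟨U, hU, rfl⟩ := isGδ_iff_eq_iInter_nat.1 hE
    rw [compl_iInter]
    refine .iUnion fun n => (h.reducesOn_of_disjoint ?_).sigmaReducesOn (hU n).isClosed_compl.isGδ
    exact disjoint_left.2 fun x hx hxX => hx (mem_iInter.1 hxX.2 n)
  exact union_compl_self E ▸ hinside.union houtside

theorem embedsEverywhere (h : IsMinimalBad P X) {L L' : ℕ → Set Cantor} {c : Prop}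
    (hY : MeasurableSet Y) (hYX : SigmaReducesOn univ Y P X) (hn : IsNowherePartitionable Y)
    (hP : IsPresentation (closure Y) Y L c) {A : Set Cantor} (hA : MeasurableSet A)
    (hAX : SigmaReducesOn univ A P X) (hL' : ∀ n, IsClosed (L' n)) :
    EmbedsEverywhere L' A (closure Y) Y := by
  refine .of_continuous hL' fun n V hV ⟨x, hxV, hx⟩ => ?_
  obtain ⟨y, hyV, hyY⟩ := mem_closure_iff.1 hx V hV hxV
  obtain ⟨B, hB, hyB, hBV⟩ := compact_exists_isClopen_in_isOpen hV hyV
  obtain ⟨m, hm⟩ := hP.exists_not_hasPartition hB.isOpen (hn B hB.isOpen ⟨y, hyY, hyB⟩)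
  rw [inter_assoc] at hm
  obtain ⟨j, hj, hinj, hjT, hjY⟩ := h.exists_injective_preimage_eq hA hAX hY hYX
    (hB.isClosed.inter (hP.nowhereDense m).isClosed) hm
  exact ⟨j, L m, hj, hinj, fun x => inter_subset_inter_left _ hBV (hjT x), hP.nowhereDense m,
    fun x _ => by rw [← hjY, mem_preimage]⟩

end IsMinimalBad

theorem not_isMinimalBad : ¬ IsMinimalBad P X := by
  intro h
  obtain ⟨C, hC, hne, hn⟩ := exists_isNowherePartitionable h.not_hasPartition
  have hG : IsGδ (P ∩ C) := h.isGδ.inter hC.isGδ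
  rw [inter_assoc] at hne hn
  obtain ⟨O, L, c, hO, hne, hP⟩ :=
    hn.exists_isPresentation (h.measurableSet.inter hG.measurableSet) hne
  have hnO := hn.inter hO
  rw [inter_assoc] at hne hP hnO
  have hGO : IsGδ (P ∩ C ∩ O) := hG.inter hO.isGδ
  have hsub : P ∩ C ∩ O ⊆ P := inter_subset_left.trans inter_subset_left
  refine hnO.not_hasPartition hne (.of_hHomogeneous (of_embedsEverywhere hP subset_rfl ?_))
  intro O' hO' _
  refine h.embedsEverywhere (h.measurableSet.inter hGO.measurableSet)
    (h.sigmaReducesOn_inter hGO hsub) hnO hP ?_ ?_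
    fun n => ((hP.restrict hO').nowhereDense n).isClosed
  all_goals rw [inter_assoc]
  · exact h.measurableSet.inter (hGO.measurableSet.inter hO'.measurableSet)
  · exact h.sigmaReducesOn_inter (hGO.inter hO'.isGδ) (inter_subset_left.trans hsub)

theorem HasPartition.of_measurableSet (hX : MeasurableSet X) : HasPartition X := by
  by_contra hbad
  obtain ⟨P, Y, h⟩ := IsBad.exists_isMinimalBad (P := univ) (X := X)
    ⟨.univ, hX, by rwa [inter_univ]⟩
  exact not_isMinimalBad h

end BorelCantor

/-! ### The irrational numbers -/

theorem isGδ_range_of_isEmbedding {P Q : Type*} [TopologicalSpace P]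
    [IsCompletelyMetrizableSpace P] [TopologicalSpace Q] [T2Space Q]
    [PerfectlyNormalSpace Q] {j : P → Q} (hj : IsEmbedding j) : IsGδ (range j) := by
  let := upgradeIsCompletelyMetrizable P
  let small (ε : ℝ) (V : Set Q) : Prop := ∀ x y, j x ∈ V → j y ∈ V → dist x y < ε
  have hrange : range j =
      closure (range j) ∩ ⋂ n : ℕ, ⋃₀ {V | IsOpen V ∧ small (1 / (n + 1)) V} := by
    refine subset_antisymm ?_ fun z ⟨hz, hzV⟩ => ?_
    · rintro _ ⟨x, rfl⟩
      refine ⟨subset_closure (mem_range_self x), mem_iInter.2 fun n => ?_⟩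
      obtain ⟨V, hV, hball⟩ := hj.isInducing.isOpen_iff.1
        (Metric.isOpen_ball (x := x) (ε := 1 / (n + 1) / 2))
      have hmem (y : P) : j y ∈ V ↔ dist y x < 1 / ((n : ℝ) + 1) / 2 := Set.ext_iff.1 hball y
      refine ⟨V, ⟨hV, fun y y' hy hy' => ?_⟩, (hmem x).2 (by rw [dist_self]; positivity)⟩
      have := dist_triangle_right y y' x
      linarith [(hmem y).1 hy, (hmem y').1 hy']
    · have : (Filter.comap j (𝓝 z)).NeBot := Filter.comap_neBot_iff.2 fun t ht => by
        obtain ⟨_, ht, x, rfl⟩ := mem_closure_iff_nhds.1 hz t ht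
        exact ⟨x, ht⟩
      have hcauchy : Cauchy (Filter.comap j (𝓝 z)) := by
        refine Metric.cauchy_iff.2 ⟨this, fun ε hε => ?_⟩
        obtain ⟨n, hn⟩ := exists_nat_one_div_lt hε
        obtain ⟨V, ⟨hV, hVn⟩, hzV⟩ := mem_iInter.1 hzV n
        exact ⟨j ⁻¹' V, Filter.preimage_mem_comap (hV.mem_nhds hzV),
          fun x hx y hy => (hVn x y hx hy).trans hn⟩
      obtain ⟨x, hx⟩ := CompleteSpace.complete hcauchy
      exact ⟨x, tendsto_nhds_unique ((hj.continuous.tendsto x).mono_left hx) Filter.tendsto_comap⟩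
  rw [hrange]
  exact isClosed_closure.isGδ.inter (.iInter_of_isOpen fun n => isOpen_sUnion fun V hV => hV.1)

theorem HasPartition.of_isEmbedding {P : Type*} [TopologicalSpace P] [PolishSpace P]
    [MeasurableSpace P] [BorelSpace P] {j : P → Cantor} (hj : IsEmbedding j) {X : Set P}
    (hX : MeasurableSet X) : HasPartition X :=
  .of_image hj (.of_measurableSet
    ((hj.measurableEmbedding (isGδ_range_of_isEmbedding hj).measurableSet).measurableSet_image.2
      hX))

open Classical in
/-- The Dedekind cut of an irrational number, as a set of natural numbers coding rationals. -/
noncomputable def irrationalCut (x : {x : ℝ // Irrational x}) : Cantor :=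
  fun n => decide (((Denumerable.eqv ℚ).symm n : ℝ) < x)

theorem irrationalCut_eq_true {x : {x : ℝ // Irrational x}} {n : ℕ} :
    irrationalCut x n = true ↔ ((Denumerable.eqv ℚ).symm n : ℝ) < x := by
  simp [irrationalCut]

theorem irrationalCut_eq_false {x : {x : ℝ // Irrational x}} {n : ℕ} :
    irrationalCut x n = false ↔ x < ((Denumerable.eqv ℚ).symm n : ℝ) := by
  rw [← Bool.not_eq_true, irrationalCut_eq_true, not_lt, le_iff_lt_or_eq,
    or_iff_left (x.2.ne_rat _)]

theorem isEmbedding_irrationalCut : IsEmbedding irrationalCut := by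
  have hcont : Continuous irrationalCut := by
    refine continuous_pi fun n => continuous_discrete_rng.2 (Bool.rec ?_ ?_)
    · simp only [preimage, mem_singleton_iff, irrationalCut_eq_false]
      exact isOpen_lt continuous_subtype_val continuous_const
    · simp only [preimage, mem_singleton_iff, irrationalCut_eq_true]
      exact isOpen_lt continuous_const continuous_subtype_val
  refine (isInducing_iff_nhds.2 fun x => hcont.continuousAt.le_comap.antisymm fun s hs => ?_)
    |>.isEmbedding
  obtain ⟨t, ht, hts⟩ := mem_nhds_subtype _ _ _ |>.1 hs
  obtain ⟨l, u, ⟨hl, hu⟩, hlu⟩ := mem_nhds_iff_exists_Ioo_subset.1 ht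
  obtain ⟨a, hla, hax⟩ := exists_rat_btwn hl
  obtain ⟨m, rfl⟩ := (Denumerable.eqv ℚ).symm.surjective a
  obtain ⟨b, hxb, hbu⟩ := exists_rat_btwn hu
  obtain ⟨n, rfl⟩ := (Denumerable.eqv ℚ).symm.surjective b
  have hev (n : ℕ) : ∀ᶠ z in 𝓝 (irrationalCut x), z n = irrationalCut x n :=
    (continuous_apply n).continuousAt.preimage_mem_nhds
      ((isOpen_discrete {irrationalCut x n}).mem_nhds rfl)
  refine Filter.mem_comap.2 ⟨_, (hev m).and (hev n), ?_⟩
  rintro y ⟨hya, hyb⟩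
  rw [irrationalCut_eq_true.2 hax, irrationalCut_eq_true] at hya
  rw [irrationalCut_eq_false.2 hxb, irrationalCut_eq_false] at hyb
  exact hts (hlu ⟨hla.trans hya, hyb.trans hbu⟩)

instance polishSpace_irrational : PolishSpace {x : ℝ // Irrational x} :=
  polishSpace_of_isGδ IsGδ.setOfPred_irrational

theorem HasPartition.of_subset_irrational {X : Set ℝ} (hX : MeasurableSet X)
    (hirr : ∀ x ∈ X, Irrational x) : HasPartition X := by
  rw [← inter_eq_right.2 (show X ⊆ {x | Irrational x} from hirr), ← Subtype.image_preimage_coe]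
  exact (of_isEmbedding isEmbedding_irrationalCut (measurable_subtype_coe hX)).image
    IsEmbedding.subtypeVal

theorem HasPartition.of_measurableSet_real {X : Set ℝ} (hX : MeasurableSet X) :
    HasPartition X := by
  refine of_isGδ_sUnion
    (𝒟 := insert {x | Irrational x} (range fun q : ℚ => {(q : ℝ)})) ((countable_range _).insert _)
    ?_ (fun x _ => ?_) ?_
  · rintro _ (rfl | ⟨q, rfl⟩)
    · exact IsGδ.setOfPred_irrational
    · exact isClosed_singleton.isGδ
  · by_cases hx : Irrational x
    · exact ⟨_, .inl rfl, hx⟩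
    · obtain ⟨q, rfl⟩ := not_not.1 hx
      exact ⟨_, .inr (mem_range_self q), rfl⟩
  · rintro _ (rfl | ⟨q, rfl⟩) G hGD hG
    · exact of_subset_irrational (hX.inter hG.measurableSet) fun x hx => hGD hx.2
    · exact .of_countable ((countable_singleton (q : ℝ)).mono (inter_subset_right.trans hGD))

end HHomogeneous

/-- Every Borel subset `X` of `ℝ` can be partitioned into countably many
pairwise disjoint subspaces, each a Gδ set in `X` and h-homogeneous in the
subspace topology.  This uses that `ℝ` is the disjoint union of the rationals
and the irrationals, and that the space of irrational numbers is homeomorphic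
to a Gδ subset of the Cantor space. -/
theorem borel_real_partition_hHomogeneous_gdelta :
    (∀ X : Set ℝ, MeasurableSet X →
      ∃ f : ℕ → Set ℝ,
        (∀ i, f i ⊆ X) ∧
        Pairwise (Function.onFun Disjoint f) ∧
        (∀ i, IsGδ (Subtype.val ⁻¹' f i : Set ↥X)) ∧
        (∀ i, HHomogeneous ↥(f i)) ∧
        X = ⋃ i, f i) ∧
    (Set.range ((↑) : ℚ → ℝ) ∪ {x : ℝ | Irrational x} = Set.univ ∧
      Disjoint (Set.range ((↑) : ℚ → ℝ)) {x : ℝ | Irrational x}) ∧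
    (∃ S : Set (ℕ → Bool), IsGδ S ∧
      Nonempty ({x : ℝ // Irrational x} ≃ₜ ↥S)) := by
  refine ⟨fun X hX => ?_, ⟨Set.union_compl_self _, disjoint_compl_right⟩, _,
    HHomogeneous.isGδ_range_of_isEmbedding HHomogeneous.isEmbedding_irrationalCut,
    ⟨HHomogeneous.isEmbedding_irrationalCut.toHomeomorph⟩⟩
  obtain ⟨f, hdisj, hf, rfl⟩ := HHomogeneous.HasPartition.of_measurableSet_real hX
  refine ⟨f, Set.subset_iUnion f, hdisj, fun i => ?_, fun i => (hf i).1, rfl⟩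
  obtain ⟨-, O, hO, heq⟩ := hf i
  rw [heq, Subtype.preimage_coe_self_inter]
  exact hO.preimage continuous_subtype_val
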